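/- arXiv:1305.3782 — 13 statements merged into one kernel-verified Lean document; each statement's English description precedes it below -/
import Mathlib

section
/- Let P ⊆ ℝⁿ × ℝᵈ be a polytope and let F be a facet of P (a face of P of dimension dim P − 1). Then exactly one of the following holds: (i) dim p_x(F) = dim p_x(P), or (ii) dim p_x(F) = dim p_x(P) − 1 and p_x(F) is a face (hence a facet) of the polytope p_x(P). -/
theorem aux_finrank {E : Type*} [AddCommGroup E] [Module ℝ E] [FiniteDimensional ℝ E]
    (V : Submodule ℝ E) (l : E →ₗ[ℝ] ℝ) (v : E) (hv : v ∈ V) (hl : l v ≠ 0) :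
    Module.finrank ℝ (V ⊓ LinearMap.ker l : Submodule ℝ E) + 1 = Module.finrank ℝ V := by
  have h0 : (l.comp V.subtype : Module.Dual ℝ V) ≠ 0 := by
    intro h
    exact hl (by simpa using LinearMap.congr_fun h ⟨v, hv⟩)
  have h1 := Module.Dual.finrank_ker_add_one_of_ne_zero h0
  rw [← h1, LinearMap.ker_comp, ← Submodule.finrank_map_subtype_eq V,
    Submodule.map_comap_subtype]


open Set

/-- The dimension of a polytope: the dimension of the direction of its affine span. -/
noncomputable def polyDim {E : Type*} [AddCommGroup E] [Module ℝ E] (P : Set E) : ℕ :=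
  Module.finrank ℝ (affineSpan ℝ P).direction

/-- Let `P ⊆ ℝⁿ × ℝᵈ` be a polytope and `F` a facet of `P` (a nonempty face of dimension
`dim P - 1`).  Then exactly one of the following holds:
(i) `dim p_x(F) = dim p_x(P)`, or
(ii) `dim p_x(F) = dim p_x(P) - 1` and `p_x(F)` is a face of the polytope `p_x(P)`. -/
theorem facet_projection_dichotomy {n d : ℕ}
    (P F : Set ((Fin n → ℝ) × (Fin d → ℝ)))
    (hP : ∃ s : Set ((Fin n → ℝ) × (Fin d → ℝ)), s.Finite ∧ P = convexHull ℝ s)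
    (hF : IsExposed ℝ P F) (hFne : F.Nonempty)
    (hfacet : polyDim F + 1 = polyDim P) :
    Xor'
      (polyDim (Prod.fst '' F) = polyDim (Prod.fst '' P))
      (polyDim (Prod.fst '' F) + 1 = polyDim (Prod.fst '' P) ∧
        IsExposed ℝ (Prod.fst '' P) (Prod.fst '' F)) := by
  have hdir : ∀ S : Set ((Fin n → ℝ) × (Fin d → ℝ)), polyDim (Prod.fst '' S) =
      Module.finrank ℝ ((vectorSpan ℝ S).map (LinearMap.fst ℝ (Fin n → ℝ) (Fin d → ℝ))) := by
    intro S
    have := AffineMap.vectorSpan_image_eq_submodule_map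
      (LinearMap.fst ℝ (Fin n → ℝ) (Fin d → ℝ)).toAffineMap (s := S)
    rw [polyDim, direction_affineSpan]
    simp only [LinearMap.toAffineMap_linear, LinearMap.coe_toAffineMap, LinearMap.coe_fst] at this
    rw [this]
  obtain ⟨l, hl⟩ := hF hFne
  have hFP : F ⊆ P := by rw [hl]; exact fun x hx => hx.1
  obtain ⟨x0, hx0⟩ := hFne
  have hx0P := hFP hx0
  have hmem : ∀ x ∈ F, ∀ y ∈ P, l y ≤ l x := by
    intro x hx; rw [hl] at hx; exact hx.2
  have hmem' : ∀ x ∈ P, (∀ y ∈ P, l y ≤ l x) → x ∈ F := by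
    intro x hx h; rw [hl]; exact ⟨hx, h⟩
  simp only [hdir]
  rw [polyDim, polyDim, direction_affineSpan, direction_affineSpan] at hfacet
  set V := vectorSpan ℝ P with hV
  set W := vectorSpan ℝ F with hW
  set L : ((Fin n → ℝ) × (Fin d → ℝ)) →ₗ[ℝ] ℝ := l.toLinearMap with hL
  have hLl : ∀ x, L x = l x := fun x => rfl
  set p := LinearMap.fst ℝ (Fin n → ℝ) (Fin d → ℝ) with hp
  have hWV : W ≤ V := vectorSpan_mono ℝ hFP
  have hWL : W ≤ LinearMap.ker L := by
    rw [hW, vectorSpan_def, Submodule.span_le]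
    rintro _ ⟨a, ha, b, hb, rfl⟩
    have h1 := hmem a ha b (hFP hb)
    have h2 := hmem b hb a (hFP ha)
    simp only [SetLike.mem_coe, LinearMap.mem_ker, vsub_eq_sub, map_sub, hLl]
    linarith
  obtain ⟨v, hv, hlv⟩ : ∃ v ∈ V, L v ≠ 0 := by
    by_contra! hc
    have : F = P := by
      refine Subset.antisymm hFP fun x hx => hmem' x hx fun y hy => ?_
      have := hc (y -ᵥ x) (vsub_mem_vectorSpan ℝ hy hx)
      simp only [vsub_eq_sub, map_sub, hLl] at this
      linarith
    rw [hW, hV, this] at hfacet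
    omega
  have hWeq : W = V ⊓ LinearMap.ker L := by
    refine Submodule.eq_of_le_of_finrank_eq (le_inf hWV hWL) ?_
    have := aux_finrank V L v hv hlv
    omega
  by_cases hc : ∃ u ∈ V, p u = 0 ∧ L u ≠ 0
  · obtain ⟨u, hu, hpu, hlu⟩ := hc
    have : W.map p = V.map p := by
      refine le_antisymm (Submodule.map_mono hWV) ?_
      rintro _ ⟨w, hw, rfl⟩
      refine ⟨w - (L w / L u) • u, ?_, by simp [hpu]⟩
      rw [hWeq]
      refine ⟨V.sub_mem hw (V.smul_mem _ hu), ?_⟩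
      simp [hlu]
    left
    rw [this]
    exact ⟨rfl, fun h => by omega⟩
  · push Not at hc
    have hr : L.comp V.subtype ∈ LinearMap.range (p.comp V.subtype).dualMap := by
      rw [LinearMap.range_dualMap_eq_dualAnnihilator_ker, Submodule.mem_dualAnnihilator]
      intro w hw
      exact hc w w.2 hw
    obtain ⟨m, hm⟩ := hr
    have hm' : ∀ w ∈ V, m (p w) = L w := fun w hw => LinearMap.congr_fun hm ⟨w, hw⟩
    have hmap : W.map p = V.map p ⊓ LinearMap.ker m := by
      apply le_antisymm
      · rintro _ ⟨w, hw, rfl⟩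
        refine ⟨⟨w, hWV hw, rfl⟩, ?_⟩
        rw [SetLike.mem_coe, LinearMap.mem_ker, hm' w (hWV hw)]
        exact hWL hw
      · rintro _ ⟨⟨w, hw, rfl⟩, h⟩
        refine ⟨w, ?_, rfl⟩
        rw [hWeq]
        refine ⟨hw, ?_⟩
        rw [SetLike.mem_coe, LinearMap.mem_ker, hm' w hw] at h
        exact h
    have hdim : Module.finrank ℝ (W.map p) + 1 = Module.finrank ℝ (V.map p) := by
      rw [hmap]
      exact aux_finrank _ m (p v) ⟨v, hv, rfl⟩ (by rwa [hm' v hv])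
    have hdiff : ∀ x ∈ P, ∀ y ∈ P, m y.1 - m x.1 = l y - l x := by
      intro x hx y hy
      have := hm' (y -ᵥ x) (vsub_mem_vectorSpan ℝ hy hx)
      simpa [hp, hLl] using this
    right
    refine ⟨⟨hdim, fun _ => ⟨LinearMap.toContinuousLinearMap m, ?_⟩⟩, by omega⟩
    ext z
    constructor
    · rintro ⟨x, hx, rfl⟩
      refine ⟨⟨x, hFP hx, rfl⟩, ?_⟩
      rintro _ ⟨y, hy, rfl⟩
      have h1 := hdiff x (hFP hx) y hy
      have h2 := hmem x hx y hy
      change m y.1 ≤ m x.1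
      linarith
    · rintro ⟨⟨x, hx, rfl⟩, h⟩
      refine ⟨x, hmem' x hx fun y hy => ?_, rfl⟩
      have h1 := hdiff x hx y hy
      have h2 : m y.1 ≤ m x.1 := h y.1 ⟨y, hy, rfl⟩
      linarith
end

section
/- Let P ⊆ ℝⁿ × ℝᵈ be a polytope and p_x : ℝⁿ × ℝᵈ → ℝⁿ the projection onto the first n coordinates. The pair (P, p_x) has the PF-property if and only if for every subset S of the vertex set of p_x(P) the equality conv{v ∈ vert(P) : p_x(v) ∈ S} = {v ∈ P : p_x(v) ∈ conv(S)} holds, i.e. p_x⁻¹(conv(S)) ∩ P = conv(p_x⁻¹(S) ∩ vert(P)). -/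
open Set

section Helpers
variable {E : Type*} [NormedAddCommGroup E] [NormedSpace ℝ E]

lemma exists_relint_point [FiniteDimensional ℝ E] {G : Set E} (hG : Convex ℝ G)
    (hne : G.Nonempty) :
    ∃ g ∈ G, ∀ x ∈ affineSpan ℝ G, ∃ ε : ℝ, 0 < ε ∧ g + ε • (g - x) ∈ G := by
  obtain ⟨g, hg⟩ := hne.intrinsicInterior hG
  refine ⟨g, intrinsicInterior_subset hg, fun x hx => ?_⟩
  obtain ⟨y, hy, rfl⟩ := mem_intrinsicInterior.1 hg
  have hmem : ∀ t : ℝ, (y : E) + t • ((y : E) - x) ∈ affineSpan ℝ G := by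
    intro t
    have := AffineMap.lineMap_mem (-t) y.2 hx
    rw [AffineMap.lineMap_apply_module'] at this
    convert this using 1
    module
  let φ : ℝ → affineSpan ℝ G := fun t => ⟨(y : E) + t • ((y : E) - x), hmem t⟩
  have hφ : Continuous φ := by
    apply Continuous.subtype_mk
    fun_prop
  have h0 : φ 0 = y := by
    ext
    simp [φ]
  have hev : ∀ᶠ t in nhds (0 : ℝ), φ t ∈ interior ((↑) ⁻¹' G : Set (affineSpan ℝ G)) := by
    apply hφ.continuousAt.eventually_mem
    rw [h0]
    exact isOpen_interior.mem_nhds hy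
  obtain ⟨δ, hδ, hball⟩ := Metric.eventually_nhds_iff.1 hev
  refine ⟨δ / 2, by positivity, ?_⟩
  have := hball (y := δ / 2) (by
    rw [Real.dist_eq, sub_zero, abs_of_pos (by positivity)]; linarith)
  exact (interior_subset this : φ (δ/2) ∈ ((↑) ⁻¹' G : Set (affineSpan ℝ G)))

/-- splitting a hull along an extreme set -/
lemma hull_inter_extreme {Q G T : Set E} (hQ : Convex ℝ Q) (hG : IsExtreme ℝ Q G)
    (hT : T ⊆ Q) {x : E} (hx : x ∈ convexHull ℝ T) (hxG : x ∈ G) :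
    x ∈ convexHull ℝ (T ∩ G) := by
  have hd : convexHull ℝ (T \ G) ⊆ Q \ G :=
    convexHull_min (fun y hy => ⟨hT hy.1, hy.2⟩) (hG.convex_sdiff hQ)
  rw [← inter_union_sdiff T G] at hx
  rcases (T ∩ G).eq_empty_or_nonempty with h1 | h1
  · rw [h1, empty_union] at hx
    exact absurd hxG (hd hx).2
  rcases (T \ G).eq_empty_or_nonempty with h2 | h2
  · rwa [h2, union_empty] at hx
  rw [convexHull_union h1 h2] at hx
  obtain ⟨a, ha, b, hb, hab⟩ := mem_convexJoin.1 hx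
  have haQ : a ∈ Q := convexHull_min (fun y hy => hT hy.1) hQ ha
  by_cases hxa : a = x
  · exact hxa ▸ ha
  by_cases hxb : b = x
  · exact absurd hxG (hxb ▸ (hd hb).2)
  have ho := mem_openSegment_of_ne_left_right hxa hxb hab
  exact absurd (hG.right_mem_of_mem_openSegment haQ (hd hb).1 hxG ho) (hd hb).2

/-- convex extreme subsets of polytopes are exposed -/
lemma exposed_of_extreme [FiniteDimensional ℝ E] {V G : Set E} (hV : V.Finite)
    (hG : IsExtreme ℝ (convexHull ℝ V) G) (hGc : Convex ℝ G) :
    IsExposed ℝ (convexHull ℝ V) G := by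
  intro hne
  have hQ := convex_convexHull ℝ V
  obtain ⟨g, hgG, hg⟩ := exists_relint_point hGc hne
  have hd : convexHull ℝ (V \ G) ⊆ convexHull ℝ V \ G :=
    convexHull_min (fun y hy => ⟨subset_convexHull ℝ V hy.1, hy.2⟩) (hG.convex_sdiff hQ)
  have hdisj : Disjoint (convexHull ℝ (V \ G)) (affineSpan ℝ G : Set E) := by
    rw [Set.disjoint_left]
    intro x hx hxa
    obtain ⟨ε, hε, hmem⟩ := hg x hxa
    refine (hd hx).2 (hG.left_mem_of_mem_openSegment (hd hx).1 (hG.subset hmem) hgG ?_)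
    refine ⟨ε / (1 + ε), 1 / (1 + ε), by positivity, by positivity, by field_simp; ring, ?_⟩
    have h1 : (1 + ε) ≠ 0 := by positivity
    match_scalars <;> field_simp <;> ring
  have hclosed : IsClosed (affineSpan ℝ G : Set E) :=
    AffineSubspace.closed_of_finiteDimensional _
  obtain ⟨l, u, v, hu, huv, hv⟩ := geometric_hahn_banach_compact_closed
    (convex_convexHull ℝ (V \ G)) ((hV.sdiff).isCompact_convexHull ℝ)
    (AffineSubspace.convex _) hclosed hdisj
  have hconst : ∀ x ∈ G, l x = l g := by
    intro x hx
    by_contra hne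
    have hsub : l x - l g ≠ 0 := sub_ne_zero.2 hne
    have := AffineMap.lineMap_mem ((v - l g) / (l x - l g))
      (subset_affineSpan ℝ G hgG) (subset_affineSpan ℝ G hx)
    have h2 := hv _ this
    rw [AffineMap.lineMap_apply_module', map_add, map_smul, map_sub, smul_eq_mul,
      div_mul_cancel₀ _ hsub] at h2
    linarith
  have hlt : ∀ x ∈ convexHull ℝ (V \ G), l x < l g := fun x hx =>
    (hu x hx).trans (huv.trans (hv g (subset_affineSpan ℝ G hgG)))
  have hle : ∀ x ∈ convexHull ℝ V, l x ≤ l g := by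
    intro x hx
    have : convexHull ℝ V ⊆ {x | l x ≤ l g} := by
      refine convexHull_min (fun y hy => ?_) (convex_halfSpace_le l.toLinearMap.isLinear _)
      by_cases hyG : y ∈ G
      · exact (hconst y hyG).le
      · exact (hlt y (subset_convexHull ℝ _ ⟨hy, hyG⟩)).le
    exact this hx
  refine ⟨l, Subset.antisymm (fun x hx => ⟨hG.subset hx, fun y hy => ?_⟩) ?_⟩
  · rw [hconst x hx]; exact hle y hy
  · rintro x ⟨hx, hmax⟩
    have hxg : l x = l g := le_antisymm (hle x hx) (hmax g (hG.subset hgG))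
    have hin : convexHull ℝ (V ∩ G) ⊆ G := convexHull_min inter_subset_right hGc
    rw [← inter_union_sdiff V G] at hx
    rcases (V ∩ G).eq_empty_or_nonempty with h1 | h1
    · rw [h1, empty_union] at hx
      exact absurd hxg (hlt x hx).ne
    rcases (V \ G).eq_empty_or_nonempty with h2 | h2
    · rw [h2, union_empty] at hx
      exact hin hx
    rw [convexHull_union h1 h2] at hx
    obtain ⟨a, ha, b, hb, s, t, hs, ht, hst, rfl⟩ := mem_convexJoin.1 hx
    have e1 := hconst a (hin ha)
    have e2 := hlt b hb
    have ht0 : t = 0 := by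
      by_contra h
      have : 0 < t := lt_of_le_of_ne ht (Ne.symm h)
      simp only [map_add, map_smul, smul_eq_mul, e1] at hxg
      obtain rfl : s = 1 - t := by linarith
      nlinarith
    obtain rfl : s = 1 := by linarith
    simpa [ht0] using hin ha

/-- the smallest face containing `w` -/
lemma minimal_face {P : Set E} (hP : Convex ℝ P) {w : E} (hw : w ∈ P) :
    ∃ F : Set E, IsExtreme ℝ P F ∧ Convex ℝ F ∧ w ∈ F ∧
      ∀ x ∈ F, ∃ ε : ℝ, 0 < ε ∧ w + ε • (w - x) ∈ P := by
  have mono : ∀ x : E, ∀ ε δ : ℝ, 0 < ε → 0 < δ → δ ≤ ε → w + ε • (w - x) ∈ P →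
      w + δ • (w - x) ∈ P := by
    intro x ε δ hε hδ hδε h
    have := hP hw h (a := 1 - δ / ε) (b := δ / ε)
      (by rw [sub_nonneg, div_le_one hε]; exact hδε) (by positivity) (by ring)
    convert this using 1
    match_scalars <;> field_simp <;> ring
  refine ⟨{x ∈ P | ∃ ε : ℝ, 0 < ε ∧ w + ε • (w - x) ∈ P}, ⟨fun x hx => hx.1, ?_⟩, ?_,
    ⟨hw, 1, one_pos, by simpa using hw⟩, fun x hx => hx.2⟩
  · rintro a ha b hb x ⟨hx, ε, hε, h⟩ ⟨α, β, hα, hβ, hαβ, rfl⟩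
    refine ⟨ha, ε * α / (1 + ε * β), by positivity, ?_⟩
    have := hP h hb (a := 1 / (1 + ε * β)) (b := ε * β / (1 + ε * β))
      (by positivity) (by positivity) (by field_simp)
    convert this using 1
    obtain rfl : α = 1 - β := by linarith
    have : 1 + ε * β ≠ 0 := by positivity
    match_scalars <;> field_simp <;> ring
  · rintro x ⟨hx, ε, hε, h⟩ y ⟨hy, δ, hδ, h'⟩ a b ha hb hab
    refine ⟨hP hx hy ha hb hab, min ε δ, lt_min hε hδ, ?_⟩
    have h1 := mono x ε _ hε (lt_min hε hδ) (min_le_left _ _) h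
    have h2 := mono y δ _ hδ (lt_min hε hδ) (min_le_right _ _) h'
    have := hP h1 h2 ha hb hab
    convert this using 1
    obtain rfl : a = 1 - b := by linarith
    module

/-- weights: if every representation of `z` can be refined to one supported on `G`, every
representation is supported on `G`. -/
lemma support_subset {W G : Set E} {z : E}
    (hz : ∀ T : Finset E, (T : Set E) ⊆ W → z ∈ convexHull ℝ (T : Set E) →
      z ∈ convexHull ℝ ((T : Set E) ∩ G)) :
    ∀ N : ℕ, ∀ T : Finset E, T.card = N → (T : Set E) ⊆ W → ∀ c : E → ℝ,
      (∀ s ∈ T, 0 < c s) → ∑ s ∈ T, c s = 1 → ∑ s ∈ T, c s • s = z → ∀ s ∈ T, s ∈ G := by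
  classical
  intro N
  induction N using Nat.strong_induction_on with
  | _ N ih =>
  intro T hN hTW c hc hc1 hcz s₀ hs₀
  by_contra hs₀G
  have hzT : z ∈ convexHull ℝ (T : Set E) :=
    Finset.mem_convexHull'.2 ⟨c, fun y hy => (hc y hy).le, hc1, hcz⟩
  have h1 := hz T hTW hzT
  have hcoe : (T : Set E) ∩ G = ((T.filter (· ∈ G) : Finset E) : Set E) := by
    ext; simp
  rw [hcoe] at h1
  obtain ⟨m', hm0', hm1', hmz'⟩ := Finset.mem_convexHull'.1 h1
  let m : E → ℝ := fun s => if s ∈ G then m' s else 0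
  have hm0 : ∀ s ∈ T, 0 ≤ m s := by
    intro s hs
    by_cases h : s ∈ G
    · simpa [m, h] using hm0' s (by simp [hs, h])
    · simp [m, h]
  have hm1 : ∑ s ∈ T, m s = 1 := by
    rw [← hm1', Finset.sum_filter]
  have hmz : ∑ s ∈ T, m s • s = z := by
    rw [← hmz', Finset.sum_filter]
    refine Finset.sum_congr rfl fun s _ => ?_
    by_cases h : s ∈ G <;> simp [m, h]
  have hms₀ : m s₀ = 0 := by simp [m, hs₀G]
  have hne : (T.filter (fun s => 0 < m s)).Nonempty := by
    by_contra h
    rw [Finset.not_nonempty_iff_eq_empty, Finset.filter_eq_empty_iff] at h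
    have : ∑ s ∈ T, m s ≤ 0 := Finset.sum_nonpos fun s hs => not_lt.1 (h hs)
    linarith
  obtain ⟨s₁, hs₁, hmin⟩ := Finset.exists_min_image _ (fun s => c s / m s) hne
  rw [Finset.mem_filter] at hs₁
  set t := c s₁ / m s₁ with ht
  have ht0 : 0 < t := div_pos (hc _ hs₁.1) hs₁.2
  have hle : ∀ s ∈ T, t * m s ≤ c s := by
    intro s hs
    rcases (hm0 s hs).eq_or_lt with h | h
    · rw [← h, mul_zero]; exact (hc s hs).le
    · exact (le_div_iff₀ h).1 (hmin s (by simp [hs, h]))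
  have ht1 : t < 1 := by
    have : ∑ s ∈ T, t * m s < ∑ s ∈ T, c s :=
      Finset.sum_lt_sum hle ⟨s₀, hs₀, by rw [hms₀, mul_zero]; exact hc _ hs₀⟩
    rw [← Finset.mul_sum, hm1, hc1] at this
    linarith
  have ht1' : 0 < 1 - t := by linarith
  let c' : E → ℝ := fun s => (1 - t)⁻¹ * (c s - t * m s)
  have hc'0 : ∀ s ∈ T, 0 ≤ c' s := fun s hs =>
    mul_nonneg (inv_nonneg.2 ht1'.le) (sub_nonneg.2 (hle s hs))
  have hc's₁ : c' s₁ = 0 := by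
    simp only [c']
    rw [ht, div_mul_cancel₀ _ hs₁.2.ne']; simp
  have hc's₀ : 0 < c' s₀ := by
    simp only [c', hms₀, mul_zero, sub_zero]
    exact mul_pos (inv_pos.2 ht1') (hc _ hs₀)
  have hc'1 : ∑ s ∈ T, c' s = 1 := by
    simp only [c']
    rw [← Finset.mul_sum, Finset.sum_sub_distrib, ← Finset.mul_sum, hm1, hc1, mul_one,
      inv_mul_cancel₀ ht1'.ne']
  have hc'z : ∑ s ∈ T, c' s • s = z := by
    simp only [c', mul_smul, sub_smul]
    rw [← Finset.smul_sum, Finset.sum_sub_distrib, ← Finset.smul_sum, hmz, hcz]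
    rw [show z - t • z = (1 - t) • z by module, smul_smul, inv_mul_cancel₀ ht1'.ne', one_smul]
  refine hs₀G (ih (T.filter (fun s => 0 < c' s)).card ?_ _ rfl ?_ c' ?_ ?_ ?_ s₀ ?_)
  · rw [← hN]
    refine Finset.card_lt_card (Finset.filter_ssubset.2 ⟨s₁, hs₁.1, ?_⟩)
    rw [hc's₁]; exact lt_irrefl _
  · exact fun s hs => hTW (Finset.mem_of_mem_filter s hs)
  · exact fun s hs => (Finset.mem_filter.1 hs).2
  · rw [← hc'1]
    refine Finset.sum_filter_of_ne fun s hs h => lt_of_le_of_ne (hc'0 s hs) h.symm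
  · rw [← hc'z]
    refine Finset.sum_filter_of_ne fun s hs h => lt_of_le_of_ne (hc'0 s hs) ?_
    rintro h'
    rw [← h', zero_smul] at h
    exact h rfl
  · simp [hs₀, hc's₀]

lemma polytope_eq_hull_extremePoints {V : Set E} (hV : V.Finite) :
    convexHull ℝ ((convexHull ℝ V).extremePoints ℝ) = convexHull ℝ V := by
  have h1 := closure_convexHull_extremePoints (hV.isCompact_convexHull ℝ) (convex_convexHull ℝ V)
  have hfin : ((convexHull ℝ V).extremePoints ℝ).Finite :=
    hV.subset extremePoints_convexHull_subset
  rwa [(hfin.isCompact_convexHull ℝ).isClosed.closure_eq] at h1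

lemma extreme_of_reps {Q W G : Set E} (hW : W.Finite) (hQ : Q = convexHull ℝ W)
    (hGQ : G ⊆ Q) (hGc : Convex ℝ G)
    (hz : ∀ z ∈ G, ∀ T : Set E, T ⊆ W → z ∈ convexHull ℝ T →
      z ∈ convexHull ℝ (T ∩ G)) : IsExtreme ℝ Q G := by
  classical
  refine ⟨hGQ, ?_⟩
  rintro x hx y hy z hzG ⟨α, β, hα, hβ, hαβ, hxy⟩
  lift W to Finset E using hW
  rw [hQ] at hx hy
  obtain ⟨a, ha0, ha1, hax⟩ := Finset.mem_convexHull'.1 hx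
  obtain ⟨b, hb0, hb1, hby⟩ := Finset.mem_convexHull'.1 hy
  let c : E → ℝ := fun s => α * a s + β * b s
  have hc0 : ∀ s ∈ W, 0 ≤ c s := fun s hs =>
    add_nonneg (mul_nonneg hα.le (ha0 s hs)) (mul_nonneg hβ.le (hb0 s hs))
  have hc1 : ∑ s ∈ W, c s = 1 := by
    simp only [c]
    rw [Finset.sum_add_distrib, ← Finset.mul_sum, ← Finset.mul_sum, ha1, hb1]
    linarith
  have hcz : ∑ s ∈ W, c s • s = z := by
    simp only [c, add_smul, mul_smul]
    rw [Finset.sum_add_distrib, ← Finset.smul_sum, ← Finset.smul_sum, hax, hby, hxy]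
  have key := support_subset (W := (W : Set E)) (G := G) (z := z)
    (fun T hT h => hz z hzG T hT h) _ (W.filter (fun s => 0 < c s)) rfl
    (fun s hs => Finset.mem_of_mem_filter s hs) c (fun s hs => (Finset.mem_filter.1 hs).2)
    (by
      rw [← hc1]
      exact Finset.sum_filter_of_ne fun s hs h => lt_of_le_of_ne (hc0 s hs) h.symm)
    (by
      rw [← hcz]
      refine Finset.sum_filter_of_ne fun s hs h => lt_of_le_of_ne (hc0 s hs) ?_
      rintro h'
      rw [← h', zero_smul] at h
      exact h rfl)
  have hpos : ∀ s ∈ W, a s ≠ 0 → s ∈ G := by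
    intro s hs h
    have h0 : 0 < a s := lt_of_le_of_ne (ha0 s hs) h.symm
    refine key s (Finset.mem_filter.2 ⟨hs, ?_⟩)
    exact add_pos_of_pos_of_nonneg (mul_pos hα h0) (mul_nonneg hβ.le (hb0 s hs))
  rw [← hax, ← Finset.sum_filter_of_ne (p := fun s => a s ≠ 0)
    (fun s _ h h' => h (by rw [h', zero_smul]))]
  refine hGc.sum_mem (fun s hs => ha0 s (Finset.mem_of_mem_filter s hs)) ?_ ?_
  · rw [Finset.sum_filter_of_ne (fun s _ h => h)]
    exact ha1
  · intro s hs
    rw [Finset.mem_filter] at hs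
    exact hpos s hs.1 hs.2

end Helpers

theorem pf_property_iff_vertex_subsets {n d : ℕ}
    (P : Set ((Fin n → ℝ) × (Fin d → ℝ)))
    (hP : ∃ s : Set ((Fin n → ℝ) × (Fin d → ℝ)), s.Finite ∧ P = convexHull ℝ s) :
    (∀ F : Set ((Fin n → ℝ) × (Fin d → ℝ)),
        IsExposed ℝ P F → IsExposed ℝ (Prod.fst '' P) (Prod.fst '' F)) ↔
      (∀ S : Set (Fin n → ℝ), S ⊆ Set.extremePoints ℝ (Prod.fst '' P) →
        convexHull ℝ {v ∈ Set.extremePoints ℝ P | v.1 ∈ S} =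
          {v ∈ P | v.1 ∈ convexHull ℝ S}) := by
  obtain ⟨V, hV, rfl⟩ := hP
  set P := convexHull ℝ V with hPdef
  have hPc : Convex ℝ P := convex_convexHull ℝ V
  have himg : ∀ A : Set ((Fin n → ℝ) × (Fin d → ℝ)),
      Prod.fst '' (convexHull ℝ A) = convexHull ℝ (Prod.fst '' A) := fun A =>
    (LinearMap.fst ℝ (Fin n → ℝ) (Fin d → ℝ)).image_convexHull A
  have himgc : ∀ A : Set ((Fin n → ℝ) × (Fin d → ℝ)), Convex ℝ A →
      Convex ℝ (Prod.fst '' A) := fun A hA =>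
    hA.linear_image (LinearMap.fst ℝ (Fin n → ℝ) (Fin d → ℝ))
  have hQ : Prod.fst '' P = convexHull ℝ (Prod.fst '' V) := himg V
  have hQfin : (Prod.fst '' V).Finite := hV.image _
  have hQc : Convex ℝ (Prod.fst '' P) := himgc P hPc
  have hextfin : (P.extremePoints ℝ).Finite := hV.subset extremePoints_convexHull_subset
  constructor
  · intro hPF S hS
    have hSfin : S.Finite := by
      rw [hQ] at hS
      exact hQfin.subset (hS.trans extremePoints_convexHull_subset)
    have hRc : Convex ℝ {v ∈ P | v.1 ∈ convexHull ℝ S} :=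
      hPc.inter ((convex_convexHull ℝ S).linear_preimage
        (LinearMap.fst ℝ (Fin n → ℝ) (Fin d → ℝ)))
    have hRcomp : IsCompact {v ∈ P | v.1 ∈ convexHull ℝ S} :=
      (hV.isCompact_convexHull ℝ).inter_right
        ((hSfin.isCompact_convexHull ℝ).isClosed.preimage continuous_fst)
    apply Subset.antisymm
    · exact convexHull_min (fun v hv => ⟨hv.1.1, subset_convexHull ℝ S hv.2⟩) hRc
    have hCclosed : IsClosed (convexHull ℝ {v ∈ P.extremePoints ℝ | v.1 ∈ S}) :=
      ((hextfin.subset (fun v hv => hv.1)).isCompact_convexHull ℝ).isClosed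
    rw [← closure_convexHull_extremePoints hRcomp hRc]
    refine closure_minimal (convexHull_min ?_ (convex_convexHull ℝ _)) hCclosed
    intro w hw
    obtain ⟨⟨hwP, hwS⟩, hwext⟩ := hw
    obtain ⟨F, hFext, hFc, hwF, hFε⟩ := minimal_face hPc hwP
    have hGext : IsExtreme ℝ (Prod.fst '' P) (Prod.fst '' F) :=
      (hPF F (exposed_of_extreme hV hFext hFc)).isExtreme
    have hinj : ∀ x ∈ F, ∀ y ∈ F, x.1 = y.1 → x = y := by
      have hmv : ∀ x ∈ F, ∀ y ∈ F, x.1 = y.1 → ∃ δ : ℝ, 0 < δ ∧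
          w + δ • (y - x) ∈ {v ∈ P | v.1 ∈ convexHull ℝ S} := by
        intro x hx y hy hxy
        obtain ⟨ε, hε, h⟩ := hFε x hx
        refine ⟨ε / (1 + ε), by positivity, ?_, ?_⟩
        · have := hPc h (hFext.subset hy) (a := 1 / (1 + ε)) (b := ε / (1 + ε))
            (by positivity) (by positivity) (by field_simp)
          convert this using 1
          have : 1 + ε ≠ 0 := by positivity
          match_scalars <;> field_simp <;> ring
        · simpa [hxy] using hwS
      intro x hx y hy hxy
      obtain ⟨δ, hδ, h1⟩ := hmv x hx y hy hxy
      obtain ⟨η, hη, h2⟩ := hmv y hy x hx hxy.symm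
      have := hwext h1 h2 ⟨η / (δ + η), δ / (δ + η), by positivity, by positivity,
        by field_simp; ring, by
          have : δ + η ≠ 0 := by positivity
          match_scalars <;> field_simp <;> ring⟩
      have h3 : δ • (y - x) = 0 := by simpa using this
      rcases smul_eq_zero.1 h3 with h | h
      · exact absurd h hδ.ne'
      · exact (sub_eq_zero.1 h).symm
    have hw1 : w.1 ∈ convexHull ℝ (S ∩ Prod.fst '' F) :=
      hull_inter_extreme hQc hGext (fun s hs => (hS hs).1) hwS ⟨w, hwF, rfl⟩
    have hsub : S ∩ Prod.fst '' F ⊆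
        Prod.fst '' ({v ∈ P.extremePoints ℝ | v.1 ∈ S} ∩ F) := by
      rintro s ⟨hsS, u, huF, rfl⟩
      refine ⟨u, ⟨⟨⟨hFext.subset huF, ?_⟩, hsS⟩, huF⟩, rfl⟩
      intro a ha b hb hab
      have haF := hFext.left_mem_of_mem_openSegment ha hb huF hab
      refine hinj a haF u huF ?_
      refine (hS hsS).2 ⟨a, ha, rfl⟩ ⟨b, hb, rfl⟩ ?_
      obtain ⟨α, β, hα, hβ, hαβ, h⟩ := hab
      exact ⟨α, β, hα, hβ, hαβ, by rw [← h]; rfl⟩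
    have hw2 := convexHull_mono (𝕜 := ℝ) hsub hw1
    rw [← himg] at hw2
    obtain ⟨u, hu, huw⟩ := hw2
    have huF : u ∈ F := convexHull_min inter_subset_right hFc hu
    have : u = w := hinj u huF w hwF huw
    rw [← this]
    exact convexHull_mono inter_subset_left hu
  · intro h F hF
    have hFext := hF.isExtreme
    have hFc : Convex ℝ F := hF.convex hPc
    have hW : ((Prod.fst '' P).extremePoints ℝ).Finite := by
      rw [hQ]
      exact hQfin.subset extremePoints_convexHull_subset
    have hQW : Prod.fst '' P = convexHull ℝ ((Prod.fst '' P).extremePoints ℝ) := by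
      rw [hQ]
      exact (polytope_eq_hull_extremePoints hQfin).symm
    have hext : IsExtreme ℝ (Prod.fst '' P) (Prod.fst '' F) := by
      refine extreme_of_reps hW hQW (image_mono hFext.subset) (himgc F hFc) ?_
      rintro z ⟨f, hf, rfl⟩ T hT hfT
      have h1 : f ∈ convexHull ℝ {v ∈ P.extremePoints ℝ | v.1 ∈ T} := by
        rw [h T hT]
        exact ⟨hFext.subset hf, hfT⟩
      have h2 := hull_inter_extreme hPc hFext (fun v hv => hv.1.1) h1 hf
      have h3 := mem_image_of_mem Prod.fst h2
      rw [himg] at h3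
      refine convexHull_mono ?_ h3
      rintro _ ⟨v, hv, rfl⟩
      exact ⟨hv.1.2, v, hv.2, rfl⟩
    rw [hQ] at hext ⊢
    exact exposed_of_extreme hQfin hext (himgc F hFc)
end

section
/- Let P ⊆ ℝⁿ × ℝᵈ be a polytope such that the pair (P, p_x) has the PF-property. Then for every subset S of the vertex set of p_x(P), the pair (P ∩ p_x⁻¹(conv(S)), p_x) also has the PF-property. -/
open Set

/-- A supporting functional at the origin of a convex set `C ⊆ E × ℝ` with no vertical part. -/
lemma pf_aux_support {E : Type*} [AddCommGroup E] [Module ℝ E] (C : Set (E × ℝ))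
    (hC : Convex ℝ C) (h0 : (0 : E × ℝ) ∈ C) (hv : ∀ r : ℝ, ((0 : E), r) ∈ C → r ≤ 0)
    (hneg : ∀ c ∈ C, ∃ ε : ℝ, 0 < ε ∧ ∃ c' ∈ C, c'.1 = -(ε • c.1)) :
    ∃ α : E →ₗ[ℝ] ℝ, ∀ c ∈ C, c.2 ≤ α c.1 := by
  classical
  let V : Submodule ℝ E := Submodule.span ℝ (Prod.fst '' C)
  have comb : ∀ t u : ℝ, 0 < t → 0 < u → ∀ c ∈ C, ∀ e ∈ C, ∃ g ∈ C,
      (t + u) • g = t • c + u • e := by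
    intro t u ht hu c hc e he
    refine ⟨(t / (t + u)) • c + (u / (t + u)) • e,
      hC hc he (by positivity) (by positivity) (by field_simp), ?_⟩
    have : t + u ≠ 0 := by positivity
    rw [smul_add, smul_smul, smul_smul, mul_div_cancel₀ _ this, mul_div_cancel₀ _ this]
  have hcone : ∀ v ∈ V, ∃ t : ℝ, 0 < t ∧ ∃ c ∈ C, v = t • c.1 := by
    intro v hvV
    induction hvV using Submodule.span_induction with
    | mem x hx =>
      obtain ⟨c, hc, rfl⟩ := hx
      exact ⟨1, one_pos, c, hc, by simp⟩
    | zero => exact ⟨1, one_pos, 0, h0, by simp⟩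
    | add x y _ _ hx hy =>
      obtain ⟨t, ht, c, hc, rfl⟩ := hx
      obtain ⟨u, hu, e, he, rfl⟩ := hy
      obtain ⟨g, hg, h⟩ := comb t u ht hu c hc e he
      exact ⟨t + u, by positivity, g, hg, by simpa using (congrArg Prod.fst h).symm⟩
    | smul a x _ hx =>
      obtain ⟨t, ht, c, hc, rfl⟩ := hx
      rcases lt_trichotomy a 0 with ha | ha | ha
      · obtain ⟨ε, hε, c', hc', h⟩ := hneg c hc
        refine ⟨-a * t / ε, by have := neg_pos.2 ha; positivity, c', hc', ?_⟩
        rw [h, smul_neg, smul_smul, smul_smul, ← neg_smul]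
        congr 1
        field_simp
      · exact ⟨1, one_pos, 0, h0, by simp [ha]⟩
      · exact ⟨a * t, by positivity, c, hc, by rw [smul_smul]⟩
  let s : ConvexCone ℝ (V × ℝ) :=
    { carrier := {p | ∃ t : ℝ, 0 < t ∧ ∃ c ∈ C, (p.1 : E) = t • c.1 ∧ p.2 ≤ t * c.2}
      smul_mem' := by
        rintro a ha p ⟨t, ht, c, hc, h1, h2⟩
        refine ⟨a * t, by positivity, c, hc, by simp [h1, smul_smul], ?_⟩
        have := mul_le_mul_of_nonneg_left h2 ha.le
        simpa [mul_assoc] using this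
      add_mem' := by
        rintro p ⟨t, ht, c, hc, h1, h2⟩ q ⟨u, hu, e, he, h3, h4⟩
        obtain ⟨g, hg, h⟩ := comb t u ht hu c hc e he
        refine ⟨t + u, by positivity, g, hg, ?_, ?_⟩
        · have := congrArg Prod.fst h
          simp only [Prod.smul_fst, Prod.fst_add] at this
          simp [this, h1, h3]
        · have := congrArg Prod.snd h
          simp only [Prod.smul_snd, Prod.snd_add, smul_eq_mul] at this
          rw [this, Prod.snd_add]
          linarith }
  have hs0 : s.Pointed := ⟨1, one_pos, 0, h0, by simp, by simp⟩
  have hne : ((0 : V), (1 : ℝ)) ≠ 0 := by simp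
  let f : V × ℝ →ₗ.[ℝ] ℝ := LinearPMap.mkSpanSingleton ((0 : V), (1 : ℝ)) (-1 : ℝ) hne
  have hdom : f.domain = Submodule.span ℝ {((0 : V), (1 : ℝ))} := rfl
  have hmem : ∀ r : ℝ, ((0 : V), r) ∈ f.domain := by
    intro r
    rw [hdom, Submodule.mem_span_singleton]
    exact ⟨r, by simp⟩
  have hf : ∀ x : f.domain, ((x : V × ℝ).1 = 0) ∧ f x = -(x : V × ℝ).2 := by
    rintro ⟨x, hx⟩
    obtain ⟨r, rfl⟩ := Submodule.mem_span_singleton.1 hx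
    refine ⟨by simp, ?_⟩
    have := LinearPMap.mkSpanSingleton'_apply (R := ℝ) ((0 : V), (1 : ℝ)) (-1 : ℝ)
      (fun c hc => by
        have : c = 0 := by simpa using hc
        simp [this]) r hx
    refine Eq.trans this ?_
    simp
  obtain ⟨g, hg1, hg2⟩ := riesz_extension (s.toPointedCone hs0) f
    (by
      intro x hx
      obtain ⟨h1, h2⟩ := hf x
      rw [h2]
      have hx' : (x : V × ℝ) ∈ s := hx
      obtain ⟨t, ht, c, hc, h3, h4⟩ := hx'
      rw [h1] at h3
      have hc1 : c.1 = 0 := by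
        have h3' : t • c.1 = 0 := by simpa using h3.symm
        exact (smul_eq_zero.1 h3').resolve_left ht.ne'
      have := hv c.2 (by rw [← hc1]; exact hc)
      nlinarith)
    (by
      rintro ⟨v, ρ⟩
      obtain ⟨t, ht, c, hc, h⟩ := hcone v v.2
      refine ⟨⟨((0 : V), t * c.2 - ρ), hmem _⟩, t, ht, c, hc, ?_, ?_⟩
      · simpa using h
      · simp)
  have hgr : ∀ r : ℝ, g ((0 : V), r) = -r := by
    intro r
    have := hg1 ⟨_, hmem r⟩
    rw [(hf _).2] at this
    exact this
  obtain ⟨α, hα⟩ := LinearMap.exists_extend (g.comp (LinearMap.inl ℝ V ℝ))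
  refine ⟨α, fun c hc => ?_⟩
  have hcV : c.1 ∈ V := Submodule.subset_span ⟨c, hc, rfl⟩
  have h1 : α c.1 = g (⟨c.1, hcV⟩, 0) := by
    have := congrArg (fun m : V →ₗ[ℝ] ℝ => m ⟨c.1, hcV⟩) hα
    simpa using this
  have h2 := hg2 ((⟨c.1, hcV⟩ : V), c.2) ⟨1, one_pos, c, hc, by simp, by simp⟩
  have h3 : ((⟨c.1, hcV⟩ : V), c.2) = (⟨c.1, hcV⟩, 0) + ((0 : V), c.2) := by simp
  rw [h3, map_add, hgr, ← h1] at h2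
  linarith

/-- A finitely generated nonempty polytope has a relative interior point. -/
lemma pf_aux_relint {E : Type*} [AddCommGroup E] [Module ℝ E] (T : Finset E)
    (hT : T.Nonempty) : ∃ z ∈ convexHull ℝ (T : Set E), ∃ ε : ℝ, 0 < ε ∧
      ∀ q ∈ convexHull ℝ (T : Set E), z - ε • (q - z) ∈ convexHull ℝ (T : Set E) := by
  classical
  have hk : (0 : ℝ) < T.card := by exact_mod_cast hT.card_pos
  have hk1 : (1 : ℝ) ≤ T.card := by exact_mod_cast hT.card_pos
  obtain ⟨k, hkdef⟩ : ∃ k : ℝ, k = (T.card : ℝ) := ⟨_, rfl⟩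
  rw [← hkdef] at hk hk1
  refine ⟨∑ y ∈ T, k⁻¹ • y, ?_, k⁻¹, by positivity, ?_⟩
  · rw [Finset.mem_convexHull']
    refine ⟨fun _ => k⁻¹, fun _ _ => by positivity, ?_, rfl⟩
    rw [Finset.sum_const, nsmul_eq_mul, ← hkdef, mul_inv_cancel₀ hk.ne']
  · intro q hq
    rw [Finset.mem_convexHull'] at hq ⊢
    obtain ⟨w, hw0, hw1, rfl⟩ := hq
    have hsum : ∑ y ∈ T, k⁻¹ = 1 := by
      rw [Finset.sum_const, nsmul_eq_mul, ← hkdef, mul_inv_cancel₀ hk.ne']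
    refine ⟨fun y => k⁻¹ - k⁻¹ * (w y - k⁻¹), ?_, ?_, ?_⟩
    · intro y hy
      have : w y ≤ 1 := hw1 ▸ Finset.single_le_sum hw0 hy
      have h2 : 0 < k⁻¹ := by positivity
      nlinarith
    · rw [Finset.sum_sub_distrib, ← Finset.mul_sum, Finset.sum_sub_distrib, hw1, hsum]
      simp
    · simp only [sub_smul, mul_smul, Finset.sum_sub_distrib, Finset.smul_sum, smul_sub]

/-- If the pair `(P, p_x)` has the PF-property, then for every subset `S` of the vertex set of
`p_x(P)` the pair `(P ∩ p_x⁻¹(conv S), p_x)` also has the PF-property. -/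
theorem pf_property_intersection {n d : ℕ}
    (P : Set ((Fin n → ℝ) × (Fin d → ℝ)))
    (hP : ∃ s : Set ((Fin n → ℝ) × (Fin d → ℝ)), s.Finite ∧ P = convexHull ℝ s)
    (hPF : ∀ F : Set ((Fin n → ℝ) × (Fin d → ℝ)),
        IsExposed ℝ P F → IsExposed ℝ (Prod.fst '' P) (Prod.fst '' F))
    (S : Set (Fin n → ℝ)) (hS : S ⊆ Set.extremePoints ℝ (Prod.fst '' P)) :
    ∀ F : Set ((Fin n → ℝ) × (Fin d → ℝ)),
      IsExposed ℝ (P ∩ Prod.fst ⁻¹' (convexHull ℝ S)) F →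
        IsExposed ℝ (Prod.fst '' (P ∩ Prod.fst ⁻¹' (convexHull ℝ S))) (Prod.fst '' F) := by

  intro F hF hFne
  obtain ⟨l, hl⟩ := hF (hFne.of_image)
  obtain ⟨s, hs, hPs⟩ := hP
  have hPne : P.Nonempty := by
    obtain ⟨q, hq⟩ := hFne.of_image
    rw [hl] at hq
    exact ⟨q, hq.1.1⟩
  have hPconv : Convex ℝ P := hPs ▸ convex_convexHull ℝ s
  have hPcomp : IsCompact P := hPs ▸ hs.isCompact_convexHull ℝ
  have hsT : ((hs.toFinset : Finset _) : Set ((Fin n → ℝ) × (Fin d → ℝ))) = s := by simp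
  have hTne : hs.toFinset.Nonempty := by
    rw [hPs, convexHull_nonempty_iff] at hPne
    simpa using hPne
  obtain ⟨z, hz, ε, hε, hrel⟩ := pf_aux_relint hs.toFinset hTne
  rw [hsT, ← hPs] at hz hrel
  -- the two components of `l`
  let a : (Fin n → ℝ) →L[ℝ] ℝ := l.comp (ContinuousLinearMap.inl ℝ _ _)
  let b : (Fin d → ℝ) →L[ℝ] ℝ := l.comp (ContinuousLinearMap.inr ℝ _ _)
  have hlab : ∀ q, l q = a q.1 + b q.2 := by
    intro q
    simp only [a, b, ContinuousLinearMap.comp_apply, ContinuousLinearMap.inl_apply,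
      ContinuousLinearMap.inr_apply, ← map_add]
    simp
  -- the maximum over the fibre of `z.1`
  obtain ⟨z', ⟨hz'P, hz'1⟩, hz'max⟩ := (hPcomp.inter_right
    (isClosed_singleton.preimage continuous_fst : IsClosed
      (Prod.fst ⁻¹' {z.1} : Set ((Fin n → ℝ) × (Fin d → ℝ))))).exists_isMaxOn ⟨z, hz, rfl⟩
    (b.continuous.comp continuous_snd).continuousOn
  have hz'1 : z'.1 = z.1 := hz'1
  have hz'max : ∀ q ∈ P, q.1 = z.1 → b q.2 ≤ b z'.2 := fun q hq h => hz'max ⟨hq, h⟩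
  let φ : ((Fin n → ℝ) × (Fin d → ℝ)) →ₗ[ℝ] (Fin n → ℝ) × ℝ :=
    LinearMap.prodMap LinearMap.id b.toLinearMap
  have hφ : ∀ q, φ q = (q.1, b q.2) := fun q => rfl
  obtain ⟨α, hα⟩ := pf_aux_support ((fun q => q - z') '' P |> fun A => φ '' A)
    (by
      apply Convex.linear_image
      simpa only [sub_eq_add_neg, add_comm] using hPconv.translate (-z'))
    ⟨0, ⟨z', hz'P, by simp⟩, by simp⟩
    (by
      rintro r ⟨_, ⟨q, hq, rfl⟩, h⟩
      rw [hφ, Prod.mk.injEq] at h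
      have := hz'max q hq (by rw [← hz'1]; exact sub_eq_zero.1 h.1)
      rw [← h.2]
      simpa using this)
    (by
      rintro _ ⟨_, ⟨q, hq, rfl⟩, rfl⟩
      refine ⟨ε, hε, _, ⟨_, ⟨_, hrel q hq, rfl⟩, rfl⟩, ?_⟩
      simp [hφ, hz'1])
  have hub : ∀ q ∈ P, b q.2 ≤ b z'.2 + α (q.1 - z'.1) := by
    intro q hq
    have := hα _ ⟨_, ⟨q, hq, rfl⟩, rfl⟩
    simp only [hφ, Prod.snd_sub, Prod.fst_sub, map_sub] at this ⊢
    linarith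
  let αc : (Fin n → ℝ) →L[ℝ] ℝ := LinearMap.toContinuousLinearMap α
  have hαc : ∀ x, αc x = α x := fun x => rfl
  let L : ((Fin n → ℝ) × (Fin d → ℝ)) →L[ℝ] ℝ :=
    b.comp (ContinuousLinearMap.snd ℝ _ _) - αc.comp (ContinuousLinearMap.fst ℝ _ _)
  have hL : ∀ q, L q = b q.2 - α q.1 := fun q => rfl
  have hz'G : z' ∈ {q ∈ P | ∀ y ∈ P, L y ≤ L q} := by
    refine ⟨hz'P, fun y hy => ?_⟩
    have := hub y hy
    rw [map_sub] at this
    rw [hL, hL]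
    linarith
  obtain ⟨m, hm⟩ := hPF {q ∈ P | ∀ y ∈ P, L y ≤ L q} (fun _ => ⟨L, rfl⟩) ⟨_, z', hz'G, rfl⟩
  have hzm : ∀ y ∈ P, m y.1 ≤ m z.1 := by
    have : z'.1 ∈ Prod.fst '' {q ∈ P | ∀ y ∈ P, L y ≤ L q} := ⟨z', hz'G, rfl⟩
    rw [hm, hz'1] at this
    exact fun y hy => this.2 _ ⟨y, hy, rfl⟩
  have hlift : ∀ q ∈ P, ∃ q' ∈ P, q'.1 = q.1 ∧ b q'.2 = b z'.2 + α (q.1 - z'.1) := by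
    intro q hq
    have hqm : m z.1 ≤ m q.1 := by
      have := hzm _ (hrel q hq)
      simp only [Prod.fst_sub, Prod.smul_fst, map_sub, map_smul, smul_eq_mul] at this
      nlinarith
    have : q.1 ∈ Prod.fst '' {q ∈ P | ∀ y ∈ P, L y ≤ L q} := by
      rw [hm]
      refine ⟨⟨q, hq, rfl⟩, ?_⟩
      rintro _ ⟨y, hy, rfl⟩
      exact (hzm y hy).trans hqm
    obtain ⟨q', ⟨hq', hmax⟩, h1⟩ := this
    refine ⟨q', hq', h1, le_antisymm (h1 ▸ hub q' hq') ?_⟩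
    have := hmax z' hz'P
    rw [hL, hL, h1] at this
    rw [map_sub]
    linarith
  have hmab : ∀ x, (a + αc) x = a x + α x := fun x => rfl
  refine ⟨a + αc, ?_⟩
  ext x
  constructor
  · rintro ⟨q, hq, rfl⟩
    rw [hl] at hq
    refine ⟨⟨q, hq.1, rfl⟩, ?_⟩
    rintro _ ⟨y, hy, rfl⟩
    obtain ⟨y', hy', h1, h2⟩ := hlift y hy.1
    have h3 := hq.2 y' ⟨hy', by rw [Set.mem_preimage, h1]; exact hy.2⟩
    have h4 := hub q hq.1.1
    rw [hlab, hlab, h1, h2] at h3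
    rw [hmab, hmab]
    rw [map_sub] at h3 h4
    linarith
  · rintro ⟨⟨q, hq, rfl⟩, hmax⟩
    obtain ⟨q', hq', h1, h2⟩ := hlift q hq.1
    refine ⟨q', ?_, h1⟩
    rw [hl]
    refine ⟨⟨hq', by rw [Set.mem_preimage, h1]; exact hq.2⟩, fun y hy => ?_⟩
    have h3 := hmax y.1 ⟨y, hy, rfl⟩
    have h4 := hub y hy.1
    rw [hmab, hmab] at h3
    rw [hlab, hlab, h1, h2]
    rw [map_sub] at h4 ⊢
    linarith
end

section
/- Let P₁ ⊆ ℝ^{n₁} × ℝ^{d₁} and P₂ ⊆ ℝ^{n₂} × ℝ^{d₂} be polytopes, let f : ℝ^{n₁} × ℝ^{n₂} → ℝⁿ ∪ {∞} be a partial function, and define P₃ := conv{(γ, α, β) : α ∈ vert(p_α(P₁)), β ∈ vert(p_β(P₂)), γ = f(α, β) ≠ ∞}, P := conv{(γ, x, y) : ∃ α, β with (α, x) ∈ vert(P₁), (β, y) ∈ vert(P₂), γ = f(α, β) ≠ ∞}, and Q := {(γ, α, x, β, y) : (α, x) ∈ P₁, (β, y) ∈ P₂, (γ, α, β) ∈ P₃}.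 If (P₁, p_α) and (P₂, p_β) have the PF-property and every vertex of P₃ is mapped by the projection p_γ (onto the first n coordinates) to a vertex of p_γ(P₃), then P = p_{γ,x,y}(Q), where p_{γ,x,y}(γ, α, x, β, y) := (γ, x, y). -/
open Set

lemma margot_aux_exposed {E : Type*} [NormedAddCommGroup E] [NormedSpace ℝ E]
    {s : Set E} (hs : s.Finite) {v : E} (hv : v ∈ extremePoints ℝ (convexHull ℝ s)) :
    IsExposed ℝ (convexHull ℝ s) {v} := by
  have hcv : v ∉ convexHull ℝ (s \ {v}) := by
    have h1 := ((convex_convexHull ℝ s).mem_extremePoints_iff_convex_diff).1 hv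
    intro h
    have h2 : convexHull ℝ (s \ {v}) ⊆ convexHull ℝ s \ {v} :=
      convexHull_min (fun z hz => ⟨subset_convexHull ℝ s hz.1, hz.2⟩) h1.2
    exact (h2 h).2 rfl
  have hcl : IsClosed (convexHull ℝ (s \ {v})) :=
    (hs.subset diff_subset).isClosed_convexHull ℝ
  obtain ⟨u, r, hu1, hu2⟩ :=
    geometric_hahn_banach_closed_point (convex_convexHull ℝ (s \ {v})) hcl hcv
  have hvm : v ∈ convexHull ℝ s := hv.1
  have hle : ∀ z ∈ convexHull ℝ s, u z ≤ u v := by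
    intro z hz
    have : convexHull ℝ s ⊆ {z | u z ≤ u v} := by
      apply convexHull_min
      · intro w hw
        by_cases hwv : w = v
        · simp [hwv]
        · exact ((hu1 w (subset_convexHull ℝ _ ⟨hw, hwv⟩)).trans hu2).le
      · exact convex_halfSpace_le u.toLinearMap.isLinear _
    exact this hz
  intro _
  refine ⟨u, ?_⟩
  ext z
  constructor
  · rintro rfl
    exact ⟨hvm, hle⟩
  · rintro ⟨hz, hz2⟩
    by_contra hne
    have hvs : v ∈ s := extremePoints_convexHull_subset hv
    have hz3 : z ∈ convexHull ℝ (insert v (s \ {v})) := by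
      rwa [insert_diff_singleton, insert_eq_of_mem hvs]
    by_cases hem : (s \ {v}).Nonempty
    · rw [convexHull_insert hem, mem_convexJoin] at hz3
      obtain ⟨a, ha, b, hb, hzab⟩ := hz3
      rw [mem_singleton_iff] at ha
      subst ha
      obtain ⟨p, q, hp, hq, hpq, rfl⟩ := hzab
      have h1 := hz2 a hvm
      have h2 := hu1 b hb
      simp only [map_add, map_smul, smul_eq_mul] at h1
      have hq0 : q = 0 := by
        by_contra hq0
        have : 0 < q := lt_of_le_of_ne hq (Ne.symm hq0)
        have hp' : p = 1 - q := by linarith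
        subst hp'
        nlinarith
      have hp1 : p = 1 := by linarith
      subst hq0 hp1
      simp at hne
    · rw [not_nonempty_iff_eq_empty] at hem
      rw [hem] at hz3
      simp at hz3
      exact hne hz3

lemma margot_aux_proj {E F : Type*} [NormedAddCommGroup E] [NormedSpace ℝ E]
    [NormedAddCommGroup F] [NormedSpace ℝ F]
    {P : Set (E × F)} (hP : ∃ s : Set (E × F), s.Finite ∧ P = convexHull ℝ s)
    (hPF : ∀ G : Set (E × F), IsExposed ℝ P G → IsExposed ℝ (Prod.fst '' P) (Prod.fst '' G))
    {a : E} {x : F} (h : (a, x) ∈ extremePoints ℝ P) :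
    a ∈ extremePoints ℝ (Prod.fst '' P) := by
  obtain ⟨s, hs, rfl⟩ := hP
  have := hPF _ (margot_aux_exposed hs h)
  rw [image_singleton] at this
  exact isExtreme_singleton.1 this.isExtreme

lemma margot_aux_affine {E F : Type*} [NormedAddCommGroup E] [NormedSpace ℝ E]
    [NormedAddCommGroup F] [NormedSpace ℝ F]
    {P : Set (E × F)} (hP : ∃ s : Set (E × F), s.Finite ∧ P = convexHull ℝ s)
    (hne : P.Nonempty)
    (hPF : ∀ G : Set (E × F), IsExposed ℝ P G → IsExposed ℝ (Prod.fst '' P) (Prod.fst '' G))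
    (c : F →L[ℝ] ℝ) :
    ∃ (l : E →L[ℝ] ℝ) (M : ℝ), (∀ z ∈ P, c z.2 + l z.1 ≤ M) ∧
      ∀ a ∈ Prod.fst '' P, ∃ x, (a, x) ∈ P ∧ c x + l a = M := by
  classical
  obtain ⟨s, hs, rfl⟩ := hP
  have hsne : s.Nonempty := convexHull_nonempty_iff.1 hne
  have key : ∀ (l : E →L[ℝ] ℝ) (M : ℝ), (∀ z ∈ s, c z.2 + l z.1 ≤ M) →
      ∀ z ∈ convexHull ℝ s, c z.2 + l z.1 ≤ M := by
    intro l M h z hz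
    have : convexHull ℝ s ⊆ {z | (c.comp (ContinuousLinearMap.snd ℝ E F) +
        l.comp (ContinuousLinearMap.fst ℝ E F)) z ≤ M} := by
      apply convexHull_min
      · intro w hw
        simpa using h w hw
      · exact convex_halfSpace_le (LinearMap.isLinear (ContinuousLinearMap.toLinearMap _)) _
    simpa using this hz
  let 𝒜 : Set (Set (E × F)) := {A | A ⊆ s ∧ A.Nonempty ∧ ∃ (l : E →L[ℝ] ℝ) (M : ℝ),
    (∀ z ∈ s, c z.2 + l z.1 ≤ M) ∧ ∀ z ∈ A, c z.2 + l z.1 = M}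
  have h𝒜fin : 𝒜.Finite := hs.finite_subsets.subset (fun A hA => hA.1)
  have h𝒜ne : 𝒜.Nonempty := by
    obtain ⟨v, hv, hmax⟩ := hs.exists_maximalFor (fun z => c z.2) s hsne |>.imp
      (fun v hv => (⟨hv.1, fun w hw => by
        rcases le_total (c w.2) (c v.2) with h | h
        · exact h
        · exact hv.2 hw h⟩ : v ∈ s ∧ ∀ w ∈ s, c w.2 ≤ c v.2))
    refine ⟨{v}, by simpa using hv, singleton_nonempty v, 0, c v.2, ?_, ?_⟩
    · simpa using hmax
    · simp
  obtain ⟨A, hA⟩ := h𝒜fin.exists_maximal h𝒜ne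
  obtain ⟨⟨hAs, ⟨v₁, hv₁⟩, l, M, hle, heq⟩, hAmax⟩ := hA
  have hleP := key l M hle
  refine ⟨l, M, hleP, ?_⟩
  set G : Set (E × F) := {z | z ∈ convexHull ℝ s ∧ c z.2 + l z.1 = M} with hG
  have hv₁P : v₁ ∈ convexHull ℝ s := subset_convexHull ℝ s (hAs hv₁)
  have hGexp : IsExposed ℝ (convexHull ℝ s) G := by
    intro _
    refine ⟨c.comp (ContinuousLinearMap.snd ℝ E F) +
        l.comp (ContinuousLinearMap.fst ℝ E F), ?_⟩
    ext z
    simp only [hG, mem_setOf_eq, ContinuousLinearMap.add_apply, ContinuousLinearMap.comp_apply,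
      ContinuousLinearMap.coe_snd', ContinuousLinearMap.coe_fst']
    refine and_congr_right fun hz => ⟨fun h w hw => (hleP w hw).trans h.ge, fun h => ?_⟩
    exact le_antisymm (hleP z hz) ((heq v₁ hv₁).ge.trans (h v₁ hv₁P))
  have hAG : A ⊆ G := fun z hz => ⟨subset_convexHull ℝ s (hAs hz), heq z hz⟩
  obtain ⟨u, hu⟩ := hPF G hGexp ⟨v₁.1, v₁, hAG hv₁, rfl⟩
  have huA : ∀ z ∈ A, ∀ w ∈ convexHull ℝ s, u w.1 ≤ u z.1 := by
    intro z hz w hw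
    have : z.1 ∈ Prod.fst '' G := ⟨z, hAG hz, rfl⟩
    rw [hu] at this
    exact this.2 _ ⟨w, hw, rfl⟩
  set m := u v₁.1 with hm
  have hum : ∀ w ∈ convexHull ℝ s, u w.1 ≤ m := huA v₁ hv₁
  have huAm : ∀ z ∈ A, u z.1 = m := fun z hz =>
    le_antisymm (hum z (subset_convexHull ℝ s (hAs hz))) (huA z hz v₁ hv₁P)
  suffices hall : ∀ w ∈ s, u w.1 = m by
    have hallP : ∀ w ∈ convexHull ℝ s, m ≤ u w.1 := by
      intro w hw
      have : convexHull ℝ s ⊆ {z | m ≤ (u.comp (ContinuousLinearMap.fst ℝ E F)) z} := by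
        apply convexHull_min
        · intro w hw
          simpa using (hall w hw).ge
        · exact convex_halfSpace_ge (LinearMap.isLinear (ContinuousLinearMap.toLinearMap _)) _
      simpa using this hw
    rintro a ⟨w, hw, rfl⟩
    have : w.1 ∈ Prod.fst '' G := by
      rw [hu]
      refine ⟨⟨w, hw, rfl⟩, ?_⟩
      rintro _ ⟨w', hw', rfl⟩
      exact (hum w' hw').trans (hallP w hw)
    obtain ⟨⟨a, x⟩, hz, hza⟩ := this
    simp only at hza
    subst hza
    exact ⟨x, hz.1, hz.2⟩
  by_contra hcon
  push Not at hcon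
  obtain ⟨w₀, hw₀s, hw₀⟩ := hcon
  have hNne : ({w | w ∈ s ∧ u w.1 < m}).Nonempty :=
    ⟨w₀, hw₀s, lt_of_le_of_ne (hum w₀ (subset_convexHull ℝ s hw₀s)) hw₀⟩
  have hNfin : ({w | w ∈ s ∧ u w.1 < m}).Finite := hs.subset (fun w hw => hw.1)
  obtain ⟨v₀, ⟨hv₀s, hv₀⟩, hmin⟩ := Set.exists_min_image _
    (fun w : E × F => (M - (c w.2 + l w.1)) / (m - u w.1)) hNfin hNne
  set t := (M - (c v₀.2 + l v₀.1)) / (m - u v₀.1) with ht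
  have hnew : insert v₀ A ∈ 𝒜 := by
    refine ⟨insert_subset hv₀s hAs, insert_nonempty _ _, l - t • u, M - t * m, ?_, ?_⟩
    · intro z hz
      simp only [ContinuousLinearMap.sub_apply, ContinuousLinearMap.smul_apply, smul_eq_mul]
      rcases lt_or_eq_of_le (hum z (subset_convexHull ℝ s hz)) with h | h
      · have h1 := hmin z ⟨hz, h⟩
        rw [le_div_iff₀ (by linarith)] at h1
        linarith
      · rw [h]
        linarith [hle z hz]
    · intro z hz
      simp only [ContinuousLinearMap.sub_apply, ContinuousLinearMap.smul_apply, smul_eq_mul]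
      rcases hz with rfl | hz
      · have : t * (m - u z.1) = M - (c z.2 + l z.1) := by
          rw [ht]; exact div_mul_cancel₀ _ (by linarith)
        linarith
      · rw [huAm z hz]
        linarith [heq z hz]
  have h1 : v₀ ∈ A := hAmax hnew (subset_insert _ _) (mem_insert _ _)
  exact hv₀.ne (huAm v₀ h1)

lemma margot_aux_vertex {E F : Type*} [NormedAddCommGroup E] [NormedSpace ℝ E]
    [NormedAddCommGroup F] [NormedSpace ℝ F]
    {P : Set (E × F)} (hP : ∃ s : Set (E × F), s.Finite ∧ P = convexHull ℝ s)
    (hne : P.Nonempty)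
    (hPF : ∀ G : Set (E × F), IsExposed ℝ P G → IsExposed ℝ (Prod.fst '' P) (Prod.fst '' G))
    (c : F →L[ℝ] ℝ) :
    ∃ (l : E →L[ℝ] ℝ) (M : ℝ), (∀ z ∈ P, c z.2 + l z.1 ≤ M) ∧
      ∀ a ∈ extremePoints ℝ (Prod.fst '' P), ∃ x, (a, x) ∈ extremePoints ℝ P ∧ c x + l a = M := by
  obtain ⟨l, M, hle, hex⟩ := margot_aux_affine hP hne hPF c
  refine ⟨l, M, hle, fun a ha => ?_⟩
  obtain ⟨x₀, hx₀, hx₀M⟩ := hex a ha.1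
  have hcomp : IsCompact P := by
    obtain ⟨s, hs, rfl⟩ := hP
    exact hs.isCompact_convexHull ℝ
  set G : Set (E × F) := P ∩ {z | z.1 = a ∧ c z.2 + l z.1 = M} with hG
  have hGc : IsCompact G := by
    apply hcomp.inter_right
    apply IsClosed.inter
    · exact isClosed_eq continuous_fst continuous_const
    · exact isClosed_eq (by fun_prop) continuous_const
  have hGext : IsExtreme ℝ P G := by
    refine ⟨inter_subset_left, ?_⟩
    rintro z hz w hw v ⟨hv, hva, hvM⟩ hseg
    have hz1 : z.1 = a := by
      have hseg' : a ∈ openSegment ℝ z.1 w.1 := by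
        obtain ⟨p, q, hp, hq, hpq, rfl⟩ := hseg
        exact ⟨p, q, hp, hq, hpq, by simpa using hva⟩
      exact ha.2 ⟨z, hz, rfl⟩ ⟨w, hw, rfl⟩ hseg'
    refine ⟨hz, hz1, ?_⟩
    obtain ⟨p, q, hp, hq, hpq, rfl⟩ := hseg
    have h1 := hle z hz
    have h2 := hle w hw
    simp only [Prod.fst_add, Prod.snd_add, Prod.smul_fst, Prod.smul_snd, map_add, map_smul,
      smul_eq_mul] at hvM
    refine le_antisymm h1 ?_
    have hq' : q = 1 - p := by linarith
    subst hq'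
    by_contra hlt
    push Not at hlt
    nlinarith
  obtain ⟨⟨a', x⟩, hv⟩ := hGc.extremePoints_nonempty (⟨(a, x₀), hx₀, rfl, hx₀M⟩ : G.Nonempty)
  obtain ⟨-, h1, h2⟩ := hv.1
  simp only at h1 h2
  subst h1
  exact ⟨x, hGext.extremePoints_subset_extremePoints hv, h2⟩

/-- Part a) of Margot's theorem.  Given polytopes `P₁ ⊆ ℝ^{n₁} × ℝ^{d₁}`,
`P₂ ⊆ ℝ^{n₂} × ℝ^{d₂}`, a partial composition function
`f : ℝ^{n₁} × ℝ^{n₂} → ℝⁿ ∪ {∞}` (modeled as `Option`-valued), and the polytopes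
`P₃ = conv{(γ,α,β) : α ∈ vert p_α(P₁), β ∈ vert p_β(P₂), γ = f(α,β) ≠ ∞}`,
`P = conv{(γ,x,y) : ∃ α β, (α,x) ∈ vert P₁, (β,y) ∈ vert P₂, γ = f(α,β) ≠ ∞}` and
`Q = {(γ,α,x,β,y) : (α,x) ∈ P₁, (β,y) ∈ P₂, (γ,α,β) ∈ P₃}`:
if `(P₁, p_α)` and `(P₂, p_β)` have the PF-property and every vertex of `P₃` is projected by
`p_γ` to a vertex of `p_γ(P₃)`, then `P = p_{γ,x,y}(Q)`. -/
theorem margot_composition_projection {n n₁ d₁ n₂ d₂ : ℕ}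
    (P₁ : Set ((Fin n₁ → ℝ) × (Fin d₁ → ℝ)))
    (P₂ : Set ((Fin n₂ → ℝ) × (Fin d₂ → ℝ)))
    (f : (Fin n₁ → ℝ) × (Fin n₂ → ℝ) → Option (Fin n → ℝ))
    (P₃ : Set ((Fin n → ℝ) × (Fin n₁ → ℝ) × (Fin n₂ → ℝ)))
    (P : Set ((Fin n → ℝ) × (Fin d₁ → ℝ) × (Fin d₂ → ℝ)))
    (Q : Set ((Fin n → ℝ) × ((Fin n₁ → ℝ) × (Fin d₁ → ℝ)) × ((Fin n₂ → ℝ) × (Fin d₂ → ℝ))))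
    (hP₁ : ∃ s : Set ((Fin n₁ → ℝ) × (Fin d₁ → ℝ)), s.Finite ∧ P₁ = convexHull ℝ s)
    (hP₂ : ∃ s : Set ((Fin n₂ → ℝ) × (Fin d₂ → ℝ)), s.Finite ∧ P₂ = convexHull ℝ s)
    (hP₃ : P₃ = convexHull ℝ
      {q | q.2.1 ∈ Set.extremePoints ℝ (Prod.fst '' P₁) ∧
           q.2.2 ∈ Set.extremePoints ℝ (Prod.fst '' P₂) ∧
           f (q.2.1, q.2.2) = some q.1})
    (hPdef : P = convexHull ℝ
      {q | ∃ α β, (α, q.2.1) ∈ Set.extremePoints ℝ P₁ ∧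
                  (β, q.2.2) ∈ Set.extremePoints ℝ P₂ ∧
                  f (α, β) = some q.1})
    (hQ : Q = {q | q.2.1 ∈ P₁ ∧ q.2.2 ∈ P₂ ∧ (q.1, q.2.1.1, q.2.2.1) ∈ P₃})
    (hPF₁ : ∀ F : Set ((Fin n₁ → ℝ) × (Fin d₁ → ℝ)),
        IsExposed ℝ P₁ F → IsExposed ℝ (Prod.fst '' P₁) (Prod.fst '' F))
    (hPF₂ : ∀ F : Set ((Fin n₂ → ℝ) × (Fin d₂ → ℝ)),
        IsExposed ℝ P₂ F → IsExposed ℝ (Prod.fst '' P₂) (Prod.fst '' F))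
    (hvert₃ : ∀ v ∈ Set.extremePoints ℝ P₃,
        v.1 ∈ Set.extremePoints ℝ (Prod.fst '' P₃)) :
    P = (fun q => (q.1, q.2.1.2, q.2.2.2)) '' Q := by
  have hfin : ∀ {m k : ℕ} (R : Set ((Fin m → ℝ) × (Fin k → ℝ))),
      (∃ s : Set ((Fin m → ℝ) × (Fin k → ℝ)), s.Finite ∧ R = convexHull ℝ s) →
      (extremePoints ℝ R).Finite := by
    rintro m k R ⟨s, hs, rfl⟩
    exact hs.subset extremePoints_convexHull_subset
  have hPclosed : IsClosed P := by
    rw [hPdef]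
    apply Set.Finite.isClosed_convexHull
    refine (((hfin P₁ hP₁).prod (hfin P₂ hP₂)).image
      (fun w => (((f (w.1.1, w.2.1)).getD 0, w.1.2, w.2.2) :
        (Fin n → ℝ) × (Fin d₁ → ℝ) × (Fin d₂ → ℝ)))).subset ?_
    rintro ⟨g, x, y⟩ ⟨α, β, h1, h2, h3⟩
    refine ⟨((α, x), (β, y)), ⟨h1, h2⟩, ?_⟩
    simp only at h3
    simp [h3]
  have hPconv : Convex ℝ P := by rw [hPdef]; exact convex_convexHull ℝ _
  have hc₁ : Convex ℝ P₁ := by obtain ⟨s, _, rfl⟩ := hP₁; exact convex_convexHull ℝ _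
  have hc₂ : Convex ℝ P₂ := by obtain ⟨s, _, rfl⟩ := hP₂; exact convex_convexHull ℝ _
  have hc₃ : Convex ℝ P₃ := by rw [hP₃]; exact convex_convexHull ℝ _
  apply Subset.antisymm
  · rw [hPdef]
    apply convexHull_min
    · rintro ⟨g, x, y⟩ ⟨α, β, h1, h2, h3⟩
      refine ⟨(g, (α, x), (β, y)), ?_, rfl⟩
      rw [hQ]
      refine ⟨h1.1, h2.1, ?_⟩
      rw [hP₃]
      exact subset_convexHull ℝ _
        ⟨margot_aux_proj hP₁ hPF₁ h1, margot_aux_proj hP₂ hPF₂ h2, h3⟩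
    · rintro _ ⟨q, hq, rfl⟩ _ ⟨q', hq', rfl⟩ a b ha hb hab
      rw [hQ] at hq hq'
      refine ⟨a • q + b • q', ?_, rfl⟩
      rw [hQ]
      exact ⟨hc₁ hq.1 hq'.1 ha hb hab, hc₂ hq.2.1 hq'.2.1 ha hb hab,
        hc₃ hq.2.2 hq'.2.2 ha hb hab⟩
  · rintro _ ⟨⟨g, ⟨α, x⟩, ⟨β, y⟩⟩, hq, rfl⟩
    rw [hQ] at hq
    obtain ⟨h1, h2, h3⟩ := hq
    simp only at h1 h2 h3 ⊢
    by_contra hnot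
    obtain ⟨φ, r, hφ1, hφ2⟩ := geometric_hahn_banach_closed_point hPconv hPclosed hnot
    let c₀ : (Fin n → ℝ) →L[ℝ] ℝ := φ.comp (ContinuousLinearMap.inl ℝ _ _)
    let c₁ : (Fin d₁ → ℝ) →L[ℝ] ℝ :=
      φ.comp ((ContinuousLinearMap.inr ℝ _ _).comp (ContinuousLinearMap.inl ℝ _ _))
    let c₂ : (Fin d₂ → ℝ) →L[ℝ] ℝ :=
      φ.comp ((ContinuousLinearMap.inr ℝ _ _).comp (ContinuousLinearMap.inr ℝ _ _))
    have hφ : ∀ g x y, φ (g, x, y) = c₀ g + c₁ x + c₂ y := by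
      intro g x y
      simp only [c₀, c₁, c₂, ContinuousLinearMap.comp_apply, ContinuousLinearMap.inl_apply,
        ContinuousLinearMap.inr_apply, ← map_add]
      simp
    obtain ⟨l₁, M₁, hl₁, hv₁⟩ := margot_aux_vertex hP₁ ⟨_, h1⟩ hPF₁ c₁
    obtain ⟨l₂, M₂, hl₂, hv₂⟩ := margot_aux_vertex hP₂ ⟨_, h2⟩ hPF₂ c₂
    let ψ : ((Fin n → ℝ) × (Fin n₁ → ℝ) × (Fin n₂ → ℝ)) →L[ℝ] ℝ :=
      c₀.coprod ((-l₁).coprod (-l₂))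
    have hψ : ∀ g a b, ψ (g, a, b) = c₀ g - l₁ a - l₂ b := by
      intro g a b
      simp [ψ]
      ring
    have hsub : P₃ ⊆ {z | ψ z ≤ r - M₁ - M₂} := by
      rw [hP₃]
      apply convexHull_min
      · rintro ⟨g', a, b⟩ ⟨ha, hb, hf⟩
        simp only at ha hb hf
        obtain ⟨x', hx', hxM⟩ := hv₁ a ha
        obtain ⟨y', hy', hyM⟩ := hv₂ b hb
        have hmem : (g', x', y') ∈ P := by
          rw [hPdef]
          exact subset_convexHull ℝ _ ⟨a, b, hx', hy', hf⟩
        have h4 := hφ1 _ hmem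
        rw [hφ] at h4
        rw [mem_setOf_eq, hψ]
        linarith
      · exact convex_halfSpace_le ψ.toLinearMap.isLinear _
    have h5 := hsub h3
    rw [mem_setOf_eq, hψ] at h5
    rw [hφ] at hφ2
    have h6 := hl₁ _ h1
    have h7 := hl₂ _ h2
    simp only at h6 h7
    linarith
end

section
/- Let P₁ ⊆ ℝ^{n₁} × ℝ^{d₁} and P₂ ⊆ ℝ^{n₂} × ℝ^{d₂} be polytopes, let f : ℝ^{n₁} × ℝ^{n₂} → ℝⁿ ∪ {∞} be a partial function, and define P₃ := conv{(γ, α, β) : α ∈ vert(p_α(P₁)), β ∈ vert(p_β(P₂)), γ = f(α, β) ≠ ∞} and Q := {(γ, α, x, β, y) : (α, x) ∈ P₁, (β, y) ∈ P₂, (γ, α, β) ∈ P₃}. If (P₁, p_α) and (P₂, p_β) have the PF-property and every vertex of P₃ is mapped by the projection p_γ (onto the first n coordinates) to a vertex of p_γ(P₃), then the pair (Q, p_{γ,α,β}) has the PF-property, where p_{γ,α,β}(γ, α, x, β, y) := (γ, α, β). -/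
open Set


/-- The lineality directions of `P` at `z`. -/
def linDir {E : Type*} [AddCommGroup E] [Module ℝ E] (P : Set E) (hP : Convex ℝ P) (z : E)
    (hz : z ∈ P) : Submodule ℝ E where
  carrier := {v | ∃ ε : ℝ, 0 < ε ∧ ∀ t : ℝ, |t| ≤ ε → z + t • v ∈ P}
  zero_mem' := ⟨1, one_pos, fun t _ => by simpa using hz⟩
  add_mem' := by
    rintro v w ⟨e, he, hv⟩ ⟨d, hd, hw⟩
    refine ⟨min e d / 2, by positivity, fun t ht => ?_⟩
    have h2 : |2 * t| ≤ min e d := by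
      rw [abs_mul, abs_two]
      linarith
    have h := hP (hv (2 * t) (h2.trans (min_le_left _ _))) (hw (2 * t) (h2.trans (min_le_right _ _)))
      (a := 1/2) (b := 1/2) (by norm_num) (by norm_num) (by norm_num)
    convert h using 1
    module
  smul_mem' := by
    rintro c v ⟨e, he, hv⟩
    refine ⟨e / (|c| + 1), by positivity, fun t ht => ?_⟩
    rw [smul_smul]
    apply hv
    rw [abs_mul]
    have hc : 0 < |c| + 1 := by positivity
    rw [le_div_iff₀ hc] at ht
    nlinarith [abs_nonneg t]

lemma mem_linDir_of {E : Type*} [AddCommGroup E] [Module ℝ E] {P : Set E} (hP : Convex ℝ P) {z : E}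
    (hz : z ∈ P) {v : E} {e d : ℝ} (he : 0 < e) (hd : 0 < d) (h1 : z + e • v ∈ P)
    (h2 : z - d • v ∈ P) : v ∈ linDir P hP z hz := by
  refine ⟨min e d, by positivity, fun t ht => ?_⟩
  rcases le_total 0 t with h | h
  · rw [abs_of_nonneg h] at ht
    have hte : t / e ≤ 1 := by
      rw [div_le_one he]; exact ht.trans (min_le_left _ _)
    have := hP hz h1 (a := 1 - t / e) (b := t / e) (by linarith) (by positivity) (by ring)
    convert this using 1
    have : t = (t / e) * e := by field_simp
    match_scalars <;> field_simp <;> ring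
  · rw [abs_of_nonpos h] at ht
    have hte : (-t) / d ≤ 1 := by
      rw [div_le_one hd]; exact ht.trans (min_le_right _ _)
    have := hP hz h2 (a := 1 - (-t) / d) (b := (-t) / d) (by linarith)
      (div_nonneg (by linarith) hd.le) (by ring)
    convert this using 1
    match_scalars <;> field_simp <;> ring

/-- The smallest face of `P` containing `z`. -/
def minFace {E : Type*} [AddCommGroup E] [Module ℝ E] (P : Set E) (hP : Convex ℝ P) (z : E)
    (hz : z ∈ P) : Set E := {w | w ∈ P ∧ w - z ∈ linDir P hP z hz}

lemma self_mem_minFace {E : Type*} [AddCommGroup E] [Module ℝ E] {P : Set E} (hP : Convex ℝ P) {z : E}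
    (hz : z ∈ P) : z ∈ minFace P hP z hz := ⟨hz, by simp⟩

lemma minFace_isExtreme {E : Type*} [AddCommGroup E] [Module ℝ E] {P : Set E} (hP : Convex ℝ P) {z : E}
    (hz : z ∈ P) : IsExtreme ℝ P (minFace P hP z hz) := by
  refine ⟨fun w hw => hw.1, ?_⟩
  rintro x hx y hy w ⟨hw, t, ht, htP⟩ ⟨a, b, ha, hb, hab, rfl⟩
  refine ⟨hx, ?_⟩
  have h1 := htP (-t) (by rw [abs_neg, abs_of_pos ht])
  have hpos : 0 < 1 + t * b := by positivity
  refine mem_linDir_of hP hz (e := 1) (d := t * a / (1 + t * b)) one_pos (by positivity)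
    (by simpa using hx) ?_
  have := hP h1 hy (a := 1 / (1 + t * b)) (b := t * b / (1 + t * b)) (by positivity) (by positivity)
    (by field_simp)
  convert this using 1
  obtain rfl : a = 1 - b := by linarith
  match_scalars <;> field_simp <;> ring

lemma minFace_convex {E : Type*} [AddCommGroup E] [Module ℝ E] {P : Set E} (hP : Convex ℝ P) {z : E}
    (hz : z ∈ P) : Convex ℝ (minFace P hP z hz) := by
  rintro x ⟨hx, hx'⟩ y ⟨hy, hy'⟩ a b ha hb hab
  refine ⟨hP hx hy ha hb hab, ?_⟩
  have : a • x + b • y - z = a • (x - z) + b • (y - z) := by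
    obtain rfl : a = 1 - b := by linarith
    module
  rw [this]
  exact add_mem (Submodule.smul_mem _ _ hx') (Submodule.smul_mem _ _ hy')

lemma mem_openSegment_ext {E : Type*} [AddCommGroup E] [Module ℝ E] (z w : E) {t : ℝ} (ht : 0 < t) :
    z ∈ openSegment ℝ w (z + (-t) • (w - z)) := by
  refine ⟨t / (1 + t), 1 / (1 + t), by positivity, by positivity, by field_simp; ring, ?_⟩
  match_scalars <;> field_simp <;> ring

lemma minFace_isExposed {E : Type*} [NormedAddCommGroup E] [NormedSpace ℝ E] [FiniteDimensional ℝ E]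
    {P S : Set E} (hS : S.Finite) (hPS : P = convexHull ℝ S) (hP : Convex ℝ P) {z : E}
    (hz : z ∈ P) : IsExposed ℝ P (minFace P hP z hz) := by
  intro _
  set G := minFace P hP z hz with hG
  have hSP : S ⊆ P := hPS ▸ subset_convexHull ℝ S
  set L := linDir P hP z hz with hL
  have hKG : convexHull ℝ (S \ G) ⊆ P \ G :=
    convexHull_min (sdiff_subset_sdiff_left hSP) ((minFace_isExtreme hP hz).convex_sdiff hP)
  have hAc : IsClosed {x : E | x - z ∈ L} :=
    (Submodule.closed_of_finiteDimensional L).preimage (by fun_prop : Continuous fun x : E => x - z)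
  have hAconv : Convex ℝ {x : E | x - z ∈ L} := by
    intro x hx y hy a b ha hb hab
    have : a • x + b • y - z = a • (x - z) + b • (y - z) := by
      obtain rfl : a = 1 - b := by linarith
      module
    simp only [mem_setOf_eq] at hx hy ⊢
    rw [this]
    exact add_mem (Submodule.smul_mem _ _ hx) (Submodule.smul_mem _ _ hy)
  obtain ⟨l, u, v, h1, huv, h2⟩ := geometric_hahn_banach_compact_closed
    (convex_convexHull ℝ (S \ G)) ((hS.subset sdiff_subset).isCompact_convexHull ℝ) hAconv hAc
    (by
      rw [Set.disjoint_left]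
      intro x hx hxA
      exact (hKG hx).2 ⟨(hKG hx).1, hxA⟩)
  have hl0 : ∀ y ∈ L, l y = 0 := by
    intro y hy
    by_contra hne
    have := h2 (z + ((v - l z) / l y) • y) (by
      simpa using Submodule.smul_mem L _ hy)
    simp [hne] at this
  have hlG : ∀ w ∈ G, l w = l z := by
    intro w hw
    have := hl0 _ hw.2
    rw [map_sub] at this
    linarith
  have hlz : v < l z := h2 z (by simp)
  have key : P ⊆ {w | w ∈ G ∨ l w < l z} := by
    rw [hPS]
    apply convexHull_min
    · intro s hs
      by_cases h : s ∈ G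
      · exact Or.inl h
      · right
        have := h1 s (subset_convexHull ℝ _ ⟨hs, h⟩)
        linarith
    · rw [convex_iff_forall_pos]
      have hle : ∀ w, w ∈ G ∨ l w < l z → l w ≤ l z := by
        rintro w (h | h)
        · exact (hlG w h).le
        · exact h.le
      intro x hx y hy a b ha hb hab
      have hx' := hle x hx
      have hy' := hle y hy
      have hb' : b = 1 - a := by linarith
      rcases hx with hx | hx
      · rcases hy with hy | hy
        · exact Or.inl (minFace_convex hP hz hx hy ha.le hb.le hab)
        · right
          simp only [map_add, map_smul, smul_eq_mul]
          have q1 := mul_le_mul_of_nonneg_left hx' ha.le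
          have q2 := mul_lt_mul_of_pos_left hy hb
          have q3 : a * l z + b * l z = l z := by rw [← add_mul, hab, one_mul]
          linarith
      · right
        simp only [map_add, map_smul, smul_eq_mul]
        have q1 := mul_lt_mul_of_pos_left hx ha
        have q2 := mul_le_mul_of_nonneg_left hy' hb.le
        have q3 : a * l z + b * l z = l z := by rw [← add_mul, hab, one_mul]
        linarith
  refine ⟨l, ?_⟩
  ext w
  constructor
  · intro hw
    refine ⟨hw.1, fun y hy => ?_⟩
    rw [hlG w hw]
    rcases key hy with h | h
    · exact (hlG y h).le
    · exact h.le
  · rintro ⟨hw, hmax⟩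
    rcases key hw with h | h
    · exact h
    · exact absurd (hmax z hz) (not_le.mpr h)

lemma isExposed_of_isExtreme {E : Type*} [NormedAddCommGroup E] [NormedSpace ℝ E]
    [FiniteDimensional ℝ E] {P S : Set E} (hS : S.Finite) (hPS : P = convexHull ℝ S)
    {F : Set E} (hF : IsExtreme ℝ P F) (hFc : Convex ℝ F) : IsExposed ℝ P F := by
  rcases F.eq_empty_or_nonempty with rfl | ⟨z₀, hz₀⟩
  · intro h
    simp at h
  have hP : Convex ℝ P := hPS ▸ convex_convexHull ℝ S
  have hFP : F ⊆ P := hF.1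
  obtain ⟨_, ⟨⟨z, hzF⟩, rfl⟩, hmax⟩ := set_has_maximal_iff_noetherian.mpr
    (inferInstance : IsNoetherian ℝ E)
    (Set.range fun z : F => linDir P hP z.1 (hFP z.2)) ⟨_, ⟨z₀, hz₀⟩, rfl⟩
  have : F = minFace P hP z (hFP hzF) := by
    apply Subset.antisymm
    · intro w hw
      refine ⟨hFP hw, ?_⟩
      set m : E := (1/2 : ℝ) • z + (1/2 : ℝ) • w with hm
      have hmF : m ∈ F := hFc hzF hw (by norm_num) (by norm_num) (by norm_num)
      have hle : linDir P hP z (hFP hzF) ≤ linDir P hP m (hFP hmF) := by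
        rintro x ⟨e, he, hx⟩
        refine ⟨e / 2, by positivity, fun t ht => ?_⟩
        have h2 : |2 * t| ≤ e := by rw [abs_mul]; norm_num; linarith
        have := hP (hx _ h2) (hFP hw) (a := 1/2) (b := 1/2) (by norm_num) (by norm_num) (by norm_num)
        convert this using 1
        rw [hm]
        module
      have hnlt := hmax _ ⟨⟨m, hmF⟩, rfl⟩
      have hge : linDir P hP m (hFP hmF) ≤ linDir P hP z (hFP hzF) := by
        by_contra hcon
        exact hnlt (lt_of_le_not_ge hle hcon)
      apply hge
      refine mem_linDir_of hP _ (e := 1/2) (d := 1/2) (by norm_num) (by norm_num) ?_ ?_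
      · convert hFP hw using 1
        rw [hm]; module
      · convert hFP hzF using 1
        rw [hm]; module
    · rintro w ⟨hw, t, ht, htP⟩
      exact hF.2 hw (htP (-t) (by rw [abs_neg, abs_of_pos ht])) hzF (mem_openSegment_ext z w ht)
  rw [this]
  exact minFace_isExposed hS hPS hP _

/-- Part b) of Margot's theorem.  Given polytopes `P₁ ⊆ ℝ^{n₁} × ℝ^{d₁}`,
`P₂ ⊆ ℝ^{n₂} × ℝ^{d₂}`, a partial composition function
`f : ℝ^{n₁} × ℝ^{n₂} → ℝⁿ ∪ {∞}` (modeled as `Option`-valued), the polytope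
`P₃ = conv{(γ,α,β) : α ∈ vert p_α(P₁), β ∈ vert p_β(P₂), γ = f(α,β) ≠ ∞}` and
`Q = {(γ,α,x,β,y) : (α,x) ∈ P₁, (β,y) ∈ P₂, (γ,α,β) ∈ P₃}`:
if `(P₁, p_α)` and `(P₂, p_β)` have the PF-property and every vertex of `P₃` is projected by
`p_γ` to a vertex of `p_γ(P₃)`, then `(Q, p_{γ,α,β})` has the PF-property. -/
theorem margot_composition_pf {n n₁ d₁ n₂ d₂ : ℕ}
    (P₁ : Set ((Fin n₁ → ℝ) × (Fin d₁ → ℝ)))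
    (P₂ : Set ((Fin n₂ → ℝ) × (Fin d₂ → ℝ)))
    (f : (Fin n₁ → ℝ) × (Fin n₂ → ℝ) → Option (Fin n → ℝ))
    (P₃ : Set ((Fin n → ℝ) × (Fin n₁ → ℝ) × (Fin n₂ → ℝ)))
    (Q : Set ((Fin n → ℝ) × ((Fin n₁ → ℝ) × (Fin d₁ → ℝ)) × ((Fin n₂ → ℝ) × (Fin d₂ → ℝ))))
    (hP₁ : ∃ s : Set ((Fin n₁ → ℝ) × (Fin d₁ → ℝ)), s.Finite ∧ P₁ = convexHull ℝ s)
    (hP₂ : ∃ s : Set ((Fin n₂ → ℝ) × (Fin d₂ → ℝ)), s.Finite ∧ P₂ = convexHull ℝ s)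
    (hP₃ : P₃ = convexHull ℝ
      {q | q.2.1 ∈ Set.extremePoints ℝ (Prod.fst '' P₁) ∧
           q.2.2 ∈ Set.extremePoints ℝ (Prod.fst '' P₂) ∧
           f (q.2.1, q.2.2) = some q.1})
    (hQ : Q = {q | q.2.1 ∈ P₁ ∧ q.2.2 ∈ P₂ ∧ (q.1, q.2.1.1, q.2.2.1) ∈ P₃})
    (hPF₁ : ∀ F : Set ((Fin n₁ → ℝ) × (Fin d₁ → ℝ)),
        IsExposed ℝ P₁ F → IsExposed ℝ (Prod.fst '' P₁) (Prod.fst '' F))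
    (hPF₂ : ∀ F : Set ((Fin n₂ → ℝ) × (Fin d₂ → ℝ)),
        IsExposed ℝ P₂ F → IsExposed ℝ (Prod.fst '' P₂) (Prod.fst '' F))
    (hvert₃ : ∀ v ∈ Set.extremePoints ℝ P₃,
        v.1 ∈ Set.extremePoints ℝ (Prod.fst '' P₃)) :
    ∀ F : Set ((Fin n → ℝ) × ((Fin n₁ → ℝ) × (Fin d₁ → ℝ)) × ((Fin n₂ → ℝ) × (Fin d₂ → ℝ))),
      IsExposed ℝ Q F →
        IsExposed ℝ ((fun q => (q.1, q.2.1.1, q.2.2.1)) '' Q)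
          ((fun q => (q.1, q.2.1.1, q.2.2.1)) '' F) := by
  intro F hF
  obtain ⟨s₁, hs₁, hP₁s⟩ := hP₁
  obtain ⟨s₂, hs₂, hP₂s⟩ := hP₂
  have hc₁ : Convex ℝ P₁ := hP₁s ▸ convex_convexHull ℝ _
  have hc₂ : Convex ℝ P₂ := hP₂s ▸ convex_convexHull ℝ _
  have hc₃ : Convex ℝ P₃ := hP₃ ▸ convex_convexHull ℝ _
  have hi₁ : Convex ℝ (Prod.fst '' P₁) := hc₁.linear_image (LinearMap.fst ℝ _ _)
  have hi₂ : Convex ℝ (Prod.fst '' P₂) := hc₂.linear_image (LinearMap.fst ℝ _ _)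
  have hfin₁ : (Set.extremePoints ℝ (Prod.fst '' P₁)).Finite := by
    have : Prod.fst '' P₁ = convexHull ℝ (Prod.fst '' s₁) := by
      rw [hP₁s]
      exact (LinearMap.fst ℝ (Fin n₁ → ℝ) (Fin d₁ → ℝ)).image_convexHull s₁
    rw [this]
    exact (hs₁.image _).subset extremePoints_convexHull_subset
  have hfin₂ : (Set.extremePoints ℝ (Prod.fst '' P₂)).Finite := by
    have : Prod.fst '' P₂ = convexHull ℝ (Prod.fst '' s₂) := by
      rw [hP₂s]
      exact (LinearMap.fst ℝ (Fin n₂ → ℝ) (Fin d₂ → ℝ)).image_convexHull s₂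
    rw [this]
    exact (hs₂.image _).subset extremePoints_convexHull_subset
  have hfin₃ : {q : (Fin n → ℝ) × (Fin n₁ → ℝ) × (Fin n₂ → ℝ) |
      q.2.1 ∈ Set.extremePoints ℝ (Prod.fst '' P₁) ∧
           q.2.2 ∈ Set.extremePoints ℝ (Prod.fst '' P₂) ∧
           f (q.2.1, q.2.2) = some q.1}.Finite := by
    refine ((hfin₁.prod hfin₂).image fun r => ((f r).getD 0, r)).subset ?_
    rintro ⟨g, a, b⟩ ⟨h1, h2, h3⟩
    refine ⟨(a, b), ⟨h1, h2⟩, ?_⟩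
    simp only at h3
    simp [h3]
  have hsub : ∀ q ∈ P₃, q.2.1 ∈ Prod.fst '' P₁ ∧ q.2.2 ∈ Prod.fst '' P₂ := by
    have : P₃ ⊆ {q | q.2.1 ∈ Prod.fst '' P₁ ∧ q.2.2 ∈ Prod.fst '' P₂} := by
      rw [hP₃]
      refine convexHull_min (fun q hq => ⟨hq.1.1, hq.2.1.1⟩) ?_
      intro x hx y hy a b ha hb hab
      exact ⟨hi₁ hx.1 hy.1 ha hb hab, hi₂ hx.2 hy.2 ha hb hab⟩
    exact this
  have hQP : (fun q : (Fin n → ℝ) × ((Fin n₁ → ℝ) × (Fin d₁ → ℝ)) × ((Fin n₂ → ℝ) × (Fin d₂ → ℝ)) =>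
      (q.1, q.2.1.1, q.2.2.1)) '' Q = P₃ := by
    rw [hQ]
    apply Subset.antisymm
    · rintro _ ⟨q, hq, rfl⟩
      exact hq.2.2
    · rintro ⟨g, a, b⟩ hq
      obtain ⟨⟨⟨a', x⟩, hx, rfl⟩, ⟨⟨b', y⟩, hy, rfl⟩⟩ := hsub _ hq
      exact ⟨(g, (_, x), (_, y)), ⟨hx, hy, hq⟩, rfl⟩
  have hQc : Convex ℝ Q := by
    rw [hQ]
    intro x hx y hy a b ha hb hab
    exact ⟨hc₁ hx.1 hy.1 ha hb hab, hc₂ hx.2.1 hy.2.1 ha hb hab, hc₃ hx.2.2 hy.2.2 ha hb hab⟩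
  have hFc : Convex ℝ F := hF.convex hQc
  have hFe : IsExtreme ℝ Q F := hF.isExtreme
  rw [hQP]
  refine isExposed_of_isExtreme hfin₃ hP₃ ⟨?_, ?_⟩ ?_
  · rw [← hQP]
    exact image_mono hFe.1
  · rintro u hu v hv _ ⟨⟨g, z₁, z₂⟩, hq, rfl⟩ hseg
    have hqQ := hFe.1 hq
    rw [hQ] at hqQ
    obtain ⟨hz₁, hz₂, hz₃⟩ := hqQ
    simp only at hz₁ hz₂ hz₃ hseg
    have e₁ := hPF₁ _ (minFace_isExposed hs₁ hP₁s hc₁ hz₁)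
    have e₂ := hPF₂ _ (minFace_isExposed hs₂ hP₂s hc₂ hz₂)
    have m₁ := e₁.isExtreme.2 (hsub u hu).1 (hsub v hv).1 ⟨z₁, self_mem_minFace hc₁ hz₁, rfl⟩ (by
      obtain ⟨a, b, ha, hb, hab, h⟩ := hseg
      exact ⟨a, b, ha, hb, hab, congrArg (fun q => q.2.1) h⟩)
    have m₂ := e₂.isExtreme.2 (hsub u hu).2 (hsub v hv).2 ⟨z₂, self_mem_minFace hc₂ hz₂, rfl⟩ (by
      obtain ⟨a, b, ha, hb, hab, h⟩ := hseg
      exact ⟨a, b, ha, hb, hab, congrArg (fun q => q.2.2) h⟩)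
    have m₃ := (minFace_isExtreme hc₃ hz₃).2 hu hv (self_mem_minFace hc₃ hz₃) hseg
    obtain ⟨w₁, ⟨hw₁, t₁, ht₁, hx₁⟩, hwu₁⟩ := m₁
    obtain ⟨w₂, ⟨hw₂, t₂, ht₂, hx₂⟩, hwu₂⟩ := m₂
    obtain ⟨_, t₃, ht₃, hx₃⟩ := m₃
    have hu' : u = (u.1, w₁.1, w₂.1) := by rw [hwu₁, hwu₂]
    refine ⟨(u.1, w₁, w₂), ?_, hu'.symm⟩
    obtain ⟨t, ht, h1, h2, h3⟩ : ∃ t : ℝ, 0 < t ∧ t ≤ t₁ ∧ t ≤ t₂ ∧ t ≤ t₃ :=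
      ⟨min t₁ (min t₂ t₃), by positivity, min_le_left _ _, (min_le_right _ _).trans (min_le_left _ _),
        (min_le_right _ _).trans (min_le_right _ _)⟩
    have habs : |-t| = t := by rw [abs_neg, abs_of_pos ht]
    refine hFe.2 ?_ ?_ hq (mem_openSegment_ext _ _ ht)
    · rw [hQ]
      exact ⟨hw₁, hw₂, hu' ▸ hu⟩
    · rw [hQ]
      refine ⟨hx₁ (-t) (by rw [habs]; exact h1), hx₂ (-t) (by rw [habs]; exact h2), ?_⟩
      have := hx₃ (-t) (by rw [habs]; exact h3)
      rw [hu'] at this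
      exact this
  · intro x hx y hy a b ha hb hab
    obtain ⟨x, hx, rfl⟩ := hx
    obtain ⟨y, hy, rfl⟩ := hy
    exact ⟨_, hFc hx hy ha hb hab, rfl⟩
end

section
/- For a polytope P ⊆ ℝⁿ × ℝᵈ and the projection p_x : ℝⁿ × ℝᵈ → ℝⁿ onto the first n coordinates, the pair (P, p_x) has the PF-property if and only if P is an affinely generated polyhedral relation of type (n, d), i.e. there exist finitely many affine maps ρ₁, …, ρ_t : ℝⁿ → ℝᵈ such that for every x ∈ p_x(P) one has P ∩ p_x⁻¹(x) = conv{(x, ρ_j(x)) : 1 ≤ j ≤ t}. -/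
open Set

/-- graph or vertical direction -/
lemma graph_or_vertical {n d : ℕ} (s : Finset ((Fin n → ℝ) × (Fin d → ℝ))) :
    (∃ ρ : (Fin n → ℝ) →ᵃ[ℝ] (Fin d → ℝ), ∀ q ∈ s, q.2 = ρ q.1) ∨
    ∃ w : Fin d → ℝ, w ≠ 0 ∧ ((0 : Fin n → ℝ), w) ∈
      vectorSpan ℝ (s : Set ((Fin n → ℝ) × (Fin d → ℝ))) := by
  rcases s.eq_empty_or_nonempty with rfl | ⟨q0, hq0⟩
  · left; exact ⟨0, by simp⟩
  set V := vectorSpan ℝ (s : Set ((Fin n → ℝ) × (Fin d → ℝ))) with hV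
  by_cases h : ∃ w : Fin d → ℝ, w ≠ 0 ∧ ((0 : Fin n → ℝ), w) ∈ V
  · right; exact h
  left
  push Not at h
  let f : V →ₗ[ℝ] (Fin n → ℝ) := (LinearMap.fst ℝ _ _).comp V.subtype
  have hf : LinearMap.ker f = ⊥ := by
    rw [LinearMap.ker_eq_bot']
    rintro ⟨⟨x, w⟩, hv⟩ hx
    have hx : x = 0 := hx
    subst hx
    by_contra hne
    exact h w (by rintro rfl; exact hne rfl) hv
  obtain ⟨g, hg⟩ := LinearMap.exists_leftInverse_of_injective f hf
  let φ : (Fin n → ℝ) →ₗ[ℝ] (Fin d → ℝ) := (LinearMap.snd ℝ _ _).comp (V.subtype.comp g)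
  refine ⟨φ.toAffineMap + AffineMap.const ℝ _ (q0.2 - φ q0.1), fun q hq => ?_⟩
  have hm : q - q0 ∈ V := vsub_mem_vectorSpan ℝ hq hq0
  have h1 : g (q.1 - q0.1) = ⟨q - q0, hm⟩ := by
    have := LinearMap.congr_fun hg ⟨q - q0, hm⟩
    simpa [f] using this
  have h2 : φ (q.1 - q0.1) = q.2 - q0.2 := by
    simp only [φ, LinearMap.comp_apply, h1]; rfl
  rw [map_sub] at h2
  simp only [AffineMap.coe_add, Pi.add_apply, LinearMap.coe_toAffineMap, AffineMap.const_apply]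
  have : q.2 = (q.2 - q0.2) + q0.2 := by abel
  rw [this, ← h2]; abel

lemma face_graph {n d : ℕ} (s : Finset ((Fin n → ℝ) × (Fin d → ℝ)))
    (a : (Fin n → ℝ) →L[ℝ] ℝ) (b : (Fin d → ℝ) →L[ℝ] ℝ) (M : ℝ)
    (ρ : (Fin n → ℝ) →ᵃ[ℝ] (Fin d → ℝ))
    (hM : ∀ q ∈ s, a q.1 + b q.2 ≤ M)
    (hρ : ∀ q ∈ s, a q.1 + b q.2 = M → q.2 = ρ q.1) :
    ∀ q ∈ convexHull ℝ (s : Set ((Fin n → ℝ) × (Fin d → ℝ))),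
      a q.1 + b q.2 ≤ M ∧ (a q.1 + b q.2 = M → q.2 = ρ q.1) := by
  have hc : Convex ℝ {q : (Fin n → ℝ) × (Fin d → ℝ) |
      a q.1 + b q.2 ≤ M ∧ (a q.1 + b q.2 = M → q.2 = ρ q.1)} := by
    rw [convex_iff_forall_pos]
    rintro p ⟨hp1, hp2⟩ q ⟨hq1, hq2⟩ α β hα hβ hαβ
    have hlin : a (α • p + β • q).1 + b (α • p + β • q).2 =
        α * (a p.1 + b p.2) + β * (a q.1 + b q.2) := by
      simp; ring
    refine ⟨?_, fun h => ?_⟩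
    · rw [hlin]
      obtain rfl : β = 1 - α := by linarith
      nlinarith
    · rw [hlin] at h
      obtain rfl : β = 1 - α := by linarith
      have h1 : a p.1 + b p.2 = M := by
        by_contra hne
        have : a p.1 + b p.2 < M := lt_of_le_of_ne hp1 hne
        nlinarith
      have h2 : a q.1 + b q.2 = M := by
        by_contra hne
        have : a q.1 + b q.2 < M := lt_of_le_of_ne hq1 hne
        nlinarith
      have := Convex.combo_affine_apply (f := ρ) (x := p.1) (y := q.1) hαβ
      simp only [Prod.fst_add, Prod.snd_add, Prod.smul_fst, Prod.smul_snd]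
      rw [this, hp2 h1, hq2 h2]
  exact fun q hq => convexHull_min (t := {q : (Fin n → ℝ) × (Fin d → ℝ) |
      a q.1 + b q.2 ≤ M ∧ (a q.1 + b q.2 = M → q.2 = ρ q.1)})
    (fun q hq => And.intro (hM q hq) (hρ q hq)) hc hq

/-- supporting functional over the barycenter -/
lemma exists_support {n d : ℕ} (s : Finset ((Fin n → ℝ) × (Fin d → ℝ))) (hs : s.Nonempty)
    (b : (Fin d → ℝ) →L[ℝ] ℝ) :
    ∃ (a : (Fin n → ℝ) →L[ℝ] ℝ),
      ∃ p ∈ convexHull ℝ (s : Set ((Fin n → ℝ) × (Fin d → ℝ))),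
        p.1 = ((s.card : ℝ)⁻¹) • ∑ v ∈ s, v.1 ∧ ∀ v ∈ s, a v.1 + b v.2 ≤ a p.1 + b p.2 := by
  have hN : (0:ℝ) < s.card := by exact_mod_cast hs.card_pos
  set P := convexHull ℝ (s : Set ((Fin n → ℝ) × (Fin d → ℝ))) with hPdef
  set x0 := ((s.card : ℝ)⁻¹) • ∑ v ∈ s, v.1 with hx0
  have hPc : IsCompact P := s.finite_toSet.isCompact_convexHull ℝ
  have hbar : ((s.card : ℝ)⁻¹) • ∑ v ∈ s, v ∈ P := by
    rw [Finset.smul_sum]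
    refine (convex_convexHull ℝ _).sum_mem (fun _ _ => by positivity) ?_
      (fun v hv => subset_convexHull ℝ _ hv)
    simp [hN.ne']
  have hbar1 : (((s.card : ℝ)⁻¹) • ∑ v ∈ s, v).1 = x0 := by
    simp [hx0, Prod.fst_sum]
  have hfc : IsCompact (P ∩ {q | q.1 = x0}) :=
    hPc.inter_right (isClosed_eq continuous_fst continuous_const)
  obtain ⟨p, ⟨hpP, hpx⟩, hpmax⟩ := hfc.exists_isMaxOn ⟨_, hbar, hbar1⟩
    (f := fun q => b q.2) (by fun_prop)
  have hpx : p.1 = x0 := hpx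
  -- the space of slopes
  let T : ((Fin n → ℝ) →L[ℝ] ℝ) →ₗ[ℝ] (s → ℝ) :=
    { toFun := fun a v => a (v.1.1 - x0)
      map_add' := by intros; ext; simp
      map_smul' := by intros; ext; simp }
  let Z := LinearMap.range T
  have hZc : IsClosed (Z : Set (s → ℝ)) := Submodule.closed_of_finiteDimensional Z
  have hZsum : ∀ z ∈ Z, ∑ v, z v = 0 := by
    rintro _ ⟨a, rfl⟩
    change ∑ v : s, a (v.1.1 - x0) = 0
    rw [← map_sum]
    have : ∑ v : s, (v.1.1 - x0) = 0 := by
      rw [Finset.sum_sub_distrib, Finset.sum_coe_sort s (fun v => v.1)]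
      simp only [Finset.sum_const, Finset.card_univ, Fintype.card_coe]
      rw [hx0, ← Nat.cast_smul_eq_nsmul ℝ, smul_smul, mul_inv_cancel₀ hN.ne', one_smul, sub_self]
    rw [this, map_zero]
  let c : s → ℝ := fun v => b v.1.2
  obtain ⟨M0, hM0⟩ : ∃ M0, ∀ v, c v ≤ M0 := by
    obtain ⟨M0, h⟩ := (Set.finite_range c).bddAbove
    exact ⟨M0, fun v => h ⟨v, rfl⟩⟩
  let K : Set ((s → ℝ) × ℝ) := {q | q.1 ∈ Z ∧ (∀ v, c v + q.1 v ≤ q.2) ∧ q.2 ≤ M0}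
  have hKclosed : IsClosed K := by
    refine (hZc.preimage continuous_fst).inter (IsClosed.inter ?_ ?_)
    · change IsClosed {q : (s → ℝ) × ℝ | ∀ v, c v + q.1 v ≤ q.2}
      simp only [ofPred_forall]
      exact isClosed_iInter fun v => isClosed_le (by fun_prop) (by fun_prop)
    · exact isClosed_le continuous_snd continuous_const
  have hKbox : K ⊆ Icc ((fun _ => -∑ v, (M0 - c v)), ((s.card : ℝ)⁻¹) * ∑ v, c v)
      ((fun v => M0 - c v), M0) := by
    rintro ⟨z, m⟩ ⟨hz, hzm, hm⟩
    have hsum := hZsum z hz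
    simp only at hz hzm hm hsum
    refine ⟨⟨fun v => ?_, ?_⟩, ⟨fun v => ?_, hm⟩⟩
    · have h1 : ∑ u, (M0 - c u) = ∑ u, (M0 - c u - z u) := by
        rw [Finset.sum_sub_distrib (f := fun u => M0 - c u), hsum, sub_zero]
      have h2 : M0 - c v - z v ≤ ∑ u, (M0 - c u - z u) :=
        Finset.single_le_sum (f := fun u => M0 - c u - z u)
          (fun u _ => by linarith [hzm u]) (Finset.mem_univ v)
      have := hM0 v
      change -∑ v, (M0 - c v) ≤ z v
      have h3 : ∑ u, (M0 - c u) = ∑ u, (M0 - c u) := rfl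
      -- use total sum
      have h4 : ∑ u, (M0 - c u - z u) ≥ 0 :=
        Finset.sum_nonneg (fun u _ => by linarith [hzm u])
      have h5 : z v = -∑ u ∈ Finset.univ.erase v, z u := by
        have := Finset.add_sum_erase Finset.univ z (Finset.mem_univ v)
        linarith
      rw [h5, neg_le_neg_iff]
      calc ∑ u ∈ Finset.univ.erase v, z u ≤ ∑ u ∈ Finset.univ.erase v, (M0 - c u) :=
            Finset.sum_le_sum fun u _ => by linarith [hzm u]
        _ ≤ ∑ u, (M0 - c u) := Finset.sum_le_sum_of_subset_of_nonneg (Finset.subset_univ _)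
            (fun u _ _ => by linarith [hM0 u])
    · change ((s.card : ℝ)⁻¹) * ∑ v, c v ≤ m
      have h1 : ∑ v, (c v + z v) ≤ ∑ v : s, m := Finset.sum_le_sum fun u _ => hzm u
      rw [Finset.sum_add_distrib, hsum, add_zero] at h1
      simp only [Finset.sum_const, Finset.card_univ, Fintype.card_coe, nsmul_eq_mul] at h1
      rw [inv_mul_le_iff₀ hN]; exact h1
    · change z v ≤ M0 - c v
      linarith [hzm v]
  have hKc : IsCompact K := isCompact_Icc.of_isClosed_subset hKclosed hKbox
  obtain ⟨⟨z, m⟩, ⟨hz, hzm, hm⟩, hmin⟩ := hKc.exists_isMinOn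
    ⟨(0, M0), Z.zero_mem, by simpa using hM0, le_rfl⟩ (f := Prod.snd) (by fun_prop)
  obtain ⟨a, rfl⟩ := hz
  have hmle : m ≤ b p.2 := by
    by_contra hlt
    push Not at hlt
    let L : ((Fin n → ℝ) × (Fin d → ℝ)) →L[ℝ] ((Fin n → ℝ) × ℝ) :=
      (ContinuousLinearMap.fst ℝ _ _).prod (b.comp (ContinuousLinearMap.snd ℝ _ _))
    have hLc : IsClosed (L '' P) := (hPc.image L.continuous).isClosed
    have hLconv : Convex ℝ (L '' P) := (convex_convexHull ℝ _).is_linear_image L.toLinearMap.isLinear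
    have hnot : (x0, m) ∉ L '' P := by
      rintro ⟨q, hq, hqe⟩
      have h1 : q.1 = x0 := congrArg Prod.fst hqe
      have h2 : b q.2 = m := congrArg Prod.snd hqe
      have := hpmax ⟨hq, h1⟩
      simp only [mem_ofPred_eq] at this
      linarith
    obtain ⟨f, u, hf1, hf2⟩ := geometric_hahn_banach_closed_point hLconv hLc hnot
    let a1 : (Fin n → ℝ) →L[ℝ] ℝ := f.comp (ContinuousLinearMap.inl ℝ _ _)
    set γ : ℝ := f (0, 1) with hγ
    have hdec : ∀ x h, f (x, h) = a1 x + h * γ := by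
      intro x h
      have : (x, h) = (x, (0:ℝ)) + h • ((0 : Fin n → ℝ), (1:ℝ)) := by simp
      rw [this, map_add, map_smul]; rfl
    have hall : ∀ q ∈ P, a1 q.1 + b q.2 * γ < a1 x0 + m * γ := by
      intro q hq
      have h1 := hf1 (L q) ⟨q, hq, rfl⟩
      have h2 : f (L q) = a1 q.1 + b q.2 * γ := hdec _ _
      rw [hdec] at hf2
      linarith
    have hγpos : 0 < γ := by
      have := hall p hpP
      rw [hpx] at this
      by_contra hneg
      push Not at hneg
      nlinarith
    -- new slope
    have hstrict : ∀ v : s, c v + T (γ⁻¹ • a1) v < m := by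
      intro v
      have h1 := hall v.1 (subset_convexHull ℝ _ v.2)
      change b v.1.2 + (γ⁻¹ • a1) (v.1.1 - x0) < m
      rw [smul_apply, smul_eq_mul, map_sub]
      have h2 : γ⁻¹ * (a1 v.1.1 - a1 x0) < m - b v.1.2 := by
        rw [inv_mul_lt_iff₀ hγpos]; nlinarith
      linarith
    have : Nonempty s := hs.to_subtype
    obtain ⟨v1, hv1⟩ := Finite.exists_max (fun v : s => c v + T (γ⁻¹ • a1) v)
    have hm1 := hstrict v1
    have := hmin (show (T (γ⁻¹ • a1), c v1 + T (γ⁻¹ • a1) v1) ∈ K from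
      ⟨⟨_, rfl⟩, hv1, by simp only at hm ⊢; linarith⟩)
    simp only [mem_ofPred_eq] at this
    linarith
  refine ⟨a, p, hpP, hpx, fun v hv => ?_⟩
  have h1 : b v.2 + a (v.1 - x0) ≤ m := hzm ⟨v, hv⟩
  rw [map_sub] at h1
  rw [hpx]
  linarith

lemma exists_full_face {n d : ℕ} (s : Finset ((Fin n → ℝ) × (Fin d → ℝ))) (hs : s.Nonempty)
    (P : Set ((Fin n → ℝ) × (Fin d → ℝ)))
    (hP : P = convexHull ℝ (s : Set ((Fin n → ℝ) × (Fin d → ℝ))))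
    (hPF : ∀ F : Set ((Fin n → ℝ) × (Fin d → ℝ)),
        IsExposed ℝ P F → IsExposed ℝ (Prod.fst '' P) (Prod.fst '' F))
    (b : (Fin d → ℝ) →L[ℝ] ℝ) :
    ∃ (a : (Fin n → ℝ) →L[ℝ] ℝ) (M : ℝ), (∀ v ∈ s, a v.1 + b v.2 ≤ M) ∧
      ∀ x ∈ Prod.fst '' P, ∃ q ∈ P, q.1 = x ∧ a q.1 + b q.2 = M := by
  obtain ⟨a, p, hp, hpx, hmax⟩ := exists_support s hs b
  rw [← hP] at hp
  have hN : (0:ℝ) < s.card := by exact_mod_cast hs.card_pos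
  refine ⟨a, a p.1 + b p.2, hmax, ?_⟩
  let l : ((Fin n → ℝ) × (Fin d → ℝ)) →L[ℝ] ℝ := a.coprod b
  have hl : ∀ q, l q = a q.1 + b q.2 := fun q => rfl
  have hmaxP : ∀ q ∈ P, l q ≤ l p := by
    intro q hq
    rw [hP] at hq
    exact convexHull_min (t := {q | l q ≤ l p}) (fun v hv => hmax v hv)
      (convex_halfSpace_le l.toLinearMap.isLinear _) hq
  have hE : IsExposed ℝ P {q ∈ P | ∀ y ∈ P, l y ≤ l q} := fun _ => ⟨l, rfl⟩
  have hpF : p ∈ {q ∈ P | ∀ y ∈ P, l y ≤ l q} := ⟨hp, hmaxP⟩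
  obtain ⟨k, hk⟩ := hPF _ hE ⟨p.1, p, hpF, rfl⟩
  have hpk : p.1 ∈ {x ∈ Prod.fst '' P | ∀ y ∈ Prod.fst '' P, k y ≤ k x} := by
    rw [← hk]; exact ⟨p, hpF, rfl⟩
  have hsP : ∀ v ∈ s, v ∈ P := fun v hv => by rw [hP]; exact subset_convexHull ℝ _ hv
  have hle : ∀ v ∈ s, k v.1 ≤ k p.1 := fun v hv => hpk.2 _ ⟨v, hsP v hv, rfl⟩
  have hsum : ∑ v ∈ s, (k p.1 - k v.1) = 0 := by
    rw [Finset.sum_sub_distrib]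
    conv_lhs => rw [hpx]
    simp only [Finset.sum_const, nsmul_eq_mul, map_smul, map_sum, smul_eq_mul]
    rw [← mul_assoc, mul_inv_cancel₀ hN.ne', one_mul, sub_self]
  have heq : ∀ v ∈ s, k v.1 = k p.1 := by
    intro v hv
    have := (Finset.sum_eq_zero_iff_of_nonneg
      (fun v hv => sub_nonneg.2 (hle v hv))).1 hsum v hv
    linarith
  have heqP : ∀ q ∈ P, k q.1 = k p.1 := by
    intro q hq
    rw [hP] at hq
    exact convexHull_min (t := {q : (Fin n → ℝ) × (Fin d → ℝ) | k q.1 = k p.1})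
      (fun v hv => heq v hv)
      (convex_hyperplane (f := k.comp (ContinuousLinearMap.fst ℝ _ _))
        (k.comp (ContinuousLinearMap.fst ℝ _ _)).toLinearMap.isLinear _) hq
  rintro x ⟨q, hq, rfl⟩
  have : q.1 ∈ Prod.fst '' {q ∈ P | ∀ y ∈ P, l y ≤ l q} := by
    rw [hk]
    refine ⟨⟨q, hq, rfl⟩, ?_⟩
    rintro _ ⟨r, hr, rfl⟩
    rw [heqP q hq, heqP r hr]
  obtain ⟨r, ⟨hr, hr2⟩, hrq⟩ := this
  exact ⟨r, hr, hrq, le_antisymm (hmaxP r hr) (hr2 p hp)⟩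

lemma dense_generic {d : ℕ} {ι : Type*} [Finite ι] (w : ι → (Fin d → ℝ)) (hw : ∀ i, w i ≠ 0) :
    Dense {b : (Fin d → ℝ) →L[ℝ] ℝ | ∀ i, b (w i) ≠ 0} := by
  rw [ofPred_forall]
  refine dense_iInter_of_isOpen (fun i => ?_) (fun i => ?_)
  · exact isOpen_ne_fun (by fun_prop) continuous_const
  · obtain ⟨b0, hb0⟩ := SeparatingDual.exists_ne_zero (R := ℝ) (hw i)
    intro b
    by_cases hb : b (w i) = 0
    · refine mem_closure_of_tendsto (f := fun k : ℕ => b + (1 / ((k : ℝ) + 1)) • b0)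
        (b := Filter.atTop) ?_ (Filter.Eventually.of_forall fun k => ?_)
      · have := (tendsto_one_div_add_atTop_nhds_zero_nat (𝕜 := ℝ)).smul_const b0
        simpa using this.const_add b
      · have : (1 / ((k : ℝ) + 1)) ≠ 0 := by positivity
        simp only [mem_ofPred_eq, add_apply, hb,
          smul_apply, zero_add, smul_eq_mul]
        exact mul_ne_zero this hb0
    · exact subset_closure hb

lemma generated_of_pf {n d : ℕ} (s : Finset ((Fin n → ℝ) × (Fin d → ℝ))) (hs : s.Nonempty)
    (P : Set ((Fin n → ℝ) × (Fin d → ℝ)))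
    (hP : P = convexHull ℝ (s : Set ((Fin n → ℝ) × (Fin d → ℝ))))
    (hPF : ∀ F : Set ((Fin n → ℝ) × (Fin d → ℝ)),
        IsExposed ℝ P F → IsExposed ℝ (Prod.fst '' P) (Prod.fst '' F)) :
    ∃ (t : ℕ) (ρ : Fin t → ((Fin n → ℝ) →ᵃ[ℝ] (Fin d → ℝ))),
        ∀ x ∈ Prod.fst '' P,
          P ∩ Prod.fst ⁻¹' {x} = convexHull ℝ {q | ∃ j : Fin t, q = (x, ρ j x)} := by
  classical
  let Good : Finset ((Fin n → ℝ) × (Fin d → ℝ)) → Prop := fun s' =>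
    ∃ ρ : (Fin n → ℝ) →ᵃ[ℝ] (Fin d → ℝ), (∀ q ∈ s', q.2 = ρ q.1) ∧
      ∀ x ∈ Prod.fst '' P, (x, ρ x) ∈ P
  let J := {s' : s.powerset // Good s'.1}
  have hJ : ∀ j : J, Good j.1.1 := fun j => j.2
  choose ρ hρ1 hρ2 using hJ
  let Bad := {s' : s.powerset // ∃ w : Fin d → ℝ, w ≠ 0 ∧ ((0 : Fin n → ℝ), w) ∈
      vectorSpan ℝ (s'.1 : Set ((Fin n → ℝ) × (Fin d → ℝ)))}
  have hB : ∀ i : Bad, ∃ w : Fin d → ℝ, w ≠ 0 ∧ ((0 : Fin n → ℝ), w) ∈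
      vectorSpan ℝ (i.1.1 : Set ((Fin n → ℝ) × (Fin d → ℝ))) := fun i => i.2
  choose w hw0 hwm using hB
  -- for generic functionals the top face is a graph
  have key : ∀ b : (Fin d → ℝ) →L[ℝ] ℝ, (∀ i, b (w i) ≠ 0) →
      ∃ j : J, ∀ q ∈ P, b q.2 ≤ b (ρ j q.1) := by
    intro b hb
    obtain ⟨a, M, hM, hfull⟩ := exists_full_face s hs P hP hPF b
    let s' := s.filter (fun v => a v.1 + b v.2 = M)
    have hs' : s' ∈ s.powerset := Finset.mem_powerset.2 (Finset.filter_subset _ _)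
    have hgr : ∃ ρ : (Fin n → ℝ) →ᵃ[ℝ] (Fin d → ℝ), ∀ q ∈ s', q.2 = ρ q.1 := by
      rcases graph_or_vertical s' with h | h
      · exact h
      exfalso
      let i : Bad := ⟨⟨s', hs'⟩, h⟩
      apply hb i
      have hle : vectorSpan ℝ (s' : Set ((Fin n → ℝ) × (Fin d → ℝ))) ≤
          LinearMap.ker (a.coprod b).toLinearMap := by
        rw [vectorSpan_def, Submodule.span_le]
        rintro _ ⟨u, hu, v, hv, rfl⟩
        have h1 : a u.1 + b u.2 = M := (Finset.mem_filter.1 hu).2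
        have h2 : a v.1 + b v.2 = M := (Finset.mem_filter.1 hv).2
        change a (u.1 - v.1) + b (u.2 - v.2) = 0
        rw [map_sub, map_sub]; linarith
      have h3 : a 0 + b (w i) = 0 := hle (hwm i)
      simpa using h3
    have hgood : ∀ σ : (Fin n → ℝ) →ᵃ[ℝ] (Fin d → ℝ), (∀ q ∈ s', q.2 = σ q.1) →
        ∀ x ∈ Prod.fst '' P, (x, σ x) ∈ P ∧ a x + b (σ x) = M := by
      intro σ hσ x hx
      obtain ⟨q, hq, rfl, hqM⟩ := hfull x hx
      have := (face_graph s a b M σ hM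
        (fun q hq hqM => hσ q (Finset.mem_filter.2 ⟨hq, hqM⟩)) q (hP ▸ hq)).2 hqM
      rw [← this]
      exact ⟨hq, hqM⟩
    obtain ⟨σ, hσ⟩ := hgr
    let j : J := ⟨⟨s', hs'⟩, σ, hσ, fun x hx => (hgood σ hσ x hx).1⟩
    refine ⟨j, fun q hq => ?_⟩
    have h1 := (hgood (ρ j) (hρ1 j) q.1 ⟨q, hq, rfl⟩).2
    have h2 := (face_graph s a b M σ hM
        (fun q hq hqM => hσ q (Finset.mem_filter.2 ⟨hq, hqM⟩)) q (hP ▸ hq)).1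
    linarith
  have hdense := dense_generic w hw0
  obtain ⟨t, ⟨e⟩⟩ := Finite.exists_equiv_fin J
  refine ⟨t, fun i => ρ (e.symm i), fun x hx => ?_⟩
  apply Subset.antisymm
  · rintro ⟨x', y⟩ ⟨hq, hx'⟩
    obtain rfl : x' = x := hx'
    by_contra hnot
    have hfin : {q : (Fin n → ℝ) × (Fin d → ℝ) |
        ∃ j : Fin t, q = (x', ρ (e.symm j) x')}.Finite :=
      (Set.finite_range (fun j : Fin t => (x', ρ (e.symm j) x'))).subset
        (by rintro _ ⟨j, rfl⟩; exact ⟨j, rfl⟩)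
    obtain ⟨f, u, hf1, hf2⟩ := geometric_hahn_banach_closed_point (convex_convexHull ℝ _)
      (hfin.isClosed_convexHull ℝ) hnot
    let b0 : (Fin d → ℝ) →L[ℝ] ℝ := f.comp (ContinuousLinearMap.inr ℝ _ _)
    have hb0 : ∀ j : J, b0 (ρ j x') < b0 y := by
      intro j
      have h1 := hf1 _ (subset_convexHull ℝ _ ⟨e j, rfl⟩)
      have hdec : ∀ z, f (x', z) = f (x', 0) + b0 z := by
        intro z
        have : (x', z) = (x', (0 : Fin d → ℝ)) + ((0 : Fin n → ℝ), z) := by simp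
        rw [this, map_add]; rfl
      rw [hdec] at h1 hf2
      simp only [Equiv.symm_apply_apply] at h1
      linarith
    have hopen : IsOpen {b : (Fin d → ℝ) →L[ℝ] ℝ | ∀ j : J, b (ρ j x') < b y} := by
      rw [ofPred_forall]
      exact isOpen_iInter_of_finite fun j => isOpen_lt (by fun_prop) (by fun_prop)
    obtain ⟨b, hb1, hb2⟩ := hdense.inter_open_nonempty _ hopen ⟨b0, hb0⟩
    obtain ⟨j, hj⟩ := key b hb2
    exact absurd (hj _ hq) (not_le.2 (hb1 j))
  · refine convexHull_min ?_ ?_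
    · rintro _ ⟨j, rfl⟩
      exact ⟨hρ2 _ x hx, rfl⟩
    · refine Convex.inter (hP ▸ convex_convexHull ℝ _) ?_
      exact (convex_singleton x).is_linear_preimage (LinearMap.fst ℝ _ _).isLinear

lemma pf_of_generated {n d : ℕ} (P : Set ((Fin n → ℝ) × (Fin d → ℝ))) (hPc : Convex ℝ P)
    (t : ℕ) (ρ : Fin t → ((Fin n → ℝ) →ᵃ[ℝ] (Fin d → ℝ)))
    (hρ : ∀ x ∈ Prod.fst '' P,
          P ∩ Prod.fst ⁻¹' {x} = convexHull ℝ {q | ∃ j : Fin t, q = (x, ρ j x)})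
    (F : Set ((Fin n → ℝ) × (Fin d → ℝ))) (hF : IsExposed ℝ P F) :
    IsExposed ℝ (Prod.fst '' P) (Prod.fst '' F) := by
  intro hne
  obtain ⟨p, hp⟩ := hne.of_image
  have hFc : Convex ℝ F := hF.convex hPc
  obtain ⟨l, hl⟩ := hF ⟨p, hp⟩
  have hFP : ∀ q ∈ F, q ∈ P := fun q hq => by rw [hl] at hq; exact hq.1
  set M := l p with hMdef
  have hmax : ∀ q ∈ P, l q ≤ M := by
    rw [hl] at hp; exact hp.2
  have hFiff : ∀ q ∈ P, (q ∈ F ↔ l q = M) := by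
    intro q hq
    refine ⟨fun h => ?_, fun h => ?_⟩
    · rw [hl] at h
      exact le_antisymm (hmax q hq) (h.2 p (hFP p hp))
    · rw [hl]; exact ⟨hq, fun y hy => h ▸ hmax y hy⟩
  have hmem : ∀ x ∈ Prod.fst '' P, ∀ j, (x, ρ j x) ∈ P := by
    intro x hx j
    have : (x, ρ j x) ∈ P ∩ Prod.fst ⁻¹' {x} := by
      rw [hρ x hx]; exact subset_convexHull ℝ _ ⟨j, rfl⟩
    exact this.1
  let κ : Fin t → ((Fin n → ℝ) →L[ℝ] ℝ) := fun j =>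
    l.comp ((ContinuousLinearMap.id ℝ _).prod (LinearMap.toContinuousLinearMap (ρ j).linear))
  let ε : Fin t → ℝ := fun j => l (0, ρ j 0)
  have hκ : ∀ j x, l (x, ρ j x) = κ j x + ε j := by
    intro j x
    have h1 : ρ j x = (ρ j).linear x + ρ j 0 := by
      have := (ρ j).map_vadd 0 x
      simpa using this
    have h2 : (x, ρ j x) = (x, (ρ j).linear x) + (0, ρ j 0) := by
      rw [h1]; simp
    rw [h2, map_add]; rfl
  have hle : ∀ x ∈ Prod.fst '' P, ∀ j, κ j x + ε j ≤ M := fun x hx j => by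
    rw [← hκ]; exact hmax _ (hmem x hx j)
  have hex : ∀ x ∈ Prod.fst '' F, ∃ j, κ j x + ε j = M := by
    rintro _ ⟨q, hq, rfl⟩
    have hqQ : q.1 ∈ Prod.fst '' P := ⟨q, hFP q hq, rfl⟩
    by_contra hno
    push Not at hno
    have hq' : q ∈ convexHull ℝ {r | ∃ j : Fin t, r = (q.1, ρ j q.1)} := by
      rw [← hρ _ hqQ]; exact ⟨hFP q hq, rfl⟩
    have : l q < M := convexHull_min (t := {r | l r < M}) (by
      rintro _ ⟨j, rfl⟩
      change l _ < M
      rw [hκ]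
      exact lt_of_le_of_ne (hle _ hqQ j) (hno j)) (convex_halfSpace_lt l.toLinearMap.isLinear _) hq'
    exact absurd ((hFiff q (hFP q hq)).1 hq) this.ne
  obtain ⟨k, hk⟩ : ∃ k, ∀ x ∈ Prod.fst '' F, κ k x + ε k = M := by
    by_contra hno
    push Not at hno
    choose c hc1 hc2 using hno
    obtain ⟨j0, -⟩ := hex p.1 ⟨p, hp, rfl⟩
    have ht : (0:ℝ) < t := by exact_mod_cast j0.pos
    have hIc : Convex ℝ (Prod.fst '' F) := hFc.is_linear_image (LinearMap.fst ℝ _ _).isLinear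
    have havg : ∑ i, ((t:ℝ)⁻¹) • c i ∈ Prod.fst '' F :=
      hIc.sum_mem (fun _ _ => by positivity) (by simp [ht.ne']) (fun i _ => hc1 i)
    obtain ⟨k, hk⟩ := hex _ havg
    have hFQ : ∀ i, c i ∈ Prod.fst '' P := fun i => image_mono (fun q hq => hFP q hq) (hc1 i)
    have hlt : ∑ i, (κ k (c i) + ε k) < ∑ i : Fin t, M :=
      Finset.sum_lt_sum (fun i _ => hle _ (hFQ i) k)
        ⟨k, Finset.mem_univ _, lt_of_le_of_ne (hle _ (hFQ k) k) (hc2 k)⟩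
    rw [Finset.sum_add_distrib] at hlt
    simp only [Finset.sum_const, Finset.card_univ, Fintype.card_fin, nsmul_eq_mul] at hlt
    rw [← Finset.smul_sum, map_smul, map_sum, smul_eq_mul] at hk
    have : ∑ i, κ k (c i) = t * (M - ε k) := by
      rw [← hk]; field_simp; ring
    rw [this] at hlt
    linarith
  refine ⟨κ k, ?_⟩
  ext x
  constructor
  · intro hx
    have hxP : x ∈ Prod.fst '' P := image_mono (fun q hq => hFP q hq) hx
    exact ⟨hxP, fun y hy => by linarith [hle y hy k, hk x hx]⟩
  · rintro ⟨hxP, hx⟩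
    have h1 := hx p.1 ⟨p, hFP p hp, rfl⟩
    have h2 := hk p.1 ⟨p, hp, rfl⟩
    have h3 := hle x hxP k
    refine ⟨(x, ρ k x), (hFiff _ (hmem x hxP k)).2 ?_, rfl⟩
    rw [hκ]; linarith

/-- For a polytope `P ⊆ ℝⁿ × ℝᵈ` and the projection `p_x` onto the first `n` coordinates,
`(P, p_x)` has the PF-property if and only if `P` is an affinely generated polyhedral relation
of type `(n, d)`: there exist finitely many affine maps `ρ₁, …, ρ_t : ℝⁿ → ℝᵈ` such that for
every `x ∈ p_x(P)` one has `P ∩ p_x⁻¹(x) = conv{(x, ρ_j(x)) : 1 ≤ j ≤ t}`. -/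
theorem pf_property_iff_affinely_generated {n d : ℕ}
    (P : Set ((Fin n → ℝ) × (Fin d → ℝ)))
    (hP : ∃ s : Set ((Fin n → ℝ) × (Fin d → ℝ)), s.Finite ∧ P = convexHull ℝ s) :
    (∀ F : Set ((Fin n → ℝ) × (Fin d → ℝ)),
        IsExposed ℝ P F → IsExposed ℝ (Prod.fst '' P) (Prod.fst '' F)) ↔
      ∃ (t : ℕ) (ρ : Fin t → ((Fin n → ℝ) →ᵃ[ℝ] (Fin d → ℝ))),
        ∀ x ∈ Prod.fst '' P,
          P ∩ Prod.fst ⁻¹' {x} = convexHull ℝ {q | ∃ j : Fin t, q = (x, ρ j x)} := by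
  constructor
  · intro hPF
    obtain ⟨s, hsf, hs⟩ := hP
    rcases s.eq_empty_or_nonempty with rfl | hne
    · refine ⟨0, fun i => i.elim0, ?_⟩
      subst hs
      simp
    · exact generated_of_pf hsf.toFinset (by simpa using hne) P (by simpa using hs) hPF
  · rintro ⟨t, ρ, hρ⟩ F hF
    obtain ⟨s, -, hs⟩ := hP
    exact pf_of_generated P (hs ▸ convex_convexHull ℝ s) t ρ hρ F hF
end

section
/- Let P ⊆ ℝⁿ × ℝᵈ be a polytope such that the pair (P, p_x) has the PF-property. Then there exists a face F of P such that the restriction of p_x to F is an affine isomorphism of F onto p_x(P); in particular p_x is injective on F and p_x(F) = p_x(P). -/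
open Set

/-- A Farkas-type lemma. -/
lemma lp_dual {ι V : Type*} [Fintype ι] [AddCommGroup V] [Module ℝ V]
    (A : (ι → ℝ) →ₗ[ℝ] V) (b : (ι → ℝ) →ₗ[ℝ] ℝ) (hA : A (fun _ => 1) = 0)
    (hb : ∀ c : ι → ℝ, 0 ≤ c → A c = 0 → b c ≤ 0) :
    ∃ a : V →ₗ[ℝ] ℝ, ∀ c : ι → ℝ, 0 ≤ c → b c ≤ a (A c) := by
  obtain ⟨g, hg, hpos⟩ := riesz_extension (PointedCone.positive ℝ (ι → ℝ))
    ⟨LinearMap.ker A, -(b.domRestrict (LinearMap.ker A))⟩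
    (by
      rintro ⟨x, hx⟩ hx0
      have := hb x hx0 hx
      simpa using this)
    (by
      intro y
      refine ⟨⟨(∑ i, |y i|) • (fun _ => 1), by simp [hA]⟩, ?_⟩
      change (0 : ι → ℝ) ≤ _
      intro i
      have h1 : |y i| ≤ ∑ i, |y i| :=
        Finset.single_le_sum (f := fun i => |y i|) (fun _ _ => abs_nonneg _) (Finset.mem_univ i)
      have h2 := neg_abs_le (y i)
      simp
      linarith)
  have hmem : (g + b : Module.Dual ℝ (ι → ℝ)) ∈ LinearMap.range A.dualMap := by
    rw [LinearMap.range_dualMap_eq_dualAnnihilator_ker, Submodule.mem_dualAnnihilator]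
    intro w hw
    have := hg ⟨w, hw⟩
    have h2 : g w = - b w := this
    simp [h2]
  obtain ⟨a, ha⟩ := hmem
  refine ⟨a, fun c hc => ?_⟩
  have h1 := hpos c hc
  have h2 : a (A c) = g c + b c := by
    have := LinearMap.congr_fun ha c
    simpa using this
  linarith

lemma generic_dual {n d : ℕ} (s : Finset ((Fin n → ℝ) × (Fin d → ℝ))) :
    ∃ l : (Fin d → ℝ) →ₗ[ℝ] ℝ, ∀ T ⊆ s,
      (∃ u ∈ convexHull ℝ (T : Set ((Fin n → ℝ) × (Fin d → ℝ))), ∃ v ∈ convexHull ℝ (T : Set ((Fin n → ℝ) × (Fin d → ℝ))), u.1 = v.1 ∧ u ≠ v) →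
      ∃ u ∈ convexHull ℝ (T : Set ((Fin n → ℝ) × (Fin d → ℝ))), ∃ v ∈ convexHull ℝ (T : Set ((Fin n → ℝ) × (Fin d → ℝ))), u.1 = v.1 ∧ l u.2 ≠ l v.2 := by
  classical
  let I := {T : Finset ((Fin n → ℝ) × (Fin d → ℝ)) // T ∈ s.powerset ∧
    (∃ u ∈ convexHull ℝ (T : Set ((Fin n → ℝ) × (Fin d → ℝ))), ∃ v ∈ convexHull ℝ (T : Set ((Fin n → ℝ) × (Fin d → ℝ))), u.1 = v.1 ∧ u ≠ v)}
  have hfin : Finite I := Set.Finite.subset (s.powerset.finite_toSet) (fun T hT => hT.1)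
  choose u hu v hv huv hne using fun i : I => i.2.2
  obtain ⟨l, hl⟩ := Module.exists_dual_forall_apply_ne_zero (K := ℝ)
    (fun i : I => (u i).2 - (v i).2)
    (fun i h => hne i (Prod.ext (huv i) (sub_eq_zero.1 h)))
  refine ⟨l, fun T hT h => ?_⟩
  let i : I := ⟨T, Finset.mem_powerset.2 hT, h⟩
  refine ⟨u i, hu i, v i, hv i, huv i, fun h => hl i ?_⟩
  simp [h]

/-- If the pair `(P, p_x)` has the PF-property, then some face `F` of the polytope `P` is mapped
by `p_x` affinely isomorphically onto `p_x(P)`; in particular `p_x` is injective on `F` and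
`p_x(F) = p_x(P)`. -/
theorem pf_property_face_iso {n d : ℕ}
    (P : Set ((Fin n → ℝ) × (Fin d → ℝ)))
    (hP : ∃ s : Set ((Fin n → ℝ) × (Fin d → ℝ)), s.Finite ∧ P = convexHull ℝ s)
    (hPF : ∀ F : Set ((Fin n → ℝ) × (Fin d → ℝ)),
        IsExposed ℝ P F → IsExposed ℝ (Prod.fst '' P) (Prod.fst '' F)) :
    ∃ F : Set ((Fin n → ℝ) × (Fin d → ℝ)),
      IsExposed ℝ P F ∧ Set.InjOn Prod.fst F ∧ Prod.fst '' F = Prod.fst '' P := by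
  classical
  obtain ⟨s', hs', rfl⟩ := hP
  obtain ⟨s, rfl⟩ := hs'.exists_finset_coe
  clear hs'
  rcases s.eq_empty_or_nonempty with rfl | hne
  · exact ⟨∅, fun h => absurd h (by simp), by simp, by simp⟩
  set P := convexHull ℝ (s : Set ((Fin n → ℝ) × (Fin d → ℝ))) with hPdef
  obtain ⟨l, hl⟩ := generic_dual s
  have hcard : (0 : ℝ) < s.card := by exact_mod_cast hne.card_pos
  -- the centroid
  let z0 : (Fin n → ℝ) × (Fin d → ℝ) := ∑ v ∈ s, ((s.card : ℝ)⁻¹) • v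
  have hz0 : z0 ∈ P := by
    rw [hPdef, Finset.mem_convexHull']
    refine ⟨fun _ => (s.card : ℝ)⁻¹, fun _ _ => by positivity, ?_, rfl⟩
    simp [hcard.ne']
  have hsumz : ∑ v ∈ s, v = (s.card : ℝ) • z0 := by
    change _ = (s.card : ℝ) • ∑ v ∈ s, ((s.card : ℝ)⁻¹) • v
    rw [Finset.smul_sum]
    exact Finset.sum_congr rfl fun v _ => (smul_inv_smul₀ hcard.ne' v).symm
  have hPc : IsCompact P := s.finite_toSet.isCompact_convexHull (𝕜 := ℝ)
  -- maximise `l` on the fibre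
  obtain ⟨u0, ⟨hu0P, hu0x⟩, hu0max⟩ :=
    (hPc.inter_right (isClosed_eq continuous_fst (continuous_const (y := z0.1)))).exists_isMaxOn
      ⟨z0, hz0, rfl⟩ (f := fun z => l z.2)
      ((l.continuous_of_finiteDimensional.comp continuous_snd).continuousOn)
  have hu0x : u0.1 = z0.1 := hu0x
  -- duality
  let B : ((↥s) → ℝ) →ₗ[ℝ] ((Fin n → ℝ) × (Fin d → ℝ)) :=
    Fintype.linearCombination ℝ (fun v : s => (v : (Fin n → ℝ) × (Fin d → ℝ)) - u0)
  have hB : ∀ c, B c = ∑ v : s, c v • ((v : (Fin n → ℝ) × (Fin d → ℝ)) - u0) := fun c => rfl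
  obtain ⟨a, ha⟩ := lp_dual ((LinearMap.fst ℝ _ _).comp B) ((l.comp (LinearMap.snd ℝ _ _)).comp B)
    (by
      rw [LinearMap.comp_apply, hB]
      simp only [one_smul, Finset.sum_sub_distrib, Finset.sum_const, Finset.card_univ]
      rw [Finset.sum_coe_sort s (fun v => v), hsumz]
      simp [hu0x, Nat.cast_smul_eq_nsmul])
    (by
      intro c hc h0
      rw [LinearMap.comp_apply, hB] at h0
      rw [LinearMap.comp_apply, hB]
      set S := ∑ v : s, c v with hS
      rcases (Finset.sum_nonneg (fun v (_ : v ∈ Finset.univ) => hc v)).eq_or_lt' with h | h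
      · have : ∀ v, c v = 0 := by
          intro v
          exact (Finset.sum_eq_zero_iff_of_nonneg (fun v _ => hc v)).1 h v (Finset.mem_univ v)
        simp [this]
      · have hSpos : 0 < S := h
        have hmem : ∑ v : s, (S⁻¹ * c v) • (v : (Fin n → ℝ) × (Fin d → ℝ)) ∈ P := by
          refine (convex_convexHull ℝ _).sum_mem (fun v _ => mul_nonneg (by positivity) (hc v)) ?_
            (fun v _ => subset_convexHull ℝ _ v.2)
          rw [← Finset.mul_sum, ← hS, inv_mul_cancel₀ hSpos.ne']
        have heq : ∑ v : s, c v • ((v : (Fin n → ℝ) × (Fin d → ℝ)) - u0)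
            = S • (∑ v : s, (S⁻¹ * c v) • (v : (Fin n → ℝ) × (Fin d → ℝ)) - u0) := by
          simp only [smul_sub, Finset.sum_sub_distrib, mul_smul, ← Finset.smul_sum]
          rw [smul_inv_smul₀ hSpos.ne', ← Finset.sum_smul]
        rw [heq] at h0 ⊢
        set y := ∑ v : s, (S⁻¹ * c v) • (v : (Fin n → ℝ) × (Fin d → ℝ))
        have hy1 : y.1 = u0.1 := by
          have : S • (y.1 - u0.1) = 0 := h0
          rw [smul_eq_zero] at this
          exact sub_eq_zero.1 (this.resolve_left hSpos.ne')
        have hle : l y.2 ≤ l u0.2 := hu0max ⟨hmem, hy1.trans hu0x⟩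
        have : l (S • (y - u0)).2 = S * (l y.2 - l u0.2) := by simp
        change l (S • (y - u0)).2 ≤ 0
        rw [this]
        exact mul_nonpos_of_nonneg_of_nonpos hSpos.le (by linarith))
  let φ : ((Fin n → ℝ) × (Fin d → ℝ)) →ₗ[ℝ] ℝ :=
    l.comp (LinearMap.snd ℝ _ _) - a.comp (LinearMap.fst ℝ _ _)
  have hφ : ∀ z, φ z = l z.2 - a z.1 := fun z => rfl
  have hφs : ∀ v ∈ s, φ v ≤ φ u0 := by
    intro v hv
    have h := ha (Pi.single ⟨v, hv⟩ 1) (by simp [Pi.single_nonneg])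
    have hBv : B (Pi.single ⟨v, hv⟩ 1) = v - u0 := by
      simp [B]
    simp only [LinearMap.comp_apply, hBv, LinearMap.fst_apply, LinearMap.snd_apply, Prod.fst_sub,
      Prod.snd_sub, map_sub] at h
    rw [hφ, hφ]; linarith
  have hφP : ∀ v ∈ P, φ v ≤ φ u0 := fun v hv =>
    convexHull_min (s := (s : Set ((Fin n → ℝ) × (Fin d → ℝ)))) (t := {z | φ z ≤ φ u0})
      (fun y hy => hφs y hy)
      (convex_halfSpace_le φ.isLinear _) hv
  let Φ : StrongDual ℝ ((Fin n → ℝ) × (Fin d → ℝ)) := LinearMap.toContinuousLinearMap φ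
  have hΦ : ∀ z, Φ z = φ z := fun z => rfl
  let G := {x ∈ P | ∀ y ∈ P, Φ y ≤ Φ x}
  have hG : IsExposed ℝ P G := fun _ => ⟨Φ, rfl⟩
  have hu0G : u0 ∈ G := ⟨hu0P, hφP⟩
  have hGφ : ∀ z ∈ G, φ z = φ u0 := fun z hz => le_antisymm (hφP z hz.1) (hz.2 u0 hu0P)
  refine ⟨G, hG, ?_, ?_⟩
  · intro u hu v hv huv
    by_contra huvne
    let T := s.filter (fun v => φ v = φ u0)
    have hGT : ∀ z ∈ G, z ∈ convexHull ℝ (T : Set ((Fin n → ℝ) × (Fin d → ℝ))) := by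
      intro z hz
      obtain ⟨w, hw0, hw1, hwz⟩ := Finset.mem_convexHull'.1 hz.1
      have hsum : ∑ y ∈ s, w y * (φ u0 - φ y) = 0 := by
        have h1 : φ z = ∑ y ∈ s, w y * φ y := by rw [← hwz]; simp [map_sum]
        simp only [mul_sub, Finset.sum_sub_distrib, ← Finset.sum_mul, hw1, ← h1, hGφ z hz]
        ring
      have hz' := (Finset.sum_eq_zero_iff_of_nonneg (fun y hy =>
        mul_nonneg (hw0 y hy) (sub_nonneg.2 (hφs y hy)))).1 hsum
      have hout : ∀ y ∈ s, y ∉ T → w y = 0 := by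
        intro y hy hyT
        rcases mul_eq_zero.1 (hz' y hy) with h | h
        · exact h
        · exact absurd (Finset.mem_filter.2 ⟨hy, (sub_eq_zero.1 h).symm⟩) hyT
      have hTs : T ⊆ s := Finset.filter_subset _ _
      refine Finset.mem_convexHull'.2 ⟨w, fun y hy => hw0 y (hTs hy), ?_, ?_⟩
      · rw [← hw1]; exact Finset.sum_subset hTs hout
      · rw [← hwz]; exact Finset.sum_subset hTs (fun y hy h => by simp [hout y hy h])
    have hTφ : ∀ z ∈ convexHull ℝ (T : Set ((Fin n → ℝ) × (Fin d → ℝ))), φ z = φ u0 :=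
      fun z hz => convexHull_min (s := (T : Set ((Fin n → ℝ) × (Fin d → ℝ)))) (t := {z | φ z = φ u0})
        (fun y hy => (Finset.mem_filter.1 hy).2) (convex_hyperplane φ.isLinear _) hz
    obtain ⟨u', hu', v', hv', h1, h2⟩ := hl T (Finset.filter_subset _ _)
      ⟨u, hGT u hu, v, hGT v hv, huv, huvne⟩
    apply h2
    have e1 := hTφ u' hu'
    have e2 := hTφ v' hv'
    rw [hφ] at e1 e2
    rw [h1] at e1
    linarith
  · refine Set.Subset.antisymm (Set.image_mono fun z hz => hz.1) ?_
    obtain ⟨m, hm⟩ := hPF G hG ⟨u0.1, u0, hu0G, rfl⟩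
    have hx0 : u0.1 ∈ Prod.fst '' G := ⟨u0, hu0G, rfl⟩
    rw [hm] at hx0 ⊢
    have hle : ∀ v ∈ s, m v.1 ≤ m u0.1 := fun v hv =>
      hx0.2 _ ⟨v, subset_convexHull ℝ _ hv, rfl⟩
    have hsum : ∑ v ∈ s, (m u0.1 - m v.1) = 0 := by
      have h1 : ∑ v ∈ s, m v.1 = s.card * m u0.1 := by
        have := congrArg (fun z : (Fin n → ℝ) × (Fin d → ℝ) => m z.1) hsumz
        simpa [Prod.fst_sum, map_sum, hu0x] using this
      simp [Finset.sum_sub_distrib, h1]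
    have heq := (Finset.sum_eq_zero_iff_of_nonneg (fun v hv => sub_nonneg.2 (hle v hv))).1 hsum
    have hc : ∀ z ∈ P, m z.1 = m u0.1 := fun z hz =>
      convexHull_min (s := (s : Set ((Fin n → ℝ) × (Fin d → ℝ)))) (t := {z | (m.toLinearMap.comp (LinearMap.fst ℝ _ _)) z = m u0.1})
        (fun y hy => (sub_eq_zero.1 (heq y hy)).symm)
        (convex_hyperplane (m.toLinearMap.comp (LinearMap.fst ℝ _ _)).isLinear _) hz
    rintro _ ⟨z, hz, rfl⟩
    refine ⟨⟨z, hz, rfl⟩, ?_⟩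
    rintro _ ⟨y, hy, rfl⟩
    rw [hc z hz, hc y hy]
end

section
/- Let P ⊆ ℝⁿ × ℝᵈ be a polytope such that the pair (P, p_x) has the PF-property. Then the number of facets of the polytope p_x(P) is at most the number of facets of the polytope P. -/
open Set

section helpers

variable {E : Type*} [NormedAddCommGroup E] [NormedSpace ℝ E]

theorem pfh_exposed_rep {P F : Set E} (h : IsExposed ℝ P F) (hF : F.Nonempty) :
    ∃ (l : E →L[ℝ] ℝ) (M : ℝ), (∀ x ∈ P, l x ≤ M) ∧ F = {x ∈ P | l x = M} := by
  obtain ⟨l, hl⟩ := h hF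
  obtain ⟨x0, hx0⟩ := hF
  have h0 : x0 ∈ P ∧ ∀ y ∈ P, l y ≤ l x0 := by rw [hl] at hx0; exact hx0
  refine ⟨l, l x0, h0.2, ?_⟩
  rw [hl]
  ext x
  constructor
  · rintro ⟨hx, hy⟩
    exact ⟨hx, le_antisymm (h0.2 x hx) (hy x0 h0.1)⟩
  · rintro ⟨hx, hy⟩
    exact ⟨hx, fun y hyP => by rw [hy]; exact h0.2 y hyP⟩

theorem pfh_exposed_of {P : Set E} (l : E →L[ℝ] ℝ) (M : ℝ) (h : ∀ x ∈ P, l x ≤ M) :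
    IsExposed ℝ P {x ∈ P | l x = M} := by
  rintro ⟨x0, hx0, hx0M⟩
  refine ⟨l, ?_⟩
  ext x
  constructor
  · rintro ⟨hx, hy⟩
    exact ⟨hx, fun y hyP => by rw [hy]; exact h y hyP⟩
  · rintro ⟨hx, hy⟩
    exact ⟨hx, le_antisymm (h x hx) (by rw [← hx0M]; exact hy x0 hx0)⟩

theorem pfh_le_of_hull {s : Set E} (l : E →L[ℝ] ℝ) (M : ℝ) (h : ∀ x ∈ s, l x ≤ M) :
    ∀ x ∈ convexHull ℝ s, l x ≤ M := by
  intro x hx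
  have hc : Convex ℝ {x | l x ≤ M} := convex_halfSpace_le l.toLinearMap.isLinear M
  exact convexHull_min (fun y hy => h y hy) hc hx

/-- Rotating a supporting hyperplane until it touches a new point. -/
theorem pfh_rot {s : Set E} (hs : s.Finite) (l m : E →L[ℝ] ℝ) (M c : ℝ)
    (h1 : ∀ x ∈ convexHull ℝ s, l x ≤ M)
    (h2 : ∀ x ∈ convexHull ℝ s, l x = M → m x ≤ c)
    (h3 : ∃ x ∈ convexHull ℝ s, c < m x) :
    ∃ t : ℝ, 0 < t ∧ (∀ x ∈ convexHull ℝ s, (l + t • m) x ≤ M + t * c) ∧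
      ∃ x ∈ convexHull ℝ s, c < m x ∧ (l + t • m) x = M + t * c := by
  have hsub := subset_convexHull ℝ s
  have h3' : ({x ∈ s | c < m x}).Nonempty := by
    by_contra hne
    rw [Set.not_nonempty_iff_eq_empty] at hne
    obtain ⟨x, hx, hxc⟩ := h3
    have : ∀ y ∈ s, m y ≤ c := by
      intro y hy
      by_contra hlt
      have : y ∈ ({x ∈ s | c < m x}) := ⟨hy, not_le.mp hlt⟩
      rw [hne] at this
      exact this
    exact absurd (pfh_le_of_hull m c this x hx) (not_le.mpr hxc)
  obtain ⟨y, ⟨hys, hyc⟩, hmin⟩ := Set.exists_min_image _ (fun x => (M - l x) / (m x - c))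
    (hs.subset (fun x (hx : x ∈ {x ∈ s | c < m x}) => hx.1)) h3'
  have hly : l y < M := lt_of_le_of_ne (h1 y (hsub hys))
    (fun h => absurd (h2 y (hsub hys) h) (not_le.mpr hyc))
  have ht : 0 < (M - l y) / (m y - c) := div_pos (by linarith) (by linarith)
  refine ⟨(M - l y) / (m y - c), ht, ?_, y, hsub hys, hyc, ?_⟩
  · apply pfh_le_of_hull
    intro x hx
    simp only [add_apply, smul_apply, smul_eq_mul]
    by_cases hxc : c < m x
    · have := hmin x ⟨hx, hxc⟩
      rw [le_div_iff₀ (by linarith)] at this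
      linarith
    · have := h1 x (hsub hx)
      nlinarith [mul_nonneg ht.le (sub_nonneg.mpr (not_lt.mp hxc))]
  · simp only [add_apply, smul_apply, smul_eq_mul]
    have : m y - c ≠ 0 := by linarith
    field_simp
    ring

theorem pfh_finite {s : Set E} (hs : s.Finite) :
    {F : Set E | IsExposed ℝ (convexHull ℝ s) F}.Finite := by
  have hP : IsCompact (convexHull ℝ s) := hs.isCompact_convexHull (𝕜 := ℝ)
  refine Set.Finite.of_finite_image (f := fun F => F.extremePoints ℝ)
    (hs.finite_subsets.subset ?_) ?_
  · rintro _ ⟨F, hF, rfl⟩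
    exact (hF.isExtreme.extremePoints_subset_extremePoints).trans extremePoints_convexHull_subset
  · intro F hF F' hF' h
    rw [← closure_convexHull_extremePoints (hF.isCompact hP) (hF.convex (convex_convexHull ℝ s)),
      ← closure_convexHull_extremePoints (hF'.isCompact hP) (hF'.convex (convex_convexHull ℝ s))]
    simp only at h
    rw [h]

theorem pfh_const_dir {F : Set E} (l : E →L[ℝ] ℝ) (M : ℝ) (h : ∀ x ∈ F, l x = M) :
    ∀ v ∈ (affineSpan ℝ F).direction, l v = 0 := by
  intro v hv
  rw [direction_affineSpan, vectorSpan_def] at hv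
  have : Submodule.span ℝ (F -ᵥ F) ≤ LinearMap.ker l.toLinearMap := by
    rw [Submodule.span_le]
    rintro _ ⟨a, ha, b, hb, rfl⟩
    simp [h a ha, h b hb]
  exact this hv

theorem pfh_sub_mem {F : Set E} {x y : E} (hx : x ∈ F) (hy : y ∈ F) :
    x - y ∈ (affineSpan ℝ F).direction := by
  rw [direction_affineSpan]
  exact vsub_mem_vectorSpan ℝ hx hy

theorem pfh_max {Q K K' : Set E} (hK : IsExposed ℝ Q K) (hne : K.Nonempty) (h : K ⊆ K')
    (hQ : K' ⊆ Q) (hd : (affineSpan ℝ K').direction ≤ (affineSpan ℝ K).direction) : K' ⊆ K := by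
  obtain ⟨l, M, -, hl⟩ := pfh_exposed_rep hK hne
  obtain ⟨k, hk⟩ := hne
  have hc : ∀ x ∈ K, l x = M := by
    intro x hx; rw [hl] at hx; exact hx.2
  intro x hx
  have := pfh_const_dir l M hc _ (hd (pfh_sub_mem hx (h hk)))
  rw [map_sub, hc k hk] at this
  rw [hl]
  exact ⟨hQ hx, by linarith⟩

theorem pfh_dir_mono {A B : Set E} (h : A ⊆ B) :
    (affineSpan ℝ A).direction ≤ (affineSpan ℝ B).direction :=
  AffineSubspace.direction_le (affineSpan_mono ℝ h)

variable [FiniteDimensional ℝ E]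

/-- A facet inside a proper exposed face is equal to it. -/
theorem pfh_facet_eq {Q G K : Set E} (hG : IsExposed ℝ Q G) (hne : G.Nonempty)
    (hdim : polyDim G + 1 = polyDim Q) (hK : IsExposed ℝ Q K) (hGK : G ⊆ K) (hKQ : K ≠ Q) :
    G = K := by
  refine hGK.antisymm (pfh_max hG hne hGK hK.subset ?_)
  have h1 : (affineSpan ℝ K).direction < (affineSpan ℝ Q).direction := by
    refine lt_of_le_not_ge (pfh_dir_mono hK.subset) (fun hle => hKQ ?_)
    exact hK.subset.antisymm (pfh_max hK (hne.mono hGK) hK.subset subset_rfl hle)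
  have h2 := Submodule.finrank_lt_finrank_of_lt h1
  unfold polyDim at hdim
  exact (Submodule.eq_of_le_of_finrank_le (pfh_dir_mono hGK) (by omega)).ge

/-- Every proper nonempty face is contained in a facet. -/
theorem pfh_exists_facet {s : Set E} (hs : s.Finite) {H : Set E}
    (hH : IsExposed ℝ (convexHull ℝ s) H) (hne : H.Nonempty) (hHP : H ≠ convexHull ℝ s) :
    ∃ F, IsExposed ℝ (convexHull ℝ s) F ∧ F.Nonempty ∧
      polyDim F + 1 = polyDim (convexHull ℝ s) ∧ H ⊆ F ∧ F ≠ convexHull ℝ s := by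
  set P := convexHull ℝ s with hPdef
  have hfin : {F : Set E | IsExposed ℝ P F ∧ H ⊆ F ∧ F ≠ P}.Finite :=
    (pfh_finite hs).subset (fun F hF => hF.1)
  obtain ⟨F, ⟨hF, hHF, hFP⟩, hmax⟩ := hfin.exists_maximal ⟨H, hH, subset_rfl, hHP⟩
  have hFne := hne.mono hHF
  refine ⟨F, hF, hFne, ?_, hHF, hFP⟩
  have hlt : (affineSpan ℝ F).direction < (affineSpan ℝ P).direction := by
    refine lt_of_le_not_ge (pfh_dir_mono hF.subset) (fun hle => hFP ?_)
    exact hF.subset.antisymm (pfh_max hF hFne hF.subset subset_rfl hle)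
  have hlt' := Submodule.finrank_lt_finrank_of_lt hlt
  unfold polyDim
  by_contra hcon
  obtain ⟨l, M, hlM, hl⟩ := pfh_exposed_rep hF hFne
  obtain ⟨p0, hp0⟩ := hFne
  have hFl : ∀ x ∈ F, l x = M := by
    intro x hx; rw [hl] at hx; exact hx.2
  obtain ⟨u, huP, huF⟩ : ∃ u ∈ P, u ∉ F := by
    by_contra hno
    push Not at hno
    exact hFP (hF.subset.antisymm hno)
  have hlu : l u ≠ M := fun h => huF (by rw [hl]; exact ⟨huP, h⟩)
  set W := (affineSpan ℝ F).direction ⊔ Submodule.span ℝ {u - p0} with hW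
  have hWrank : Module.finrank ℝ W ≤ Module.finrank ℝ (affineSpan ℝ F).direction + 1 := by
    refine (Submodule.finrank_add_le_finrank_add_finrank _ _).trans ?_
    gcongr
    exact (finrank_span_le_card ({u - p0} : Set E)).trans (by simp)
  obtain ⟨v, hvP, hvW⟩ : ∃ v ∈ (affineSpan ℝ P).direction, v ∉ W := by
    by_contra hno
    push Not at hno
    have : (affineSpan ℝ P).direction ≤ W := hno
    have := Submodule.finrank_mono this
    omega
  obtain ⟨m0, hm0v, hm0W⟩ := Submodule.exists_le_ker_of_notMem hvW
  set m : E →L[ℝ] ℝ := LinearMap.toContinuousLinearMap m0 with hm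
  have hmW : ∀ w ∈ W, m w = 0 := fun w hw => by simpa [hm] using hm0W hw
  have hmv : m v ≠ 0 := by simpa [hm] using hm0v
  have hmF : ∀ x ∈ F, m x = m p0 := by
    intro x hx
    have := hmW (x - p0) (Submodule.mem_sup_left (pfh_sub_mem hx hp0))
    rw [map_sub] at this; linarith
  have hmu : m u = m p0 := by
    have := hmW (u - p0) (Submodule.mem_sup_right (Submodule.mem_span_singleton_self _))
    rw [map_sub] at this; linarith
  -- the key step, for a functional with the right sign
  have key : ∀ m' : E →L[ℝ] ℝ, (∀ x ∈ F, m' x = m' p0) → m' u = m' p0 →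
      (∃ x ∈ P, m' p0 < m' x) → False := by
    intro m' hm'F hm'u hex
    obtain ⟨t, ht, hle, y, hyP, hyc, hy⟩ := pfh_rot hs l m' M (m' p0) hlM
      (fun x hx hxM => (hm'F x (by rw [hl]; exact ⟨hx, hxM⟩)).le) hex
    have hexp := pfh_exposed_of (P := P) _ _ hle
    have hsubF : F ⊆ {x ∈ P | (l + t • m') x = M + t * m' p0} := by
      intro x hx
      refine ⟨hF.subset hx, ?_⟩
      simp [hFl x hx, hm'F x hx]
    have hprop : {x ∈ P | (l + t • m') x = M + t * m' p0} ≠ P := by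
      intro heq
      have huu : u ∈ {x ∈ P | (l + t • m') x = M + t * m' p0} := by rw [heq]; exact huP
      have := huu.2
      simp [hm'u] at this
      exact hlu this
    have := hmax ⟨hexp, hHF.trans hsubF, hprop⟩ hsubF ⟨hyP, hy⟩
    exact absurd (hm'F y this) (ne_of_gt hyc)
  have : ∃ x ∈ P, m x ≠ m p0 := by
    by_contra hno
    push Not at hno
    exact hmv (pfh_const_dir m _ hno v hvP)
  obtain ⟨x, hxP, hx⟩ := this
  rcases lt_or_gt_of_ne hx with h | h
  · refine key (-m) (fun x hx => by simp [hmF x hx]) (by simp [hmu]) ⟨x, hxP, by simpa using h⟩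
  · exact key m hmF hmu ⟨x, hxP, h⟩

end helpers

/-- Under the PF-property there is a face projecting onto everything on which `f` is fibrewise
minimal. -/
theorem pfh_lower {X Y : Type*} [NormedAddCommGroup X] [NormedSpace ℝ X]
    [NormedAddCommGroup Y] [NormedSpace ℝ Y] {s : Set (X × Y)} (hs : s.Finite)
    (hne : (convexHull ℝ s).Nonempty)
    (hPF : ∀ F : Set (X × Y), IsExposed ℝ (convexHull ℝ s) F →
      IsExposed ℝ (Prod.fst '' (convexHull ℝ s)) (Prod.fst '' F)) (f : X × Y →L[ℝ] ℝ) :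
    ∃ F, IsExposed ℝ (convexHull ℝ s) F ∧ Prod.fst '' F = Prod.fst '' (convexHull ℝ s) ∧
      ∀ z ∈ F, ∀ z' ∈ convexHull ℝ s, z.1 = z'.1 → f z ≤ f z' := by
  set P := convexHull ℝ s with hPdef
  have hPc : IsCompact P := hs.isCompact_convexHull (𝕜 := ℝ)
  let π : X × Y →L[ℝ] X := ContinuousLinearMap.fst ℝ X Y
  let S : Set (Set (X × Y)) := {F | F.Nonempty ∧ ∃ (g : X →L[ℝ] ℝ) (N : ℝ),
    (∀ x ∈ P, (g.comp π - f) x ≤ N) ∧ F = {x ∈ P | (g.comp π - f) x = N}}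
  have hSexp : ∀ F ∈ S, IsExposed ℝ P F := by
    rintro F ⟨-, g, N, h, rfl⟩
    exact pfh_exposed_of _ _ h
  have hSfin : S.Finite := (pfh_finite hs).subset hSexp
  have hSne : S.Nonempty := by
    obtain ⟨x, hx, hxm⟩ := hPc.exists_isMaxOn hne
      (((0 : X →L[ℝ] ℝ).comp π - f).continuous.continuousOn)
    exact ⟨{y ∈ P | ((0 : X →L[ℝ] ℝ).comp π - f) y = ((0 : X →L[ℝ] ℝ).comp π - f) x},
      ⟨x, hx, rfl⟩, 0, _, fun y hy => hxm hy, rfl⟩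
  obtain ⟨F, hFS, hmax⟩ := hSfin.exists_maximal hSne
  have hF := hSexp F hFS
  obtain ⟨hFne, g, N, hN, hFeq⟩ := hFS
  refine ⟨F, hF, ?_, ?_⟩
  · by_contra hneq
    have hK := hPF F hF
    obtain ⟨m, c, hmc, hKeq⟩ := pfh_exposed_rep hK (hFne.image _)
    have hmF : ∀ x ∈ F, m x.1 = c := by
      intro x hx
      have : x.1 ∈ Prod.fst '' F := ⟨x, hx, rfl⟩
      rw [hKeq] at this
      exact this.2
    obtain ⟨u, huP, hu⟩ : ∃ u ∈ P, m u.1 < c := by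
      by_contra hno
      push Not at hno
      refine hneq ((image_mono hF.subset).antisymm ?_)
      rintro _ ⟨u, hu, rfl⟩
      rw [hKeq]
      exact ⟨⟨u, hu, rfl⟩, le_antisymm (hmc _ ⟨u, hu, rfl⟩) (hno u hu)⟩
    obtain ⟨t, ht, hle, y, hyP, hyc, hy⟩ := pfh_rot hs (g.comp π - f) (-(m.comp π)) N (-c) hN
      (fun x hx hxN => by
        have := hmF x (by rw [hFeq]; exact ⟨hx, hxN⟩)
        simp [π, this]) ⟨u, huP, by simpa [π] using hu⟩
    have heq : (g.comp π - f) + t • (-(m.comp π)) = (g - t • m).comp π - f := by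
      ext x <;> simp <;> ring
    rw [heq] at hle hy
    have hsubF : F ⊆ {x ∈ P | ((g - t • m).comp π - f) x = N + t * (-c)} := by
      intro x hx
      refine ⟨hF.subset hx, ?_⟩
      rw [← heq]
      have h1 := hmF x hx
      have h2 : (g.comp π - f) x = N := by
        rw [hFeq] at hx; exact hx.2
      rw [add_apply, h2]
      simp [π, h1]
    have hyF := hmax (y := {x ∈ P | ((g - t • m).comp π - f) x = N + t * (-c)})
      ⟨⟨y, hyP, hy⟩, _, _, hle, rfl⟩ hsubF ⟨hyP, hy⟩
    have := hmF y hyF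
    simp [π, this] at hyc
  · intro z hz z' hz' h
    have h1 : (g.comp π - f) z = N := by
      rw [hFeq] at hz; exact hz.2
    have h2 := hN z' hz'
    simp [π] at h1 h2
    rw [h] at h1
    linarith

/-- If the pair `(P, p_x)` has the PF-property, then the number of facets (nonempty faces of
dimension one less than the dimension of the polytope) of the polytope `p_x(P)` is at most the
number of facets of the polytope `P`. -/
theorem pf_property_facet_count {n d : ℕ}
    (P : Set ((Fin n → ℝ) × (Fin d → ℝ)))
    (hP : ∃ s : Set ((Fin n → ℝ) × (Fin d → ℝ)), s.Finite ∧ P = convexHull ℝ s)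
    (hPF : ∀ F : Set ((Fin n → ℝ) × (Fin d → ℝ)),
        IsExposed ℝ P F → IsExposed ℝ (Prod.fst '' P) (Prod.fst '' F)) :
    {G : Set (Fin n → ℝ) |
        IsExposed ℝ (Prod.fst '' P) G ∧ G.Nonempty ∧
          polyDim G + 1 = polyDim (Prod.fst '' P)}.ncard ≤
      {F : Set ((Fin n → ℝ) × (Fin d → ℝ)) |
        IsExposed ℝ P F ∧ F.Nonempty ∧ polyDim F + 1 = polyDim P}.ncard := by
  obtain ⟨s, hs, rfl⟩ := hP
  set P := convexHull ℝ s with hPdef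
  have hex : ∀ G : Set (Fin n → ℝ), IsExposed ℝ (Prod.fst '' P) G ∧ G.Nonempty ∧
      polyDim G + 1 = polyDim (Prod.fst '' P) →
      ∃ F, (IsExposed ℝ P F ∧ F.Nonempty ∧ polyDim F + 1 = polyDim P) ∧
        F ≠ P ∧ ∀ z ∈ P, z.1 ∈ G → z ∈ F := by
    rintro G ⟨hG, hGne, hGdim⟩
    obtain ⟨l, M, hlM, hGeq⟩ := pfh_exposed_rep hG hGne
    have hH := pfh_exposed_of (P := P) (l.comp (ContinuousLinearMap.fst ℝ _ _)) M
      (fun x hx => hlM _ ⟨x, hx, rfl⟩)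
    obtain ⟨F, h1, h2, h3, h4, h5⟩ := pfh_exists_facet hs hH (by
      obtain ⟨g, hg⟩ := hGne
      rw [hGeq] at hg
      obtain ⟨⟨z, hz, rfl⟩, hzM⟩ := hg
      exact ⟨z, hz, hzM⟩) (by
      intro heq
      have : G = Prod.fst '' P := by
        refine hG.subset.antisymm ?_
        rintro _ ⟨z, hz, rfl⟩
        have hz' := hz
        rw [hPdef, ← heq] at hz'
        rw [hGeq]
        exact ⟨⟨z, hz, rfl⟩, hz'.2⟩
      rw [this] at hGdim
      omega)
    refine ⟨F, ⟨h1, h2, h3⟩, h5, fun z hz hzG => h4 ⟨hz, ?_⟩⟩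
    rw [hGeq] at hzG
    exact hzG.2
  choose! φ hφ1 hφ2 hφ3 using hex
  refine Set.ncard_le_ncard_of_injOn φ (fun G hG => hφ1 G hG) ?_
    ((pfh_finite hs).subset (fun F hF => hF.1))
  intro G hG G' hG' heq
  by_contra hne
  have hboth : ∀ K, IsExposed ℝ (Prod.fst '' P) K → G ⊆ K → G' ⊆ K → K = Prod.fst '' P := by
    intro K hK h1 h2
    by_contra hKQ
    exact hne ((pfh_facet_eq hG.1 hG.2.1 hG.2.2 hK h1 hKQ).trans
      (pfh_facet_eq hG'.1 hG'.2.1 hG'.2.2 hK h2 hKQ).symm)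
  obtain ⟨hF, hFne, -⟩ := hφ1 G hG
  have hFP := hφ2 G hG
  have hFG := hφ3 G hG
  have hFG' := hφ3 G' hG'
  rw [← heq] at hFG'
  generalize φ G = F at *
  obtain ⟨f, M, hfM, hFeq⟩ := pfh_exposed_rep hF hFne
  obtain ⟨L, hL, hLQ, hLmin⟩ := pfh_lower hs (hFne.mono hF.subset) hPF f
  have hlift : ∀ G₀ : Set (Fin n → ℝ), G₀ ⊆ Prod.fst '' P →
      (∀ z ∈ P, z.1 ∈ G₀ → z ∈ F) → G₀ ⊆ Prod.fst '' (F ∩ L) := by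
    intro G₀ hsub hin g hg
    have := hsub hg
    rw [← hLQ] at this
    obtain ⟨z, hz, rfl⟩ := this
    exact ⟨z, ⟨hin z (hL.subset hz) hg, hz⟩, rfl⟩
  have hQ := hboth _ (hPF _ (hF.inter hL)) (hlift G hG.1.subset hFG) (hlift G' hG'.1.subset hFG')
  refine hFP (hF.subset.antisymm ?_)
  intro z hz
  have : z.1 ∈ Prod.fst '' (F ∩ L) := by rw [hQ]; exact ⟨z, hz, rfl⟩
  obtain ⟨y, ⟨hyF, hyL⟩, hyz⟩ := this
  have h1 := hLmin y hyL z hz hyz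
  rw [hFeq] at hyF ⊢
  exact ⟨hz, le_antisymm (hfM z hz) (hyF.2 ▸ h1)⟩
end

section
/- Let P ⊆ ℝⁿ × ℝᵈ be a polytope such that the polytope p_x(P) is a simplex (its vertices are affinely independent) and every vertex of P is mapped by p_x to a vertex of p_x(P). Then the pair (P, p_x) has the PF-property. -/
open Set

/-- A function given by an affinely independent set: indicator of a subset. -/
lemma pf_exists_functional {n : ℕ} (V W : Set (Fin n → ℝ)) (hV : V.Finite)
    (hW : W ⊆ V) (hind : AffineIndependent ℝ ((↑) : V → (Fin n → ℝ))) :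
    ∃ f : (Fin n → ℝ) →ᵃ[ℝ] ℝ, (∀ v ∈ W, f v = 1) ∧ (∀ v ∈ V, v ∉ W → f v = 0) := by
  classical
  obtain ⟨t, hVt, ht, hspan⟩ := exists_subset_affineIndependent_affineSpan_eq_top hind
  let b : AffineBasis t ℝ (Fin n → ℝ) := ⟨(↑), ht, by simpa using hspan⟩
  have hb : ∀ i : t, b i = (i : Fin n → ℝ) := fun i => rfl
  have hWf : W.Finite := hV.subset hW
  have hfin : ((↑) ⁻¹' W : Set t).Finite := hWf.preimage Subtype.val_injective.injOn
  have hev : ∀ (s : Finset t) (x : Fin n → ℝ),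
      (∑ i ∈ s, b.coord i) x = ∑ i ∈ s, b.coord i x := by
    intro s x
    induction s using Finset.induction_on with
    | empty => simp
    | insert a s ha ih => rw [Finset.sum_insert ha, Finset.sum_insert ha, ← ih]; rfl
  refine ⟨∑ i ∈ hfin.toFinset, b.coord i, ?_, ?_⟩
  · intro v hv
    have h := hev hfin.toFinset (b ⟨v, hVt (hW hv)⟩)
    rw [hb] at h
    rw [h, ← hb]
    simp only [AffineBasis.coord_apply]
    rw [Finset.sum_ite_eq']
    simp [hv]
  · intro v hv hvW
    have h := hev hfin.toFinset (b ⟨v, hVt hv⟩)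
    rw [hb] at h
    rw [h, ← hb]
    simp only [AffineBasis.coord_apply]
    rw [Finset.sum_ite_eq']
    simp [hvW]

lemma pf_face_exposed {n : ℕ} (V W : Set (Fin n → ℝ)) (hV : V.Finite)
    (hW : W ⊆ V) (hind : AffineIndependent ℝ ((↑) : V → (Fin n → ℝ))) :
    IsExposed ℝ (convexHull ℝ V) (convexHull ℝ W) := by
  classical
  intro hne
  obtain ⟨w0, hw0⟩ := convexHull_nonempty_iff.1 hne
  obtain ⟨f, h1, h0⟩ := pf_exists_functional V W hV hW hind
  have hle : ∀ x ∈ convexHull ℝ V, f x ≤ 1 := by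
    have hc : Convex ℝ (f ⁻¹' Iic 1) := (convex_Iic (1 : ℝ)).affine_preimage f
    intro x hx
    refine convexHull_min ?_ hc hx
    intro v hv
    by_cases hvW : v ∈ W
    · simp [h1 v hvW]
    · simp [h0 v hv hvW]
  have heq : ∀ x ∈ convexHull ℝ W, f x = 1 := by
    have hc : Convex ℝ (f ⁻¹' {1}) := (convex_singleton (1 : ℝ)).affine_preimage f
    intro x hx
    exact convexHull_min (fun v hv => h1 v hv) hc hx
  have hlin : ∀ x y, f.linear y ≤ f.linear x ↔ f y ≤ f x := by
    intro x y
    rw [f.decomp]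
    simp
  refine ⟨f.linear.toContinuousLinearMap, ?_⟩
  ext x
  simp only [mem_ofPred_eq, LinearMap.coe_toContinuousLinearMap', hlin]
  constructor
  · intro hx
    exact ⟨convexHull_mono hW hx, fun y hy => by rw [heq x hx]; exact hle y hy⟩
  · rintro ⟨hx, hmax⟩
    have hfx : f x = 1 := le_antisymm (hle x hx)
      (by have := hmax w0 (subset_convexHull ℝ V (hW hw0)); rwa [h1 w0 hw0] at this)
    have hU : V = W ∪ (V \ W) := (union_diff_cancel hW).symm
    by_cases hD : (V \ W).Nonempty
    · rw [hU, convexHull_union ⟨w0, hw0⟩ hD, mem_convexJoin] at hx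
      obtain ⟨a, ha, c, hc, a', c', ha', hc', hac, rfl⟩ := hx
      have hfc : f c = 0 := by
        have hcx : Convex ℝ (f ⁻¹' {0}) := (convex_singleton (0 : ℝ)).affine_preimage f
        exact convexHull_min (fun v hv => h0 v hv.1 hv.2) hcx hc
      rw [Convex.combo_affine_apply hac, heq a ha, hfc] at hfx
      have e1 : a' = 1 := by simpa using hfx
      have e2 : c' = 0 := by linarith
      simpa [e1, e2] using ha
    · rw [not_nonempty_iff_eq_empty] at hD
      rwa [hU, hD, union_empty] at hx

lemma pf_hull_extreme {E : Type*} [AddCommGroup E] [Module ℝ E] [TopologicalSpace E] [T2Space E]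
    [IsTopologicalAddGroup E] [ContinuousSMul ℝ E] [LocallyConvexSpace ℝ E] {K : Set E}
    (hK : IsCompact K) (hc : Convex ℝ K) (hf : (K.extremePoints ℝ).Finite) :
    convexHull ℝ (K.extremePoints ℝ) = K := by
  have h := closure_convexHull_extremePoints hK hc
  rwa [(hf.isClosed_convexHull ℝ).closure_eq] at h


/-- If `P ⊆ ℝⁿ × ℝᵈ` is a polytope such that `p_x(P)` is a simplex (its vertex set is affinely
independent) and every vertex of `P` is projected by `p_x` to a vertex of `p_x(P)`, then the
pair `(P, p_x)` has the PF-property. -/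
theorem simplex_projection_pf_property {n d : ℕ}
    (P : Set ((Fin n → ℝ) × (Fin d → ℝ)))
    (hP : ∃ s : Set ((Fin n → ℝ) × (Fin d → ℝ)), s.Finite ∧ P = convexHull ℝ s)
    (hsimplex : AffineIndependent ℝ
      ((↑) : Set.extremePoints ℝ (Prod.fst '' P) → (Fin n → ℝ)))
    (hvert : ∀ v ∈ Set.extremePoints ℝ P,
        v.1 ∈ Set.extremePoints ℝ (Prod.fst '' P)) :
    ∀ F : Set ((Fin n → ℝ) × (Fin d → ℝ)),
      IsExposed ℝ P F → IsExposed ℝ (Prod.fst '' P) (Prod.fst '' F) := by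

  intro F hF
  obtain ⟨s, hs, rfl⟩ := hP
  set P := convexHull ℝ s with hPdef
  have hPc : IsCompact P := hs.isCompact_convexHull ℝ
  have hPconv : Convex ℝ P := convex_convexHull ℝ s
  have hPe : (P.extremePoints ℝ).Finite := hs.subset extremePoints_convexHull_subset
  have hFe : F.extremePoints ℝ ⊆ P.extremePoints ℝ :=
    hF.isExtreme.extremePoints_subset_extremePoints
  have hFh := pf_hull_extreme (hF.isCompact hPc) (hF.convex hPconv) (hPe.subset hFe)
  have him : ∀ A : Set ((Fin n → ℝ) × (Fin d → ℝ)),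
      Prod.fst '' (convexHull ℝ A) = convexHull ℝ (Prod.fst '' A) := fun A =>
    (LinearMap.fst ℝ (Fin n → ℝ) (Fin d → ℝ)).image_convexHull A
  have hQe : ((Prod.fst '' P).extremePoints ℝ).Finite := by
    rw [hPdef, him]
    exact (hs.image _).subset extremePoints_convexHull_subset
  have hQh : convexHull ℝ ((Prod.fst '' P).extremePoints ℝ) = Prod.fst '' P :=
    pf_hull_extreme (hPc.image continuous_fst) (by rw [hPdef, him]; exact convex_convexHull ℝ _) hQe
  have key := pf_face_exposed ((Prod.fst '' P).extremePoints ℝ) (Prod.fst '' (F.extremePoints ℝ))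
    hQe (by rintro _ ⟨v, hv, rfl⟩; exact hvert v (hFe hv)) hsimplex
  rwa [hQh, ← him, hFh] at key
end

section
/- Let P* := {(x, y₁, y₂) ∈ ℝ × ℝ² : x − y₁ − y₂ ≤ 0, y₁ + y₂ + x ≤ 2, y₁ − y₂ − x ≤ 0, y₂ − y₁ − x ≤ 0}. Then p_x(P*) = [0, 1], and P* is a polyhedral relation of type (1, 2) affinely generated by the four affine maps ρ₁ : x ↦ (x, 0), ρ₂ : x ↦ (0, x), ρ₃ : x ↦ (1 − x, 1), ρ₄ : x ↦ (1, 1 − x); that is, for every x ∈ [0, 1], P* ∩ p_x⁻¹(x) = conv{(x, ρ_j(x)) : 1 ≤ j ≤ 4}. -/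
open Set

theorem exists_ratio (u v : ℝ) (h0 : 0 ≤ u) (h1 : u ≤ v) :
    ∃ a : ℝ, 0 ≤ a ∧ a ≤ 1 ∧ u = a * v := by
  rcases eq_or_lt_of_le (h0.trans h1) with h | h
  · exact ⟨0, le_rfl, zero_le_one, by linarith⟩
  · exact ⟨u / v, by positivity, (div_le_one h).2 h1, by field_simp⟩

/-- Let `P* = {(x, y₁, y₂) ∈ ℝ × ℝ² : x − y₁ − y₂ ≤ 0, y₁ + y₂ + x ≤ 2, y₁ − y₂ − x ≤ 0,
y₂ − y₁ − x ≤ 0}`.  Then `p_x(P*) = [0, 1]` and `P*` is a polyhedral relation of type `(1, 2)`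
affinely generated by `ρ₁ : x ↦ (x, 0)`, `ρ₂ : x ↦ (0, x)`, `ρ₃ : x ↦ (1 − x, 1)`,
`ρ₄ : x ↦ (1, 1 − x)`: for every `x ∈ [0, 1]`,
`P* ∩ p_x⁻¹(x) = conv{(x, ρ_j(x)) : 1 ≤ j ≤ 4}`. -/
theorem pstar_polyhedral_relation
    (Pstar : Set (ℝ × ℝ × ℝ))
    (hPstar : Pstar = {p : ℝ × ℝ × ℝ |
      p.1 - p.2.1 - p.2.2 ≤ 0 ∧ p.2.1 + p.2.2 + p.1 ≤ 2 ∧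
      p.2.1 - p.2.2 - p.1 ≤ 0 ∧ p.2.2 - p.2.1 - p.1 ≤ 0}) :
    Prod.fst '' Pstar = Set.Icc (0 : ℝ) 1 ∧
      ∀ x ∈ Set.Icc (0 : ℝ) 1,
        Pstar ∩ Prod.fst ⁻¹' {x} =
          convexHull ℝ {(x, x, 0), (x, 0, x), (x, 1 - x, 1), (x, 1, 1 - x)} := by
  subst hPstar
  constructor
  · ext x
    simp only [Set.mem_image, Set.mem_setOf_eq, Set.mem_Icc]
    constructor
    · rintro ⟨p, ⟨h1, h2, h3, h4⟩, rfl⟩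
      constructor <;> linarith
    · rintro ⟨h0, h1⟩
      refine ⟨(x, x, 0), ⟨?_, ?_, ?_, ?_⟩, rfl⟩ <;> dsimp only <;> linarith
  · rintro x ⟨hx0, hx1⟩
    apply Set.Subset.antisymm
    · rintro ⟨x', y, z⟩ ⟨⟨h1, h2, h3, h4⟩, h5⟩
      simp only [Set.mem_preimage, Set.mem_singleton_iff] at h5
      subst h5
      dsimp only at h1 h2 h3 h4 hx0 hx1 ⊢
      obtain ⟨a, ha0, ha1, ha⟩ := exists_ratio (y + z - x') (2 - 2 * x') (by linarith) (by linarith)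
      obtain ⟨b, hb0, hb1, hb⟩ := exists_ratio (y - z + x') (2 * x') (by linarith) (by linarith)
      set S : Set (ℝ × ℝ × ℝ) :=
        {(x', x', 0), (x', 0, x'), (x', 1 - x', 1), (x', 1, 1 - x')} with hS
      have hc := convex_convexHull ℝ S
      have m1 : (x', x', 0) ∈ convexHull ℝ S := subset_convexHull ℝ S (by simp [hS])
      have m2 : (x', 0, x') ∈ convexHull ℝ S := subset_convexHull ℝ S (by simp [hS])
      have m3 : (x', 1 - x', 1) ∈ convexHull ℝ S := subset_convexHull ℝ S (by simp [hS])
      have m4 : (x', 1, 1 - x') ∈ convexHull ℝ S := subset_convexHull ℝ S (by simp [hS])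
      have n1 := hc m1 m2 hb0 (sub_nonneg.2 hb1) (by ring)
      have n2 := hc m4 m3 hb0 (sub_nonneg.2 hb1) (by ring)
      have n3 := hc n2 n1 ha0 (sub_nonneg.2 ha1) (by ring)
      convert n3 using 1
      simp only [Prod.smul_mk, Prod.mk_add_mk, smul_eq_mul, Prod.mk.injEq]
      refine ⟨?_, ?_, ?_⟩
      · ring
      · linear_combination (ha + hb) / 2
      · linear_combination (ha - hb) / 2
    · apply convexHull_min
      · rintro p (rfl | rfl | rfl | rfl) <;>
          refine ⟨⟨?_, ?_, ?_, ?_⟩, rfl⟩ <;> dsimp only <;> linarith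
      · rintro ⟨p, p1, p2⟩ ⟨⟨h1, h2, h3, h4⟩, h5⟩ ⟨q, q1, q2⟩ ⟨⟨g1, g2, g3, g4⟩, g5⟩ a b ha hb hab
        simp only [Set.mem_preimage, Set.mem_singleton_iff] at h5 g5
        subst h5
        subst g5
        dsimp only at *
        obtain rfl : b = 1 - a := by linarith
        simp only [Prod.smul_mk, Prod.mk_add_mk, smul_eq_mul]
        refine ⟨⟨?_, ?_, ?_, ?_⟩, ?_⟩
        · dsimp only; nlinarith [mul_le_mul_of_nonneg_left h1 ha, mul_le_mul_of_nonneg_left g1 hb]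
        · dsimp only; nlinarith [mul_le_mul_of_nonneg_left h2 ha, mul_le_mul_of_nonneg_left g2 hb]
        · dsimp only; nlinarith [mul_le_mul_of_nonneg_left h3 ha, mul_le_mul_of_nonneg_left g3 hb]
        · dsimp only; nlinarith [mul_le_mul_of_nonneg_left h4 ha, mul_le_mul_of_nonneg_left g4 hb]
        · simp only [Set.mem_preimage, Set.mem_singleton_iff]; ring
end

section
/- Let n ≥ 2, let Q_m ⊆ ℝ^m denote the parity polytope (the convex hull of the 0/1-vectors in ℝ^m with an even number of coordinates equal to 1), and let P* := {(x, y₁, y₂) ∈ ℝ × ℝ² : x − y₁ − y₂ ≤ 0, y₁ + y₂ + x ≤ 2, y₁ − y₂ − x ≤ 0, y₂ − y₁ − x ≤ 0}. Define Q*_n := {(x, y, z) ∈ ℝ × ℝ² × ℝ^{n−2} : (x, z) ∈ Q_{n−1}, (x, y) ∈ P*}. Then the projection of Q*_n onto the coordinates (y, z), i.e. p_{y,z}(Q*_n) ⊆ ℝ² × ℝ^{n−2} ≅ ℝⁿ, equals the parity polytope Q_n. -/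
open Set

/-- The parity polytope `Q_m ⊆ ℝ^m`: the convex hull of the `0/1`-vectors with an even number
of coordinates equal to `1`. -/
def parityPolytope (m : ℕ) : Set (Fin m → ℝ) :=
  convexHull ℝ {v : Fin m → ℝ | (∀ i, v i = 0 ∨ v i = 1) ∧ Even {i | v i = 1}.ncard}

lemma ncard_cons_one {k : ℕ} (a : ℝ) (v : Fin k → ℝ) :
    {i | (Fin.cons a v : Fin (k + 1) → ℝ) i = 1}.ncard
      = (if a = 1 then 1 else 0) + {i | v i = 1}.ncard := by
  classical
  have key : ∀ {j : ℕ} (w : Fin j → ℝ), {i | w i = 1}.ncard = ∑ i, if w i = 1 then 1 else 0 := by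
    intro j w
    rw [Set.ncard_eq_toFinset_card']
    simp
  rw [key, key, Fin.sum_univ_succ]
  simp

/-- The vertices of the parity polytope. -/
def parityVerts (k : ℕ) : Set (Fin k → ℝ) :=
  {v : Fin k → ℝ | (∀ i, v i = 0 ∨ v i = 1) ∧ Even {i | v i = 1}.ncard}

lemma mem_verts_cons {k : ℕ} (a : ℝ) (v : Fin k → ℝ) :
    (Fin.cons a v : Fin (k + 1) → ℝ) ∈ parityVerts (k + 1) ↔
      ((a = 0 ∨ a = 1) ∧ ∀ i, v i = 0 ∨ v i = 1) ∧
        Even ((if a = 1 then 1 else 0) + {i | v i = 1}.ncard) := by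
  unfold parityVerts
  rw [Set.mem_ofPred_eq, ncard_cons_one, Fin.forall_fin_succ]
  simp

lemma verts_subset (k : ℕ) : parityVerts k ⊆ parityPolytope k := subset_convexHull ℝ _

lemma convex_pp (k : ℕ) : Convex ℝ (parityPolytope k) := convex_convexHull ℝ _

/-- The affine lifting map. -/
def liftMap (m : ℕ) (t s : ℝ) (v : Fin (m + 1) → ℝ) : Fin (m + 2) → ℝ :=
  Fin.cons (v 0 * t + (1 - v 0) * s)
    (Fin.cons (v 0 * (1 - t) + (1 - v 0) * s) (Fin.tail v))

lemma seg_mem {m : ℕ} (t : ℝ) (h0 : 0 ≤ t) (h1 : t ≤ 1) (a b c d : ℝ) (z : Fin m → ℝ)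
    (h : (Fin.cons a (Fin.cons b z) : Fin (m + 2) → ℝ) ∈ parityPolytope (m + 2))
    (h' : (Fin.cons c (Fin.cons d z) : Fin (m + 2) → ℝ) ∈ parityPolytope (m + 2)) :
    (Fin.cons (t * a + (1 - t) * c) (Fin.cons (t * b + (1 - t) * d) z) : Fin (m + 2) → ℝ)
      ∈ parityPolytope (m + 2) := by
  have := convex_pp (m + 2) h h' h0 (sub_nonneg.2 h1) (by ring)
  convert this using 1
  ext i
  refine Fin.cases ?_ (fun i => Fin.cases ?_ (fun i => ?_) i) i
  · simp
  · simp
  · simp; ring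

lemma lift_mem {m : ℕ} (t s : ℝ) (ht0 : 0 ≤ t) (ht1 : t ≤ 1) (hs0 : 0 ≤ s) (hs1 : s ≤ 1)
    (v : Fin (m + 1) → ℝ) (hv : v ∈ parityPolytope (m + 1)) :
    liftMap m t s v ∈ parityPolytope (m + 2) := by
  have hsub : parityPolytope (m + 1) ⊆ {v | liftMap m t s v ∈ parityPolytope (m + 2)} := by
    refine convexHull_min ?_ ?_
    · intro v hv
      change v ∈ parityVerts (m + 1) at hv
      obtain ⟨a, z, rfl⟩ : ∃ a z, v = Fin.cons a z := ⟨v 0, Fin.tail v, by simp⟩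
      rw [mem_verts_cons] at hv
      obtain ⟨⟨ha, hz⟩, he⟩ := hv
      have hb : ∀ b c : ℝ, (b = 0 ∨ b = 1) → (c = 0 ∨ c = 1) →
          Even ((if b = 1 then 1 else 0) + ((if c = 1 then 1 else 0) + {i | z i = 1}.ncard)) →
          (Fin.cons b (Fin.cons c z) : Fin (m + 2) → ℝ) ∈ parityPolytope (m + 2) := by
        intro b c hb hc he
        apply verts_subset
        rw [mem_verts_cons, ncard_cons_one, Fin.forall_fin_succ]
        exact ⟨⟨hb, by simpa using hc, by simpa using hz⟩, he⟩
      rw [Set.mem_ofPred_eq, liftMap]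
      rcases ha with rfl | rfl
      · have := seg_mem s hs0 hs1 1 1 0 0 z
          (hb 1 1 (by simp) (by simp) (by simp at he ⊢; grind))
          (hb 0 0 (by simp) (by simp) (by simpa using he))
        simpa using this
      · have := seg_mem t ht0 ht1 1 0 0 1 z
          (hb 1 0 (by simp) (by simp) (by simpa using he))
          (hb 0 1 (by simp) (by simp) (by simpa using he))
        simpa using this
    · intro v hv w hw a b ha hb hab
      have := convex_pp (m + 2) hv hw ha hb hab
      rw [Set.mem_ofPred_eq]
      convert this using 1
      obtain rfl : b = 1 - a := by linarith
      ext i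
      refine Fin.cases ?_ (fun i => Fin.cases ?_ (fun i => ?_) i) i
      · simp [liftMap]; ring
      · simp [liftMap]; ring
      · simp [liftMap, Fin.tail]
  exact hsub hv

lemma exists_ts (x y₁ y₂ : ℝ) (h1 : x - y₁ - y₂ ≤ 0) (h2 : y₁ + y₂ + x ≤ 2)
    (h3 : y₁ - y₂ - x ≤ 0) (h4 : y₂ - y₁ - x ≤ 0) :
    ∃ t s : ℝ, 0 ≤ t ∧ t ≤ 1 ∧ 0 ≤ s ∧ s ≤ 1 ∧ y₁ = x * t + (1 - x) * s ∧
      y₂ = x * (1 - t) + (1 - x) * s := by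
  have hx0 : 0 ≤ x := by linarith
  have hx1 : x ≤ 1 := by linarith
  have ht : ∃ t : ℝ, 0 ≤ t ∧ t ≤ 1 ∧ x * t = (x + y₁ - y₂) / 2 := by
    rcases hx0.eq_or_lt with h | h
    · exact ⟨0, le_rfl, zero_le_one, by linarith⟩
    · exact ⟨(x + y₁ - y₂) / 2 / x, div_nonneg (by linarith) hx0,
        (div_le_one h).2 (by linarith), by field_simp⟩
  have hs : ∃ s : ℝ, 0 ≤ s ∧ s ≤ 1 ∧ (1 - x) * s = (y₁ + y₂ - x) / 2 := by
    rcases hx1.eq_or_lt with h | h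
    · exact ⟨0, le_rfl, zero_le_one, by linarith⟩
    · have h' : 0 < 1 - x := by linarith
      exact ⟨(y₁ + y₂ - x) / 2 / (1 - x), div_nonneg (by linarith) h'.le,
        (div_le_one h').2 (by linarith), by field_simp⟩
  obtain ⟨t, t0, t1, ht⟩ := ht
  obtain ⟨s, s0, s1, hs⟩ := hs
  exact ⟨t, s, t0, t1, s0, s1, by linarith, by linarith⟩

/-- For `n = m + 2 ≥ 2`, let
`Q*_n = {(x, y, z) ∈ ℝ × ℝ² × ℝ^{n−2} : (x, z) ∈ Q_{n−1}, (x, y) ∈ P*}`, where `Q_{n−1}` is the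
parity polytope (with `(x, z)` listing the first and the last `n − 2` coordinates) and `P*` is
the polyhedral relation of Kaibel–Pashkovich.  Then the projection of `Q*_n` onto the `(y, z)`
coordinates, viewed in `ℝ² × ℝ^{n−2} ≅ ℝⁿ`, equals the parity polytope `Q_n`. -/
theorem parity_polytope_step (m : ℕ)
    (Pstar : Set (ℝ × ℝ × ℝ))
    (hPstar : Pstar = {p : ℝ × ℝ × ℝ |
      p.1 - p.2.1 - p.2.2 ≤ 0 ∧ p.2.1 + p.2.2 + p.1 ≤ 2 ∧
      p.2.1 - p.2.2 - p.1 ≤ 0 ∧ p.2.2 - p.2.1 - p.1 ≤ 0})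
    (Qstar : Set (ℝ × (ℝ × ℝ) × (Fin m → ℝ)))
    (hQstar : Qstar = {p : ℝ × (ℝ × ℝ) × (Fin m → ℝ) |
      (Fin.cons p.1 p.2.2 : Fin (m + 1) → ℝ) ∈ parityPolytope (m + 1) ∧
        (p.1, p.2.1) ∈ Pstar}) :
    (fun p : ℝ × (ℝ × ℝ) × (Fin m → ℝ) =>
        (Fin.cons p.2.1.1 (Fin.cons p.2.1.2 p.2.2) : Fin (m + 2) → ℝ)) '' Qstar =
      parityPolytope (m + 2) := by
  subst hPstar hQstar
  apply Set.Subset.antisymm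
  · rintro _ ⟨⟨x, ⟨y₁, y₂⟩, z⟩, ⟨hxz, h1, h2, h3, h4⟩, rfl⟩
    obtain ⟨t, s, t0, t1, s0, s1, e1, e2⟩ := exists_ts x y₁ y₂ h1 h2 h3 h4
    have := lift_mem t s t0 t1 s0 s1 _ hxz
    simpa [liftMap, ← e1, ← e2] using this
  · refine convexHull_min ?_ ?_
    · intro w hw
      change w ∈ parityVerts (m + 2) at hw
      obtain ⟨a, b, z, rfl⟩ : ∃ a b z, w = Fin.cons a (Fin.cons b z) :=
        ⟨w 0, w 1, Fin.tail (Fin.tail w), by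
          ext i
          refine Fin.cases ?_ (fun i => Fin.cases ?_ (fun i => ?_) i) i <;> simp [Fin.tail]⟩
      rw [mem_verts_cons, ncard_cons_one, Fin.forall_fin_succ] at hw
      obtain ⟨⟨ha, hb, hz⟩, he⟩ := hw
      simp only [Fin.cons_zero, Fin.cons_succ] at hb hz
      have key : ∀ x : ℝ, (x = 0 ∨ x = 1) →
          Even ((if x = 1 then 1 else 0) + {i | z i = 1}.ncard) →
          (Fin.cons x z : Fin (m + 1) → ℝ) ∈ parityPolytope (m + 1) := fun x hx hx' =>
        verts_subset _ ((mem_verts_cons x z).2 ⟨⟨hx, hz⟩, hx'⟩)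
      rcases ha with rfl | rfl <;> rcases hb with rfl | rfl
      · exact ⟨(0, (0, 0), z), ⟨key 0 (by simp) (by simpa using he), by norm_num⟩, rfl⟩
      · exact ⟨(1, (0, 1), z), ⟨key 1 (by simp) (by simpa using he), by norm_num⟩, rfl⟩
      · exact ⟨(1, (1, 0), z), ⟨key 1 (by simp) (by simpa using he), by norm_num⟩, rfl⟩
      · exact ⟨(0, (1, 1), z), ⟨key 0 (by simp) (by simp at he ⊢; grind), by norm_num⟩, rfl⟩
    · rintro _ ⟨⟨x, ⟨y₁, y₂⟩, z⟩, ⟨hxz, h1, h2, h3, h4⟩, rfl⟩ _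
        ⟨⟨x', ⟨y₁', y₂'⟩, z'⟩, ⟨hxz', h1', h2', h3', h4'⟩, rfl⟩ a b ha hb hab
      obtain rfl : b = 1 - a := by linarith
      dsimp only at *
      refine ⟨(a * x + (1 - a) * x', (a * y₁ + (1 - a) * y₁', a * y₂ + (1 - a) * y₂'),
        a • z + (1 - a) • z'), ⟨?_, ?_, ?_, ?_, ?_⟩, ?_⟩
      · have := convex_pp _ hxz hxz' ha hb hab
        convert this using 1
        ext i
        refine Fin.cases ?_ (fun i => ?_) i <;> simp
      · dsimp only; nlinarith
      · dsimp only; nlinarith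
      · dsimp only; nlinarith
      · dsimp only; nlinarith
      · ext i
        refine Fin.cases ?_ (fun i => Fin.cases ?_ (fun i => ?_) i) i <;> simp
end

section
/- Let G = (V, E) be a finite simple graph and U ⊆ V a set of vertices such that the induced subgraph G[U] is a clique. Then the pair (STAB(G), p_U) has the PF-property, where p_U : ℝ^V → ℝ^U is the projection onto the coordinates indexed by U; moreover p_U(STAB(G)) = STAB(G[U]), which is a simplex (the convex hull of the zero vector and the |U| unit vectors in ℝ^U). -/
open Set

/-- The stable set polytope of a graph: the convex hull of the characteristic vectors of its
independent (stable) sets. -/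
def stabPolytope {V : Type*} (G : SimpleGraph V) : Set (V → ℝ) :=
  convexHull ℝ
    {x : V → ℝ | ∃ S : Set V, (∀ u ∈ S, ∀ w ∈ S, ¬ G.Adj u w) ∧ x = S.indicator 1}

/-- A supporting hyperplane cuts a convex hull in the hull of the generators lying on it. -/
lemma convexHull_face_aux {E : Type*} [AddCommGroup E] [Module ℝ E] (X : Set E) (l : E →ₗ[ℝ] ℝ)
    (M : ℝ) (h : ∀ x ∈ X, l x ≤ M) :
    (∀ x ∈ convexHull ℝ X, l x ≤ M) ∧
      {x | x ∈ convexHull ℝ X ∧ l x = M} = convexHull ℝ {x | x ∈ X ∧ l x = M} := by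
  have key : convexHull ℝ X ⊆
      {x | l x ≤ M ∧ (l x = M → x ∈ convexHull ℝ {x | x ∈ X ∧ l x = M})} := by
    apply convexHull_min
    · intro x hx
      exact ⟨h x hx, fun hM => subset_convexHull ℝ _ ⟨hx, hM⟩⟩
    · intro x hx y hy a b ha hb hab
      simp only [Set.mem_ofPred_eq, map_add, map_smul, smul_eq_mul] at hx hy ⊢
      have h1 := mul_le_mul_of_nonneg_left hx.1 ha
      have h2 := mul_le_mul_of_nonneg_left hy.1 hb
      have h3 : a * M + b * M = M := by rw [← add_mul, hab, one_mul]
      refine ⟨by linarith, fun hM => ?_⟩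
      rcases ha.eq_or_lt with rfl | ha'
      · have : b = 1 := by linarith
        subst this
        simp only [zero_smul, one_smul, zero_add]
        exact hy.2 (by linarith)
      rcases hb.eq_or_lt with rfl | hb'
      · have : a = 1 := by linarith
        subst this
        simp only [zero_smul, one_smul, add_zero]
        exact hx.2 (by linarith)
      have e1 : l x = M := mul_left_cancel₀ ha'.ne' (by linarith)
      have e2 : l y = M := mul_left_cancel₀ hb'.ne' (by linarith)
      exact convex_convexHull ℝ _ (hx.2 e1) (hy.2 e2) ha hb hab
  refine ⟨fun x hx => (key hx).1, Subset.antisymm (fun x hx => (key hx.1).2 hx.2) ?_⟩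
  intro x hx
  refine ⟨convexHull_mono (fun y hy => hy.1) hx, ?_⟩
  exact convexHull_min (t := {x | l x = M}) (fun y hy => hy.2)
    (convex_hyperplane l.isLinear M) hx

/-- Faces of a simplex: any subset of the vertices spans an exposed face. -/
lemma simplex_face_aux {ι : Type*} [Fintype ι] [DecidableEq ι] (T : Set (ι → ℝ))
    (hT : T ⊆ {0} ∪ {e | ∃ u : ι, e = fun w => if w = u then 1 else 0}) :
    IsExposed ℝ (convexHull ℝ
      ({0} ∪ {e : ι → ℝ | ∃ u : ι, e = fun w => if w = u then 1 else 0})) (convexHull ℝ T) := by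
  classical
  intro hne
  rw [convexHull_nonempty_iff] at hne
  obtain ⟨c, M, hc, hTc⟩ : ∃ (c : ι → ℝ) (M : ℝ),
      (0 ≤ M ∧ ∀ u, c u ≤ M) ∧ (((0 : ι → ℝ) ∈ T ↔ 0 = M) ∧
        ∀ u, ((fun w => if w = u then 1 else 0 : ι → ℝ) ∈ T ↔ c u = M)) := by
    by_cases h0 : (0 : ι → ℝ) ∈ T
    · refine ⟨fun u => if (fun w => if w = u then 1 else 0 : ι → ℝ) ∈ T then 0 else -1, 0,
        ⟨le_rfl, fun u => ?_⟩, by simp [h0], fun u => ?_⟩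
      · dsimp only; split_ifs <;> norm_num
      · dsimp only; split_ifs with h <;> simp [h]
    · refine ⟨fun u => if (fun w => if w = u then 1 else 0 : ι → ℝ) ∈ T then 1 else 0, 1,
        ⟨zero_le_one, fun u => ?_⟩, by simp [h0], fun u => ?_⟩
      · dsimp only; split_ifs <;> norm_num
      · dsimp only; split_ifs with h <;> simp [h]
  let l : (ι → ℝ) →ₗ[ℝ] ℝ := ∑ i, c i • LinearMap.proj i
  have hl : ∀ u, l (fun w => if w = u then 1 else 0) = c u := by
    intro u
    simp [l]
  have hle : ∀ x ∈ ({0} ∪ {e : ι → ℝ | ∃ u : ι, e = fun w => if w = u then 1 else 0} :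
      Set (ι → ℝ)), l x ≤ M := by
    rintro x (rfl | ⟨u, rfl⟩)
    · simpa using hc.1
    · rw [hl]; exact hc.2 u
  have hTeq : {x | x ∈ ({0} ∪ {e : ι → ℝ | ∃ u : ι, e = fun w => if w = u then 1 else 0} :
      Set (ι → ℝ)) ∧ l x = M} = T := by
    ext x
    constructor
    · rintro ⟨rfl | ⟨u, rfl⟩, h⟩
      · rw [map_zero] at h
        exact hTc.1.2 h
      · rw [hl] at h
        exact (hTc.2 u).2 h
    · intro hx
      refine ⟨hT hx, ?_⟩
      rcases hT hx with rfl | ⟨u, rfl⟩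
      · rw [map_zero]; exact hTc.1.1 hx
      · rw [hl]; exact (hTc.2 u).1 hx
  obtain ⟨hA, hB⟩ := convexHull_face_aux _ l M hle
  rw [hTeq] at hB
  refine ⟨LinearMap.toContinuousLinearMap l, ?_⟩
  rw [← hB]
  obtain ⟨t, ht⟩ := hne
  have ht' := subset_convexHull ℝ T ht
  rw [← hB] at ht'
  ext x
  constructor
  · rintro ⟨hx, hxM⟩
    refine ⟨hx, fun y hy => ?_⟩
    change l y ≤ l x
    rw [hxM]; exact hA y hy
  · rintro ⟨hx, hxM⟩
    refine ⟨hx, le_antisymm (hA x hx) ?_⟩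
    rw [← ht'.2]
    exact hxM t ht'.1

lemma indicator_clique_aux {ι : Type*} [DecidableEq ι] (S : Set ι)
    (hS : ∀ u ∈ S, ∀ w ∈ S, u = w) :
    S.indicator (1 : ι → ℝ) ∈
      ({0} ∪ {e : ι → ℝ | ∃ u : ι, e = fun w => if w = u then 1 else 0} : Set (ι → ℝ)) := by
  rcases S.eq_empty_or_nonempty with rfl | ⟨u, hu⟩
  · left; rw [Set.indicator_empty]; rfl
  · right
    refine ⟨u, ?_⟩
    funext w
    by_cases hw : w = u
    · subst hw; simp [hu]
    · have : w ∉ S := fun h => hw (hS w h u hu)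
      simp [hw, this]

/-- If `U` induces a clique in the finite simple graph `G`, then `(STAB(G), p_U)` has the
PF-property, `p_U(STAB(G)) = STAB(G[U])`, and `STAB(G[U])` is the simplex given by the convex
hull of the zero vector and the `|U|` unit vectors in `ℝ^U`. -/
theorem stab_clique_pf_property {V : Type*} [Fintype V] [DecidableEq V]
    (G : SimpleGraph V) (U : Finset V)
    (hclique : ∀ u ∈ U, ∀ w ∈ U, u ≠ w → G.Adj u w) :
    (∀ F : Set (V → ℝ), IsExposed ℝ (stabPolytope G) F →
        IsExposed ℝ ((fun z (u : {v // v ∈ U}) => z ↑u) '' stabPolytope G)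
          ((fun z (u : {v // v ∈ U}) => z ↑u) '' F)) ∧
      (fun z (u : {v // v ∈ U}) => z ↑u) '' stabPolytope G =
        stabPolytope (SimpleGraph.induce (↑U : Set V) G) ∧
      stabPolytope (SimpleGraph.induce (↑U : Set V) G) =
        convexHull ℝ
          ({0} ∪ {e : (↑U : Set V) → ℝ |
            ∃ u : (↑U : Set V), e = fun w => if w = u then 1 else 0}) := by
  have hX : (fun z (u : {v // v ∈ U}) => z ↑u) ''
      {x : V → ℝ | ∃ S : Set V, (∀ u ∈ S, ∀ w ∈ S, ¬ G.Adj u w) ∧ x = S.indicator 1} =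
      ({0} ∪ {e : {v // v ∈ U} → ℝ | ∃ u, e = fun w => if w = u then 1 else 0}) := by
    ext x
    constructor
    · rintro ⟨_, ⟨S, hS, rfl⟩, rfl⟩
      refine indicator_clique_aux (Subtype.val ⁻¹' S : Set {v // v ∈ U}) ?_
      intro u hu w hw
      by_contra hne
      exact hS u hu w hw (hclique u u.2 w w.2 fun h => hne (Subtype.ext h))
    · rintro (rfl | ⟨u, rfl⟩)
      · exact ⟨0, ⟨∅, by simp, by rw [Set.indicator_empty]; rfl⟩, rfl⟩
      · refine ⟨({(u : V)} : Set V).indicator 1, ⟨{(u : V)}, by simp, rfl⟩, ?_⟩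
        funext w
        by_cases h : w = u
        · subst h; simp
        · have h' : (w : V) ≠ u := fun e => h (Subtype.ext e)
          simp [h, h']
  have hY : {x : (↑U : Set V) → ℝ | ∃ S : Set (↑U : Set V),
      (∀ u ∈ S, ∀ w ∈ S, ¬ (SimpleGraph.induce (↑U : Set V) G).Adj u w) ∧ x = S.indicator 1} =
      ({0} ∪ {e : (↑U : Set V) → ℝ |
            ∃ u : (↑U : Set V), e = fun w => if w = u then 1 else 0}) := by
    ext x
    constructor
    · rintro ⟨S, hS, rfl⟩
      refine indicator_clique_aux S ?_
      intro u hu w hw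
      by_contra hne
      exact hS u hu w hw (hclique u u.2 w w.2 fun h => hne (Subtype.ext h))
    · rintro (rfl | ⟨u, rfl⟩)
      · exact ⟨∅, by simp, by rw [Set.indicator_empty]; rfl⟩
      · refine ⟨{u}, by simp, ?_⟩
        funext w
        simp [Set.indicator_apply]
  let p : (V → ℝ) →ₗ[ℝ] ({v // v ∈ U} → ℝ) := LinearMap.funLeft ℝ ℝ Subtype.val
  have hp : (fun z (u : {v // v ∈ U}) => z ↑u : (V → ℝ) → ({v // v ∈ U} → ℝ)) = p := rfl
  have hI : (fun z (u : {v // v ∈ U}) => z ↑u) '' stabPolytope G = convexHull ℝ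
      ({0} ∪ {e : {v // v ∈ U} → ℝ | ∃ u, e = fun w => if w = u then 1 else 0}) := by
    rw [← hX, hp, stabPolytope, LinearMap.image_convexHull]
  have hJ : stabPolytope (SimpleGraph.induce (↑U : Set V) G) =
        convexHull ℝ
          ({0} ∪ {e : (↑U : Set V) → ℝ |
            ∃ u : (↑U : Set V), e = fun w => if w = u then 1 else 0}) := by
    rw [← hY, stabPolytope]
  refine ⟨?_, hI.trans hJ.symm, hJ⟩
  intro F hF
  rcases F.eq_empty_or_nonempty with rfl | hne
  · rw [image_empty]
    exact fun h => absurd h not_nonempty_empty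
  obtain ⟨l, hl⟩ := hF hne
  obtain ⟨x0, hx0⟩ := hne
  have hx0' := hx0
  rw [hl] at hx0'
  obtain ⟨-, hB⟩ := convexHull_face_aux
    {x : V → ℝ | ∃ S : Set V, (∀ u ∈ S, ∀ w ∈ S, ¬ G.Adj u w) ∧ x = S.indicator 1}
    (l : (V → ℝ) →ₗ[ℝ] ℝ) (l x0) (fun x hx => hx0'.2 x (subset_convexHull ℝ _ hx))
  have hFe : F = {x | x ∈ stabPolytope G ∧ l x = l x0} := by
    ext x
    constructor
    · intro hx
      rw [hl] at hx
      exact ⟨hx.1, le_antisymm (hx0'.2 x hx.1) (hx.2 x0 hx0'.1)⟩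
    · rintro ⟨hx, hxe⟩
      rw [hl]
      exact ⟨hx, fun y hy => (hx0'.2 y hy).trans hxe.ge⟩
  have hFc := hFe.trans hB
  rw [hI, hFc, hp, LinearMap.image_convexHull]
  apply simplex_face_aux
  rw [← hX, hp]
  exact image_mono fun x hx => hx.1
end

section
/- (Chvátal) Let G = (V, E) be a finite simple graph and let U ⊆ V be a clique cutset decomposing G into G₁ = G[V₁ ∪ U] and G₂ = G[V₂ ∪ U]; that is, V = V₁ ∪ U ∪ V₂ with V₁, U, V₂ pairwise disjoint, G[U] is a clique, and no edge of G joins a vertex of V₁ to a vertex of V₂. Then STAB(G) = {z ∈ ℝ^V : the restriction of z to V₁ ∪ U lies in STAB(G₁) and the restriction of z to V₂ ∪ U lies in STAB(G₂)}. -/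
open Set

open Classical in
/-- Coupling of two finite weights with the same marginals along `a` and `b`. -/
lemma coupling_exists {I K : Type*} [Fintype I] (p q : I → ℝ) (a : I → K)
    (hp : ∀ i, 0 ≤ p i) (hq : ∀ i, 0 ≤ q i)
    (h : ∀ k, ∑ i, (if a i = k then p i else 0) = ∑ i, (if a i = k then q i else 0)) :
    ∃ r : I → I → ℝ, (∀ i j, 0 ≤ r i j) ∧
      (∀ i j, r i j ≠ 0 → a i = a j ∧ p i ≠ 0 ∧ q j ≠ 0) ∧
      (∀ i, ∑ j, r i j = p i) ∧ (∀ j, ∑ i, r i j = q j) := by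
  set P : K → ℝ := fun k => ∑ i, (if a i = k then p i else 0) with hP
  have hP0 : ∀ k, 0 ≤ P k := fun k => Finset.sum_nonneg fun i _ => by
    split_ifs
    · exact hp i
    · exact le_rfl
  have hpP : ∀ i, P (a i) = 0 → p i = 0 := by
    intro i hi
    have := (Finset.sum_eq_zero_iff_of_nonneg (fun j _ => by
      split_ifs
      · exact hp j
      · exact le_rfl)).1 hi i (Finset.mem_univ _)
    simpa using this
  have hqP : ∀ i, P (a i) = 0 → q i = 0 := by
    intro i hi
    have hi' := (h (a i)).symm.trans hi
    have := (Finset.sum_eq_zero_iff_of_nonneg (fun j _ => by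
      split_ifs
      · exact hq j
      · exact le_rfl)).1 hi' i (Finset.mem_univ _)
    simpa using this
  refine ⟨fun i j => if a i = a j then p i * q j / P (a i) else 0, ?_, ?_, ?_, ?_⟩
  · intro i j
    dsimp only
    split_ifs
    · exact div_nonneg (mul_nonneg (hp i) (hq j)) (hP0 _)
    · exact le_rfl
  · intro i j hij
    dsimp only at hij
    split_ifs at hij with h1
    · refine ⟨h1, ?_, ?_⟩ <;> intro h2 <;> simp [h2] at hij
    · exact absurd rfl hij
  · intro i
    have e : ∀ j, (if a i = a j then p i * q j / P (a i) else 0)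
        = p i / P (a i) * (if a j = a i then q j else 0) := by
      intro j
      by_cases h1 : a i = a j
      · rw [if_pos h1, if_pos h1.symm]; ring
      · rw [if_neg h1, if_neg (fun h2 => h1 h2.symm)]; ring
    simp only [e]
    rw [← Finset.mul_sum, ← h (a i)]
    change p i / P (a i) * P (a i) = p i
    by_cases h0 : P (a i) = 0
    · rw [hpP i h0]; simp
    · exact div_mul_cancel₀ _ h0
  · intro j
    have e : ∀ i, (if a i = a j then p i * q j / P (a i) else 0)
        = q j / P (a j) * (if a i = a j then p i else 0) := by
      intro i
      by_cases h1 : a i = a j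
      · rw [if_pos h1, if_pos h1, h1]; ring
      · rw [if_neg h1, if_neg h1]; ring
    simp only [e]
    rw [← Finset.mul_sum]
    change q j / P (a j) * P (a j) = q j
    by_cases h0 : P (a j) = 0
    · rw [hqP j h0]; simp
    · exact div_mul_cancel₀ _ h0

open Classical in
/-- A point of the stable set polytope of an induced subgraph as an explicit combination. -/
lemma stab_induce_rep {V : Type*} [Fintype V] (G : SimpleGraph V) (A : Set V) (x : A → ℝ)
    (hx : x ∈ stabPolytope (SimpleGraph.induce A G)) :
    ∃ p : Set V → ℝ, (∀ S, 0 ≤ p S) ∧ ∑ S, p S = 1 ∧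
      (∀ S, p S ≠ 0 → S ⊆ A ∧ ∀ u ∈ S, ∀ w ∈ S, ¬ G.Adj u w) ∧
      ∀ v : A, ∑ S, p S * S.indicator 1 (v : V) = x v := by
  let C : Set (A → ℝ) := {x | ∃ p : Set V → ℝ, (∀ S, 0 ≤ p S) ∧ ∑ S, p S = 1 ∧
      (∀ S, p S ≠ 0 → S ⊆ A ∧ ∀ u ∈ S, ∀ w ∈ S, ¬ G.Adj u w) ∧
      ∀ v : A, ∑ S, p S * S.indicator 1 (v : V) = x v}
  suffices h : stabPolytope (SimpleGraph.induce A G) ⊆ C from h hx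
  refine convexHull_min ?_ ?_
  · rintro _ ⟨S, hS, rfl⟩
    refine ⟨fun T => if T = Subtype.val '' S then 1 else 0, ?_, ?_, ?_, ?_⟩
    · intro T
      dsimp only
      split_ifs <;> norm_num
    · simp
    · intro T hT
      have hT : T = Subtype.val '' S := by
        by_contra h
        simp [h] at hT
      subst hT
      refine ⟨by rintro _ ⟨u, _, rfl⟩; exact u.2, ?_⟩
      rintro _ ⟨u, hu, rfl⟩ _ ⟨w, hw, rfl⟩
      exact hS u hu w hw
    · intro v
      simp only [ite_mul, one_mul, zero_mul, Finset.sum_ite_eq', Finset.mem_univ, if_true]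
      simp [Set.indicator_apply]
  · rintro x ⟨p, hp, hp1, hpS, hpx⟩ y ⟨q, hq, hq1, hqS, hqy⟩ s t hs ht hst
    refine ⟨fun S => s * p S + t * q S, ?_, ?_, ?_, ?_⟩
    · intro S
      have := hp S
      have := hq S
      positivity
    · rw [Finset.sum_add_distrib, ← Finset.mul_sum, ← Finset.mul_sum, hp1, hq1]
      linarith
    · intro S hS
      by_cases h : p S = 0
      · by_cases h' : q S = 0
        · simp [h, h'] at hS
        · exact hqS S h'
      · exact hpS S h
    · intro v
      simp only [add_mul, mul_assoc]
      rw [Finset.sum_add_distrib, ← Finset.mul_sum, ← Finset.mul_sum, hpx, hqy]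
      simp

/-- Restriction of a point of the stable set polytope to an induced subgraph. -/
lemma stab_restrict {V : Type*} (G : SimpleGraph V) (A : Set V) (z : V → ℝ)
    (hz : z ∈ stabPolytope G) :
    (fun v : A => z v) ∈ stabPolytope (SimpleGraph.induce A G) := by
  let L : (V → ℝ) →ₗ[ℝ] (A → ℝ) := LinearMap.funLeft ℝ ℝ Subtype.val
  suffices h : stabPolytope G ⊆ L ⁻¹' stabPolytope (SimpleGraph.induce A G) from h hz
  refine convexHull_min ?_ ((convex_convexHull ℝ _).linear_preimage L)
  rintro _ ⟨S, hS, rfl⟩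
  refine subset_convexHull ℝ _ ⟨Subtype.val ⁻¹' S, fun u hu w hw => hS u hu w hw, ?_⟩
  ext v
  rfl

open Classical in
/-- The mass of stable sets meeting the clique nowhere or in a given vertex. -/
lemma marginal_eq {V : Type*} [Fintype V] (U : Finset V) (z : V → ℝ) (p : Set V → ℝ)
    (a : Set V → Option V) (h1 : ∑ S, p S = 1)
    (ha : ∀ S, p S ≠ 0 → ∀ u, a S = some u ↔ u ∈ U ∧ u ∈ S)
    (hz : ∀ u ∈ U, ∑ S, p S * S.indicator 1 u = z u) (k : Option V) :
    ∑ S, (if a S = k then p S else 0) =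
      k.elim (1 - ∑ u, if u ∈ U then z u else 0) (fun u => if u ∈ U then z u else 0) := by
  have hs : ∀ u, ∑ S, (if a S = some u then p S else 0) = if u ∈ U then z u else 0 := by
    intro u
    split_ifs with hu
    · rw [← hz u hu]
      refine Finset.sum_congr rfl fun S _ => ?_
      by_cases h : p S = 0
      · simp [h]
      · simp [ha S h, hu, Set.indicator_apply]
    · refine Finset.sum_eq_zero fun S _ => ?_
      by_cases h : p S = 0
      · simp [h]
      · simp [ha S h, hu]
  cases k with
  | some u => exact hs u
  | none =>
    have ht : ∑ k : Option V, ∑ S, (if a S = k then p S else 0) = 1 := by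
      rw [Finset.sum_comm, ← h1]
      simp
    rw [Fintype.sum_option] at ht
    simp only [hs] at ht
    simp only [Option.elim]
    linarith

/-- Chvátal's theorem: if `U` is a clique cutset of the finite simple graph `G` decomposing it
into `G₁ = G[V₁ ∪ U]` and `G₂ = G[V₂ ∪ U]`, then `STAB(G)` consists exactly of the points whose
restriction to `V₁ ∪ U` lies in `STAB(G₁)` and whose restriction to `V₂ ∪ U` lies in
`STAB(G₂)`. -/
theorem stab_clique_cutset {V : Type*} [Fintype V] [DecidableEq V]
    (G : SimpleGraph V) (V₁ U V₂ : Finset V)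
    (hdisj₁ : Disjoint V₁ U) (hdisj₂ : Disjoint V₂ U) (hdisj₃ : Disjoint V₁ V₂)
    (hcover : V₁ ∪ U ∪ V₂ = Finset.univ)
    (hclique : ∀ u ∈ U, ∀ w ∈ U, u ≠ w → G.Adj u w)
    (hcut : ∀ u ∈ V₁, ∀ w ∈ V₂, ¬ G.Adj u w) :
    stabPolytope G =
      {z : V → ℝ |
        (fun v : (↑(V₁ ∪ U) : Set V) => z ↑v) ∈
          stabPolytope (SimpleGraph.induce (↑(V₁ ∪ U) : Set V) G) ∧
        (fun v : (↑(V₂ ∪ U) : Set V) => z ↑v) ∈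
          stabPolytope (SimpleGraph.induce (↑(V₂ ∪ U) : Set V) G)} := by
  classical
  ext z
  refine ⟨fun hz => ⟨stab_restrict G _ z hz, stab_restrict G _ z hz⟩, ?_⟩
  rintro ⟨hz1, hz2⟩
  obtain ⟨p, hp, hp1, hpS, hpz⟩ := stab_induce_rep G _ _ hz1
  obtain ⟨q, hq, hq1, hqS, hqz⟩ := stab_induce_rep G _ _ hz2
  let a : Set V → Option V := fun S =>
    if h : ∃ u, u ∈ U ∧ u ∈ S then some h.choose else none
  have ha : ∀ S : Set V, (∀ u ∈ S, ∀ w ∈ S, ¬ G.Adj u w) →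
      ∀ u, a S = some u ↔ u ∈ U ∧ u ∈ S := by
    intro S hS u
    by_cases h : ∃ u, u ∈ U ∧ u ∈ S
    · simp only [a, dif_pos h, Option.some.injEq]
      constructor
      · rintro rfl
        exact h.choose_spec
      · rintro ⟨h1, h2⟩
        by_contra hne
        exact hS _ h.choose_spec.2 _ h2 (hclique _ h.choose_spec.1 _ h1 hne)
    · simp only [a, dif_neg h]
      constructor
      · intro h'
        cases h'
      · intro h'
        exact absurd ⟨u, h'⟩ h
  have hap : ∀ S, p S ≠ 0 → ∀ u, a S = some u ↔ u ∈ U ∧ u ∈ S :=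
    fun S hS => ha S (hpS S hS).2
  have haq : ∀ S, q S ≠ 0 → ∀ u, a S = some u ↔ u ∈ U ∧ u ∈ S :=
    fun S hS => ha S (hqS S hS).2
  have hpz' : ∀ u ∈ V₁ ∪ U, ∑ S, p S * S.indicator 1 u = z u :=
    fun u hu => hpz ⟨u, by exact_mod_cast hu⟩
  have hqz' : ∀ u ∈ V₂ ∪ U, ∑ S, q S * S.indicator 1 u = z u :=
    fun u hu => hqz ⟨u, by exact_mod_cast hu⟩
  obtain ⟨r, hr0, hrS, hrp, hrq⟩ := coupling_exists p q a hp hq (fun k => by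
    have e1 := marginal_eq U z p a hp1 hap (fun u hu => hpz' u (Finset.mem_union_right _ hu)) k
    have e2 := marginal_eq U z q a hq1 haq (fun u hu => hqz' u (Finset.mem_union_right _ hu)) k
    convert e1.trans e2.symm)
  -- membership bookkeeping for pairs in the support
  have hpA : ∀ S, p S ≠ 0 → ∀ v ∈ S, v ∈ V₁ ∨ v ∈ U := fun S hS v hv => by
    simpa using (hpS S hS).1 hv
  have hqA : ∀ S, q S ≠ 0 → ∀ v ∈ S, v ∈ V₂ ∨ v ∈ U := fun S hS v hv => by
    simpa using (hqS S hS).1 hv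
  have hUU : ∀ S T, r S T ≠ 0 → ∀ v ∈ U, (v ∈ S ↔ v ∈ T) := by
    intro S T h v hv
    obtain ⟨h1, h2, h3⟩ := hrS S T h
    have e1 := hap S h2 v
    have e2 := haq T h3 v
    rw [h1] at e1
    have := e1.symm.trans e2
    tauto
  have hst : ∀ S T, r S T ≠ 0 → ∀ u ∈ S ∪ T, ∀ w ∈ S ∪ T, ¬ G.Adj u w := by
    intro S T h
    obtain ⟨h1, h2, h3⟩ := hrS S T h
    have key : ∀ u ∈ S, ∀ w ∈ T, ¬ G.Adj u w := by
      intro u hu w hw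
      rcases hpA S h2 u hu with hu' | hu'
      · rcases hqA T h3 w hw with hw' | hw'
        · exact hcut u hu' w hw'
        · exact (hpS S h2).2 u hu w ((hUU S T h w hw').2 hw)
      · exact (hqS T h3).2 u ((hUU S T h u hu').1 hu) w hw
    rintro u (hu | hu) w (hw | hw)
    · exact (hpS S h2).2 u hu w hw
    · exact key u hu w hw
    · exact fun hadj => key w hw u hu hadj.symm
    · exact (hqS T h3).2 u hu w hw
  let f : Set V × Set V → V → ℝ := fun i =>
    if r i.1 i.2 ≠ 0 then (i.1 ∪ i.2).indicator 1 else (∅ : Set V).indicator 1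
  have hmem : ∑ i : Set V × Set V, r i.1 i.2 • f i ∈ stabPolytope G := by
    refine (convex_convexHull ℝ _).sum_mem (fun i _ => hr0 _ _) ?_ ?_
    · rw [Fintype.sum_prod_type]
      simp only [hrp, hp1]
    · intro i _
      refine subset_convexHull ℝ _ ?_
      by_cases h : r i.1 i.2 ≠ 0
      · exact ⟨_, hst _ _ h, by simp only [f, if_pos h]⟩
      · exact ⟨∅, by simp, by simp only [f, if_neg h]⟩
  convert hmem using 1
  ext v
  have hv : v ∈ V₁ ∪ U ∪ V₂ := by rw [hcover]; exact Finset.mem_univ v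
  rw [Finset.sum_apply, Fintype.sum_prod_type]
  by_cases hA : v ∈ V₁ ∪ U
  · rw [← hpz' v hA]
    refine Finset.sum_congr rfl fun S _ => ?_
    rw [← hrp S, Finset.sum_mul]
    refine Finset.sum_congr rfl fun T _ => ?_
    by_cases h : r S T = 0
    · simp [h]
    · have hT : v ∈ T → v ∈ S := by
        intro hvT
        rcases hqA T (hrS S T h).2.2 v hvT with h' | h'
        · rcases Finset.mem_union.1 hA with h'' | h''
          · exact absurd h' (Finset.disjoint_left.1 hdisj₃ h'')
          · exact absurd h'' (Finset.disjoint_left.1 hdisj₂ h')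
        · exact (hUU S T h v h').2 hvT
      have e : v ∈ S ∪ T ↔ v ∈ S := ⟨fun h => h.elim id hT, Or.inl⟩
      simp only [f, Pi.smul_apply, smul_eq_mul, ne_eq, h, not_false_eq_true, if_true,
        Set.indicator_apply, e]
  · have hB : v ∈ V₂ := (Finset.mem_union.1 hv).resolve_left hA
    rw [← hqz' v (Finset.mem_union_left _ hB), Finset.sum_comm]
    refine Finset.sum_congr rfl fun T _ => ?_
    rw [← hrq T, Finset.sum_mul]
    refine Finset.sum_congr rfl fun S _ => ?_
    by_cases h : r S T = 0
    · simp [h]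
    · have hS : v ∉ S := fun hvS =>
        hA (Finset.mem_union.2 (hpA S (hrS S T h).2.1 v hvS))
      have e : v ∈ S ∪ T ↔ v ∈ T := ⟨fun h => h.resolve_left hS, Or.inr⟩
      simp only [f, Pi.smul_apply, smul_eq_mul, ne_eq, h, not_false_eq_true, if_true,
        Set.indicator_apply, e]
end
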